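/- Suppose m,n > 5 and the constructed token swapping instance admits a swap sequence of length at most K realizing the target placement in which no pair of tokens swaps with each other more than once. Then (1) at every point in time during the sequence, apart from the free item token, each slot gadget contains exactly one item token; and (2) the exchange sequence χ is a subsequence of the input swap sequence s_1,…,s_n of the Star STS instance. -/

import Mathlib

namespace UnweightedTS

/-- Vertices of the constructed tree: the root, ordering-gadget vertices `ord d`
(distance `d+1` from the root), slot-gadget path vertices `slot i d` (distance `d+1`
from the root in slot gadget `i`), and nooks.  (Coordinates range over all of `ℕ`;
the graph below only has edges between the vertices of the construction, so the
remaining vertices are isolated and carry no tokens.) -/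
inductive Vtx (m : ℕ) where
  | root : Vtx m
  | ord : ℕ → Vtx m
  | slot : Fin m → ℕ → Vtx m
  | nook : Fin m → Vtx m
deriving DecidableEq

/-- Adjacency generator for the tree: `len i` = length of the path of slot gadget `i`,
`lenOrd` = length of the ordering path, `nd` = distance from the root of the path
vertex to which the nook of each slot gadget is attached. -/
def rel {m : ℕ} (len : Fin m → ℕ) (lenOrd nd : ℕ) : Vtx m → Vtx m → Prop
  | .root, .ord d => d = 0 ∧ 0 < lenOrd
  | .ord d, .ord d' => d' = d + 1 ∧ d' < lenOrd
  | .root, .slot i d => d = 0 ∧ 0 < len i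
  | .slot i d, .slot i' d' => i = i' ∧ d' = d + 1 ∧ d' < len i
  | .slot i d, .nook i' => i = i' ∧ d + 1 = nd ∧ d < len i
  | _, _ => False

/-- The constructed tree, as a simple graph. -/
def Tree {m : ℕ} (len : Fin m → ℕ) (lenOrd nd : ℕ) : SimpleGraph (Vtx m) :=
  SimpleGraph.fromRel (rel len lenOrd nd)

/-- Swap the two values `e.1`, `e.2`. -/
def swapV {V : Type*} [DecidableEq V] (e : V × V) (v : V) : V :=
  if v = e.1 then e.2 else if v = e.2 then e.1 else v

/-- Apply a sequence of swaps to a token placement (token ↦ vertex). -/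
def applySwaps {T V : Type*} [DecidableEq V] (σ : List (V × V)) (f : T → V) : T → V :=
  σ.foldl (fun g e => fun t => swapV e (g t)) f

/-- Apply a sequence of star swaps (each given by a leaf) to a placement on the star
with center `none` and leaves `some l`. -/
def starApply {L : Type*} [DecidableEq L] (σ : List L) (f : Option L → Option L) :
    Option L → Option L :=
  σ.foldl (fun g l => fun t => swapV ((none : Option L), some l) (g t)) f

/-- The Star STS instance is a YES instance. -/
def StarSTSYes {L : Type*} [DecidableEq L] (π : Equiv.Perm (Option L)) (σ : List L) : Prop :=
  ∃ σ' : List L, σ'.Sublist σ ∧ starApply σ' id = ⇑π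

/-- `k = (mn)^25`, the length of a big segment. -/
def kk (m n : ℕ) : ℕ := (m * n) ^ 25

/-- `k' = k / n^8`, the length of a padding segment. -/
def kk' (m n : ℕ) : ℕ := kk m n / n ^ 8

variable {m n : ℕ}

/-- `nᵢ`: the number of occurrences of slot `i` in the swap sequence. -/
def cnt (s : Fin n → Fin m) (i : Fin m) : ℕ :=
  (Finset.univ.filter fun j : Fin n => s j = i).card

/-- Length of the ordering path: `nk + nmk'`. -/
def lenOrd (m n : ℕ) : ℕ := n * kk m n + n * m * kk' m n

/-- Length of the path of slot gadget `i`: `nᵢ k + n k'`. -/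
def lenSlot (s : Fin n → Fin m) (i : Fin m) : ℕ := cnt s i * kk m n + n * kk' m n

/-- The non-item tokens: big segments `xⱼ`, `yⱼ` of `k` tokens each, and padding
segments `p_{i,j}`, `q_{i,j}` of `k'` tokens each (in this order of the sum). -/
abbrev NonItem (m n : ℕ) :=
  (Fin n × Fin (kk m n)) ⊕ (Fin n × Fin (kk m n)) ⊕
    (Fin m × Fin n × Fin (kk' m n)) ⊕ (Fin m × Fin n × Fin (kk' m n))

/-- All tokens: item tokens (`Option (Fin m)`, `none` = item 0) and the non-item
tokens. -/
abbrev Tok (m n : ℕ) := Option (Fin m) ⊕ NonItem m n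

/-- The constructed tree: ordering path of length `nk + nmk'`, slot path `i` of
length `nᵢk + nk'`, nooks attached at distance `k` from the root. -/
def TheGraph (s : Fin n → Fin m) : SimpleGraph (Vtx m) :=
  Tree (lenSlot s) (lenOrd m n) (kk m n)

/-- The distance from the root, in slot gadget `i`, at which the block of segment
`q_{i,j}` (preceded by `yⱼ` when `s j = i`) starts in the initial configuration. -/
def offQ (s : Fin n → Fin m) (i : Fin m) (j : Fin n) : ℕ :=
  ∑ j' ∈ Finset.univ.filter (fun j' : Fin n => j'.val < j.val),
    (kk' m n + if s j' = i then kk m n else 0)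

/-- The slot occurring next after position `j` in the swap sequence, if any. -/
def nxt (s : Fin n → Fin m) (j : Fin n) : Option (Fin m) :=
  if h : j.val + 1 < n then some (s ⟨j.val + 1, h⟩) else none

/-- The rank (`0`-based position) of the padding segment `q_{i,j}` among the `m`
padding segments following `yⱼ` in the target configuration of the ordering gadget:
`q_{s_{j+1},j}` first, `q_{s_j,j}` last, and the others in increasing order of `i`. -/
def rho (s : Fin n → Fin m) (i : Fin m) (j : Fin n) : ℕ :=
  if some i = nxt s j then 0
  else if i = s j then m - 1
  else (if (nxt s j).isSome then 1 else 0) +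
    (Finset.univ.filter fun i' : Fin m =>
      i'.val < i.val ∧ i' ≠ s j ∧ some i' ≠ nxt s j).card

/-- The distance from the root, in slot gadget `i`, at which the block of segment
`p_{i,j}` (followed by `xⱼ` when `s j = i`) starts in the target configuration. -/
def tOffP (s : Fin n → Fin m) (i : Fin m) (j : Fin n) : ℕ :=
  ∑ j' ∈ Finset.univ.filter (fun j' : Fin n => j.val < j'.val),
    (kk' m n + if s j' = i then kk m n else 0)

/-- The initial placement of the tokens.  Item `0` is at the root and item `i` at the
nook of slot gadget `i`.  The ordering gadget contains, from the root outward, the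
blocks `x₁, p_{·,1}, x₂, p_{·,2}, …, xₙ, p_{·,n}` (the `m` padding blocks after `xⱼ`
ordered by `rho`); slot gadget `i` contains, from the root outward, the blocks
`q_{i,1},…,q_{i,n}` with `yⱼ` inserted immediately on the root side of `q_{i,j}`
whenever `s j = i`.  Within a segment the coordinate `a` increases away from the root
in slot gadgets and away from the root in the ordering gadget. -/
def initTok (s : Fin n → Fin m) : Tok m n → Vtx m
  | Sum.inl none => .root
  | Sum.inl (some i) => .nook i
  | Sum.inr (Sum.inl (j, a)) => .ord (j.val * (kk m n + m * kk' m n) + a.val)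
  | Sum.inr (Sum.inr (Sum.inl (j, a))) => .slot (s j) (offQ s (s j) j + a.val)
  | Sum.inr (Sum.inr (Sum.inr (Sum.inl (i, j, a)))) =>
      .ord (j.val * (kk m n + m * kk' m n) + kk m n + rho s i j * kk' m n + a.val)
  | Sum.inr (Sum.inr (Sum.inr (Sum.inr (i, j, a)))) =>
      .slot i (offQ s i j + (if s j = i then kk m n else 0) + a.val)

/-- The target placement of the tokens.  Item `o` goes to the position of item `π o`;
the ordering gadget contains, from its far end toward the root, the blocks
`y₁, q_{·,1}, y₂, q_{·,2}, …, yₙ, q_{·,n}` (the `m` padding blocks after `yⱼ` ordered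
by `rho`); slot gadget `i` contains, from the root outward, the blocks
`p_{i,n},…,p_{i,1}` with `xⱼ` inserted immediately after (away from the root)
`p_{i,j}` whenever `s j = i`.  The left-to-right order of the tokens within each
segment is the same as in the initial configuration. -/
def tgtTok (s : Fin n → Fin m) (π : Equiv.Perm (Option (Fin m))) : Tok m n → Vtx m
  | Sum.inl o => (match π o with | none => .root | some i => .nook i)
  | Sum.inr (Sum.inl (j, a)) =>
      .slot (s j) (tOffP s (s j) j + kk' m n + (kk m n - 1 - a.val))
  | Sum.inr (Sum.inr (Sum.inl (j, a))) =>
      .ord (lenOrd m n - 1 - (j.val * (kk m n + m * kk' m n) + a.val))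
  | Sum.inr (Sum.inr (Sum.inr (Sum.inl (i, j, a)))) =>
      .slot i (tOffP s i j + (kk' m n - 1 - a.val))
  | Sum.inr (Sum.inr (Sum.inr (Sum.inr (i, j, a)))) =>
      .ord (lenOrd m n - 1 -
        (j.val * (kk m n + m * kk' m n) + kk m n + rho s i j * kk' m n + a.val))

/-- `d_t`: the tree distance between token `t`'s initial and target vertices. -/
noncomputable def dd (s : Fin n → Fin m) (π : Equiv.Perm (Option (Fin m)))
    (t : Tok m n) : ℕ :=
  (TheGraph s).dist (initTok s t) (tgtTok s π t)

end UnweightedTS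

namespace UnweightedTS

variable {m n : ℕ}

/-- The placement after the first `τ` swaps of `σ` (time `τ`). -/
def placeAt (σ : List (Vtx m × Vtx m)) (f : Tok m n → Vtx m) (τ : ℕ) : Tok m n → Vtx m :=
  applySwaps (σ.take τ) f

/-- `isLeftMove u v` holds when a token moving across an edge from `u` to `v` makes a
*left* move: towards the root within a slot gadget (including out of a nook), or away
from the root within the ordering gadget. -/
def isLeftMove : Vtx m → Vtx m → Bool
  | .root, .ord _ => true
  | .ord _, .root => false
  | .ord d, .ord d' => decide (d < d')
  | .root, .slot _ _ => false
  | .slot _ _, .root => true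
  | .slot _ d, .slot _ d' => decide (d' < d)
  | .nook _, .slot _ _ => true
  | .slot _ _, .nook _ => false
  | _, _ => false

/-- A token of a `y` or `q` segment (initial vertex in a slot gadget). -/
def isSlotTok : Tok m n → Prop
  | Sum.inr (Sum.inr (Sum.inl _)) => True
  | Sum.inr (Sum.inr (Sum.inr (Sum.inr _))) => True
  | _ => False

/-- A token of an `x` or `p` segment (initial vertex in the ordering gadget). -/
def isNonSlotTok : Tok m n → Prop
  | Sum.inr (Sum.inl _) => True
  | Sum.inr (Sum.inr (Sum.inr (Sum.inl _))) => True
  | _ => False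

/-- `isContrary t u v` holds when a move of token `t` from `u` to `v` is a *contrary*
move: a right move of a slot token, a right move of an item token, or a left move of a
non-slot token. -/
def isContrary (t : Tok m n) (u v : Vtx m) : Bool :=
  match t with
  | Sum.inr (Sum.inl _) => isLeftMove u v
  | Sum.inr (Sum.inr (Sum.inr (Sum.inl _))) => isLeftMove u v
  | _ => !isLeftMove u v

/-- `c_t`: the number of contrary moves made by token `t` during the swap sequence
(starting from the placement `f`). -/
def cCount (t : Tok m n) : List (Vtx m × Vtx m) → (Tok m n → Vtx m) → ℕ
  | [], _ => 0
  | e :: rest, f =>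
      ((if f t = e.1 ∧ isContrary t e.1 e.2 = true then 1 else 0) +
        (if f t = e.2 ∧ isContrary t e.2 e.1 = true then 1 else 0)) +
        cCount t rest (fun t' => swapV e (f t'))

/-- Membership of a vertex in a gadget (`none` = the ordering gadget, `some i` = slot
gadget `i`, which includes its nook).  The root belongs to no gadget. -/
def memGadget : Vtx m → Option (Fin m) → Prop
  | .ord _, none => True
  | .slot i _, some i' => i = i'
  | .nook i, some i' => i = i'
  | _, _ => False

/-- The pair of tokens `t₁`, `t₂` is exchanged by the swap at step `idx` of `σ`. -/
def swapsPairAt (σ : List (Vtx m × Vtx m)) (f : Tok m n → Vtx m) (idx : ℕ)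
    (t₁ t₂ : Tok m n) : Prop :=
  ∃ h : idx < σ.length,
    (placeAt σ f idx t₁ = (σ.get ⟨idx, h⟩).1 ∧ placeAt σ f idx t₂ = (σ.get ⟨idx, h⟩).2) ∨
    (placeAt σ f idx t₁ = (σ.get ⟨idx, h⟩).2 ∧ placeAt σ f idx t₂ = (σ.get ⟨idx, h⟩).1)

/-- No pair of tokens swaps with each other more than once during `σ`. -/
def MinimalSeq (σ : List (Vtx m × Vtx m)) (f : Tok m n → Vtx m) : Prop :=
  ∀ (t₁ t₂ : Tok m n) (i₁ i₂ : ℕ), i₁ < i₂ →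
    swapsPairAt σ f i₁ t₁ t₂ → ¬ swapsPairAt σ f i₂ t₁ t₂

/-- The gadget containing a vertex, if any. -/
def gadgetOfV : Vtx m → Option (Fin m)
  | .slot i _ => some i
  | .nook i => some i
  | _ => none

/-- The free item token at time `τ`: the item token that was most recently at the
root (initially item `0`, i.e. `none`). -/
noncomputable def freeAt (σ : List (Vtx m × Vtx m)) (f : Tok m n → Vtx m) :
    ℕ → Option (Fin m)
  | 0 => none
  | τ + 1 =>
      if h : ∃ o : Option (Fin m), placeAt σ f (τ + 1) (Sum.inl o) = Vtx.root then
        h.choose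
      else freeAt σ f τ

/-- The exchange sequence `χ` built from the first `τ` steps: each time an item token
that was just in slot gadget `i` becomes the new free item token, `i` is appended. -/
noncomputable def chiList (σ : List (Vtx m × Vtx m)) (f : Tok m n → Vtx m) :
    ℕ → List (Fin m)
  | 0 => []
  | τ + 1 =>
      chiList σ f τ ++
        (if freeAt σ f (τ + 1) ≠ freeAt σ f τ then
          (match gadgetOfV (placeAt σ f τ (Sum.inl (freeAt σ f (τ + 1)))) with
            | some i => [i]
            | none => [])
        else [])

end UnweightedTS

namespace UnweightedTS

/-!
Number the `x`- and `p`-tokens by their initial and the `y`- and `q`-tokens by their final position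
in the ordering gadget. The intended solution passes these ranked tokens through the root in the
order of their ranks, and reversing time exchanges the two families. While a token of rank `r` is at
the root, at least two tokens that have no business there crowd the two gadgets it connects: the
gadgets are full, and the nook offers one more place. A token that never steps back swaps with all
but at most one of these blank tokens, since no pair swaps twice and only the nook lets a token slip
past. Each such swap is an extra move of the blank token, and the length bound pays for about one
extra move per ranked token. Hence all but few ranked tokens are clean (never step back) and
typical (swap with exactly one blank token), and moves unaccounted for are rare.

An item that leaves slot gadget `i` for the root descends `k + 1` times, mostly by swaps with
typical tokens of the big segments of slot `i`. The one blank token that such a token does not swap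
with is an item, since any other token would have left before the next padding segment arrives, and
this item stays behind in the gadget. So an item becomes free only if the previous free item takes
its place, which keeps one further item in every slot gadget. Each exchange uses up nearly `k` ranks
of slot `i`, almost a whole big segment, and successive exchanges use later ranks, so that the
exchange sequence is a subsequence of the sequence of big segments.
-/

/-! ### Heights and gadgets of vertices -/

namespace Vtx

variable {m k : ℕ} {i : Fin m} {u u' v w w' : Vtx m}

/-- Signed distance from the root: negative in the ordering gadget, positive in the slot gadgets.
With the nook attached at distance `k`, the nook shares its height with the next path vertex. -/
def height (k : ℕ) : Vtx m → ℤ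
  | .root => 0
  | .ord d => -((d : ℤ) + 1)
  | .slot _ d => (d : ℤ) + 1
  | .nook _ => (k : ℤ) + 1

/-- The gadget of a vertex: `none` for the root, `some none` for the ordering gadget and
`some (some i)` for slot gadget `i`. -/
def gadget : Vtx m → Option (Option (Fin m))
  | .root => none
  | .ord _ => some none
  | .slot i _ => some (some i)
  | .nook i => some (some i)

/-- `v` is a neighbour of `u` and one higher, in the tree with unbounded paths. -/
def AdjRight (k : ℕ) : Vtx m → Vtx m → Prop
  | .ord d, .root => d = 0
  | .ord d, .ord d' => d = d' + 1
  | .root, .slot _ d => d = 0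
  | .slot i d, .slot i' d' => i = i' ∧ d' = d + 1
  | .slot i d, .nook i' => i = i' ∧ d + 1 = k
  | _, _ => False

/-- Adjacency in the tree with unbounded paths; the lengths of the paths of the construction play
no role in the ordering arguments. -/
def Adj (k : ℕ) (u v : Vtx m) : Prop := AdjRight k u v ∨ AdjRight k v u

/-- The gadget containing the edge `uv`; edges at the root belong to the gadget of their other
endpoint. -/
def edgeGadget (u v : Vtx m) : Option (Option (Fin m)) :=
  if gadget u = none then gadget v else gadget u

/-- `u` lies on the line formed by the ordering gadget, the root and the path of slot gadget `i`. -/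
def OnLine (i : Fin m) (u : Vtx m) : Prop :=
  u = .root ∨ (∃ d, u = .ord d) ∨ ∃ d, u = .slot i d

/-- `u` is the root or lies on the path of slot gadget `i`. -/
def OnSlotPath (i : Fin m) (u : Vtx m) : Prop := u = .root ∨ ∃ d, u = .slot i d

/-- `w` lies in slot gadget `i` and is higher than `u`. -/
def Beyond (k : ℕ) (i : Fin m) (u w : Vtx m) : Prop :=
  gadget w = some (some i) ∧ height k u < height k w

lemma Adj.symm (h : Adj k u v) : Adj k v u := Or.symm h

lemma AdjRight.height_eq (h : AdjRight k u v) : height k v = height k u + 1 := by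
  cases u <;> cases v <;> simp only [AdjRight, height] at h ⊢ <;> omega

lemma Adj.height_eq (h : Adj k u v) :
    height k v = height k u + 1 ∨ height k v = height k u - 1 := by
  rcases h with h | h
  · exact .inl h.height_eq
  · have := h.height_eq; omega

lemma eq_of_height_eq_of_nonpos (h : height k u = height k v) (hu : height k u ≤ 0) : u = v := by
  cases u <;> cases v <;> simp only [height, ord.injEq, reduceCtorEq] at h hu ⊢ <;> omega

lemma height_eq_zero : height k u = 0 ↔ u = .root := by
  cases u <;> simp only [height, reduceCtorEq, iff_false] <;> omega

lemma gadget_eq_none : gadget u = none ↔ u = .root := by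
  cases u <;> simp [gadget]

lemma gadget_eq_ord : gadget u = some none ↔ height k u < 0 := by
  cases u <;> simp only [gadget, height, reduceCtorEq, false_iff, true_iff, Option.some.injEq] <;>
    omega

lemma height_pos_of_gadget (h : gadget u = some (some i)) : 0 < height k u := by
  cases u <;> simp only [gadget, height, reduceCtorEq, Option.some.injEq] at h ⊢ <;> omega

lemma edgeGadget_comm (h : u = v ∨ Adj k u v) : edgeGadget u v = edgeGadget v u := by
  rcases h with rfl | h
  · rfl
  · cases u <;> cases v <;> simp_all only [edgeGadget, gadget, Adj, AdjRight] <;> grind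

lemma OnLine.eq_of_height_eq (hu : OnLine i u) (hv : OnLine i v)
    (h : height k u = height k v) : u = v := by
  rcases hu with rfl | ⟨d, rfl⟩ | ⟨d, rfl⟩ <;> rcases hv with rfl | ⟨d', rfl⟩ | ⟨d', rfl⟩ <;>
    simp only [height, ord.injEq, slot.injEq, true_and, reduceCtorEq] at h ⊢ <;> omega

lemma OnLine.of_height_le (h : OnLine i u) (hadj : u = u' ∨ Adj k u u')
    (hle : height k u' ≤ height k u) : OnLine i u' := by
  rcases hadj with rfl | hadj
  · exact h
  · rcases h with rfl | ⟨d, rfl⟩ | ⟨d, rfl⟩ <;> cases u' <;>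
      simp [OnLine, height, Adj, AdjRight] at * <;> grind

lemma OnLine.onSlotPath (h : OnLine i u) (hu : 0 ≤ height k u) : OnSlotPath i u := by
  rcases h with rfl | ⟨d, rfl⟩ | ⟨d, rfl⟩
  · exact .inl rfl
  · simp only [height] at hu; omega
  · exact .inr ⟨d, rfl⟩

lemma height_lt_of_step (hne : height k u' ≠ height k w') (hfix : u = u' ∨ w = w')
    (hu : u = u' ∨ Adj k u u') (hw : w = w' ∨ Adj k w w') (h : height k w < height k u) :
    height k w' < height k u' := by
  rcases hfix with rfl | rfl
  · rcases hw with rfl | hw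
    · exact h
    · have := hw.height_eq; omega
  · rcases hu with rfl | hu
    · exact h
    · have := hu.height_eq; omega

lemma Beyond.of_step (hk : 0 < k) (hne : u' ≠ w') (hfix : u = u' ∨ w = w')
    (hadj : u = u' ∨ Adj k u u') (hadj' : w = w' ∨ Adj k w w')
    (hu : OnSlotPath i u) (hu' : OnSlotPath i u') (h : Beyond k i u w) :
    Beyond k i u' w' ∨
      (u = .slot i (k - 1) ∧ u' = .slot i k ∧ w = .nook i ∧ w' = .nook i) := by
  rcases hfix with rfl | rfl
  · left
    rcases hadj' with rfl | hadj'
    · exact h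
    · rcases hu with rfl | ⟨d, rfl⟩ <;> cases w <;> cases w' <;>
        simp_all only [gadget, Beyond, height, Adj, AdjRight] <;> grind
  · rcases hadj with rfl | hadj
    · exact .inl h
    · rcases hu with rfl | ⟨d, rfl⟩ <;> rcases hu' with rfl | ⟨d', rfl⟩ <;> cases w <;>
        simp_all only [gadget, Beyond, height, Adj, AdjRight] <;> grind

end Vtx

/-! ### Swap histories and time reversal -/

/-- Tokens of the abstract swap history: items, and two tokens for every rank `r < N`. The slot
token `(true, r)` travels from a slot gadget to the ordering gadget and the ordering token
`(false, r)` makes the converse journey. -/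
abbrev RankTok (m N : ℕ) := Option (Fin m) ⊕ (Bool × Fin N)

/-- The tokens `p` and `q` sit on adjacent vertices in the placement `P`, and exchanging them
produces the placement `P'`. -/
def IsSwap {m N : ℕ} (k : ℕ) (P P' : RankTok m N → Vtx m) (p q : RankTok m N) : Prop :=
  p ≠ q ∧ Vtx.Adj k (P p) (P q) ∧ P' p = P q ∧ P' q = P p ∧ ∀ z, z ≠ p → z ≠ q → P' z = P z

/-- The role a token plays in the time-reversed history: slot tokens and ordering tokens trade
places and the ranks are reversed. -/
def mirror {m N : ℕ} : RankTok m N → RankTok m N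
  | .inl o => .inl o
  | .inr (b, r) => .inr (!b, r.rev)

section Mirror

variable {m N k : ℕ} {P P' : RankTok m N → Vtx m} {p q z w : RankTok m N}

@[simp] lemma mirror_inl (o : Option (Fin m)) : mirror (.inl o : RankTok m N) = .inl o := rfl

@[simp] lemma mirror_inr (b : Bool) (r : Fin N) :
    mirror (.inr (b, r) : RankTok m N) = .inr (!b, r.rev) := rfl

@[simp] lemma mirror_mirror (z : RankTok m N) : mirror (mirror z) = z := by
  rcases z with o | ⟨b, r⟩ <;> simp

/-- The involution `mirror` as an equivalence. -/
def mirrorEquiv : RankTok m N ≃ RankTok m N := ⟨mirror, mirror, mirror_mirror, mirror_mirror⟩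

lemma mirror_injective : Function.Injective (mirror : RankTok m N → RankTok m N) :=
  mirrorEquiv.injective

lemma mirror_eq_iff : mirror z = w ↔ z = mirror w :=
  ⟨fun h => by rw [← h, mirror_mirror], fun h => by rw [h, mirror_mirror]⟩

lemma IsSwap.symm (h : IsSwap k P P' p q) : IsSwap k P P' q p :=
  let ⟨hne, hadj, hp, hq, hrest⟩ := h
  ⟨hne.symm, hadj.symm, hq, hp, fun z hzq hzp => hrest z hzp hzq⟩

lemma IsSwap.reverse (h : IsSwap k P P' p q) : IsSwap k P' P p q := by
  obtain ⟨hne, hadj, hp, hq, hrest⟩ := h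
  refine ⟨hne, ?_, hq.symm, hp.symm, fun z hzp hzq => (hrest z hzp hzq).symm⟩
  rw [hp, hq]
  exact hadj.symm

lemma IsSwap.mirror (h : IsSwap k P P' p q) :
    IsSwap k (fun z => P (mirror z)) (fun z => P' (mirror z)) (mirror p) (mirror q) := by
  obtain ⟨hne, hadj, hp, hq, hrest⟩ := h
  refine ⟨mirror_injective.ne hne, by simpa using hadj, by simpa using hp, by simpa using hq,
    fun z hzp hzq => hrest _ ?_ ?_⟩
  · rwa [Ne, mirror_eq_iff]
  · rwa [Ne, mirror_eq_iff]

lemma isSwap_mirror :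
    IsSwap k (fun z => P (mirror z)) (fun z => P' (mirror z)) p q ↔
      IsSwap k P P' (mirror p) (mirror q) :=
  ⟨fun h => by simpa using h.mirror, fun h => by simpa using h.mirror⟩

end Mirror

/-- A run of a token swapping sequence of length `len` on the constructed tree, recorded through
the positions of the tokens: at every step two tokens swap, and no pair swaps twice. Initially the
ordering token of rank `r` sits at distance `r + 1` in the ordering gadget and the slot token of
rank `r` in slot gadget `slot r`; finally the ordering token of rank `r` is in slot gadget `slot r`
and the slot tokens fill the ordering gadget in reverse order of their ranks. The field `card_le`
says that the vertices of the ordering gadget and of any slot gadget, whose path and nook have room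
for one more token than the number of ranks assigned to it, are always occupied. -/
structure SwapHistory (m N : ℕ) where
  len : ℕ
  k : ℕ
  k_pos : 0 < k
  slot : Fin N → Fin m
  pos : ℕ → RankTok m N → Vtx m
  pos_injective : ∀ τ ≤ len, Function.Injective (pos τ)
  exists_swap : ∀ τ < len, ∃ p q, IsSwap k (pos τ) (pos (τ + 1)) p q
  swap_unique : ∀ τ τ' p q, τ < len → τ' < len → IsSwap k (pos τ) (pos (τ + 1)) p q →
    IsSwap k (pos τ') (pos (τ' + 1)) p q → τ = τ'
  card_le : ∀ τ ≤ len, ∀ i : Fin m,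
    N + (Finset.univ.filter fun r => slot r = i).card + 1 ≤
      (Finset.univ.filter fun z =>
        (pos τ z).gadget = some none ∨ (pos τ z).gadget = some (some i)).card
  item_init : ∀ o, pos 0 (.inl o) = .root ∨ ∃ i, pos 0 (.inl o) = .nook i
  item_final : ∀ o, pos len (.inl o) = .root ∨ ∃ i, pos len (.inl o) = .nook i
  slot_init : ∀ r, ∃ d, pos 0 (.inr (true, r)) = .slot (slot r) d
  slot_final : ∀ r, pos len (.inr (true, r)) = .ord r.rev
  ord_init : ∀ r, pos 0 (.inr (false, r)) = .ord r
  ord_final : ∀ r, ∃ d, pos len (.inr (false, r)) = .slot (slot r) d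

namespace SwapHistory

variable {m N : ℕ}

/-- The time-reversed history. -/
def rev (S : SwapHistory m N) : SwapHistory m N where
  len := S.len
  k := S.k
  k_pos := S.k_pos
  slot r := S.slot r.rev
  pos τ z := S.pos (S.len - τ) (mirror z)
  pos_injective _ _ := (S.pos_injective _ (Nat.sub_le _ _)).comp mirror_injective
  exists_swap τ hτ := by
    obtain ⟨p, q, h⟩ := S.exists_swap (S.len - (τ + 1)) (by omega)
    rw [show S.len - (τ + 1) + 1 = S.len - τ by omega] at h
    exact ⟨mirror p, mirror q, h.reverse.mirror⟩
  swap_unique τ τ' p q hτ hτ' h h' := by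
    have hrev := (isSwap_mirror.1 h).reverse
    have hrev' := (isSwap_mirror.1 h').reverse
    rw [show S.len - τ = S.len - (τ + 1) + 1 by omega] at hrev
    rw [show S.len - τ' = S.len - (τ' + 1) + 1 by omega] at hrev'
    have := S.swap_unique _ _ _ _ (by omega) (by omega) hrev hrev'
    omega
  card_le τ _ i := by
    have hrank : (Finset.univ.filter fun r : Fin N => S.slot r.rev = i).card =
        (Finset.univ.filter fun r => S.slot r = i).card :=
      Finset.card_equiv Fin.revPerm (by simp)
    rw [hrank]
    refine (S.card_le (S.len - τ) (Nat.sub_le _ _) i).trans_eq ?_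
    exact Finset.card_equiv mirrorEquiv (by simp [mirrorEquiv])
  item_init := by simpa using S.item_final
  item_final := by simpa using S.item_init
  slot_init r := by simpa using S.ord_final r.rev
  slot_final r := by simpa using S.ord_init r.rev
  ord_init r := by simpa using S.slot_final r.rev
  ord_final r := by simpa using S.slot_init r.rev

variable (S : SwapHistory m N)

/-- Height of the vertex of `z` at time `τ`. -/
def height (τ : ℕ) (z : RankTok m N) : ℤ := (S.pos τ z).height S.k

/-- Gadget of the vertex of `z` at time `τ`. -/
def gadget (τ : ℕ) (z : RankTok m N) : Option (Option (Fin m)) := (S.pos τ z).gadget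

/-- The swap at step `τ` exchanges `p` and `q`. -/
def SwapsAt (τ : ℕ) (p q : RankTok m N) : Prop :=
  τ < S.len ∧ IsSwap S.k (S.pos τ) (S.pos (τ + 1)) p q

/-- Some swap exchanges `p` and `q`. -/
def EverSwap (p q : RankTok m N) : Prop := ∃ τ, S.SwapsAt τ p q

/-- A ranked token makes a contrary move at step `τ`: slot tokens should only descend and ordering
tokens only ascend. -/
def Contrary : Bool → Fin N → ℕ → Prop
  | true, r, τ => S.height τ (.inr (true, r)) < S.height (τ + 1) (.inr (true, r))
  | false, r, τ => S.height (τ + 1) (.inr (false, r)) < S.height τ (.inr (false, r))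

/-- A ranked token is clean if it makes no contrary move. -/
def Clean (b : Bool) (r : Fin N) : Prop := ∀ τ < S.len, ¬ S.Contrary b r τ

/-- A token is blank for rank `r` if in the intended solution it need not be in the ordering gadget
or in slot gadget `slot r` when the tokens of rank `r` pass the root: items, slot tokens of other
slots that have not left yet, and ordering tokens of other slots that have already arrived. -/
def Blank (r : Fin N) : RankTok m N → Prop
  | .inl _ => True
  | .inr (true, r') => r < r' ∧ S.slot r' ≠ S.slot r
  | .inr (false, r') => r' < r ∧ S.slot r' ≠ S.slot r

/-- At time `τ`, the token `z` is blank for `r` and lies in one of the two gadgets that a token of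
rank `r` connects. -/
def BlankAt (τ : ℕ) (r : Fin N) (z : RankTok m N) : Prop :=
  S.Blank r z ∧ (S.gadget τ z = some none ∨ S.gadget τ z = some (some (S.slot r)))

/-- At time `τ`, the token `z` lies in slot gadget `i`, higher than `t`. -/
def Beyond (i : Fin m) (τ : ℕ) (t z : RankTok m N) : Prop :=
  Vtx.Beyond S.k i (S.pos τ t) (S.pos τ z)

@[simp] lemma rev_len : S.rev.len = S.len := rfl

@[simp] lemma rev_slot (r : Fin N) : S.rev.slot r = S.slot r.rev := rfl

@[simp] lemma rev_pos (τ : ℕ) (z : RankTok m N) :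
    S.rev.pos τ z = S.pos (S.len - τ) (mirror z) := rfl

@[simp] lemma rev_height (τ : ℕ) (z : RankTok m N) :
    S.rev.height τ z = S.height (S.len - τ) (mirror z) := rfl

@[simp] lemma rev_gadget (τ : ℕ) (z : RankTok m N) :
    S.rev.gadget τ z = S.gadget (S.len - τ) (mirror z) := rfl

variable {S} {τ τ' : ℕ} {b : Bool} {r : Fin N} {i : Fin m} {p q q' t z : RankTok m N}

lemma forall_step_rev {P : ℕ → Prop} :
    (∀ τ < S.len, P (S.len - (τ + 1))) ↔ ∀ τ < S.len, P τ := by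
  refine ⟨fun h τ hτ => ?_, fun h τ hτ => h _ (by omega)⟩
  have := h (S.len - (τ + 1)) (by omega)
  rwa [show S.len - (S.len - (τ + 1) + 1) = τ by omega] at this

lemma swapsAt_rev (hτ : τ < S.len) :
    S.rev.SwapsAt τ p q ↔ S.SwapsAt (S.len - (τ + 1)) (mirror p) (mirror q) := by
  have hstep : S.len - (τ + 1) + 1 = S.len - τ := by omega
  refine ⟨fun h => ⟨by omega, ?_⟩, fun h => ⟨hτ, isSwap_mirror.2 ?_⟩⟩
  · rw [hstep]
    exact (isSwap_mirror.1 h.2).reverse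
  · have := h.2.reverse
    rwa [hstep] at this

lemma everSwap_rev : S.rev.EverSwap p q ↔ S.EverSwap (mirror p) (mirror q) := by
  have hiff := forall_step_rev (S := S) (P := fun τ => ¬ S.SwapsAt τ (mirror p) (mirror q))
  rw [← not_iff_not]
  constructor <;> rintro h ⟨τ, hs⟩
  · exact hiff.1 (fun τ hτ hs => h ⟨τ, (swapsAt_rev hτ).2 hs⟩) τ hs.1 hs
  · exact h ⟨_, (swapsAt_rev (S := S) hs.1).1 hs⟩

lemma contrary_rev (hτ : τ < S.len) :
    S.rev.Contrary b r τ ↔ S.Contrary (!b) r.rev (S.len - (τ + 1)) := by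
  have hstep : S.len - (τ + 1) + 1 = S.len - τ := by omega
  cases b <;> simp [Contrary, hstep]

lemma clean_rev : S.rev.Clean b r ↔ S.Clean (!b) r.rev := by
  refine Iff.trans ?_ (forall_step_rev (P := fun τ => ¬ S.Contrary (!b) r.rev τ))
  exact forall₂_congr fun τ hτ => not_congr (contrary_rev hτ)

lemma blank_rev : S.rev.Blank r z ↔ S.Blank r.rev (mirror z) := by
  rcases z with _ | ⟨_ | _, r'⟩ <;> simp [Blank]

lemma blankAt_rev : S.rev.BlankAt τ r z ↔ S.BlankAt (S.len - τ) r.rev (mirror z) := by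
  simp [BlankAt, blank_rev]

/-! ### Single steps -/

lemma eq_of_pos_eq (hτ : τ ≤ S.len) (h : S.pos τ p = S.pos τ q) : p = q :=
  S.pos_injective τ hτ h

lemma SwapsAt.symm (h : S.SwapsAt τ p q) : S.SwapsAt τ q p := ⟨h.1, h.2.symm⟩

lemma SwapsAt.time_eq (h : S.SwapsAt τ p q) (h' : S.SwapsAt τ' p q) : τ = τ' :=
  S.swap_unique _ _ _ _ h.1 h'.1 h.2 h'.2

lemma SwapsAt.ne (h : S.SwapsAt τ p q) : p ≠ q := h.2.1

lemma SwapsAt.pos_succ_left (h : S.SwapsAt τ p q) : S.pos (τ + 1) p = S.pos τ q := h.2.2.2.1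

lemma SwapsAt.pos_succ_right (h : S.SwapsAt τ p q) : S.pos (τ + 1) q = S.pos τ p :=
  h.symm.pos_succ_left

lemma SwapsAt.pos_succ_of_ne (h : S.SwapsAt τ p q) (hp : z ≠ p) (hq : z ≠ q) :
    S.pos (τ + 1) z = S.pos τ z := h.2.2.2.2.2 z hp hq

lemma SwapsAt.eq_of_swapsAt (h : S.SwapsAt τ p q) (h' : S.SwapsAt τ p q') : q = q' :=
  eq_of_pos_eq h.1.le (h.pos_succ_left.symm.trans h'.pos_succ_left)

lemma SwapsAt.height_eq (h : S.SwapsAt τ p q) :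
    S.height (τ + 1) p = S.height τ q ∧ S.height (τ + 1) q = S.height τ p ∧
      (S.height τ q = S.height τ p + 1 ∨ S.height τ q = S.height τ p - 1) :=
  ⟨congrArg _ h.pos_succ_left, congrArg _ h.pos_succ_right, h.2.2.1.height_eq⟩

lemma SwapsAt.adj (h : S.SwapsAt τ p q) : Vtx.Adj S.k (S.pos τ p) (S.pos (τ + 1) p) := by
  rw [h.pos_succ_left]
  exact h.2.2.1

lemma SwapsAt.pos_succ_ne (h : S.SwapsAt τ p q) : S.pos (τ + 1) p ≠ S.pos τ p := by
  rw [h.pos_succ_left]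
  exact fun heq => h.ne (eq_of_pos_eq h.1.le heq).symm

lemma exists_swapsAt (hτ : τ < S.len) (h : S.pos (τ + 1) z ≠ S.pos τ z) :
    ∃ q, S.SwapsAt τ z q := by
  obtain ⟨p, q, hpq⟩ := S.exists_swap τ hτ
  have hpq : S.SwapsAt τ p q := ⟨hτ, hpq⟩
  by_cases hp : z = p
  · exact ⟨q, hp ▸ hpq⟩
  · by_cases hq : z = q
    · exact ⟨p, hq ▸ hpq.symm⟩
    · exact absurd (hpq.pos_succ_of_ne hp hq) h

lemma eq_or_adj_succ (hτ : τ < S.len) (z : RankTok m N) :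
    S.pos τ z = S.pos (τ + 1) z ∨ Vtx.Adj S.k (S.pos τ z) (S.pos (τ + 1) z) := by
  by_cases h : S.pos (τ + 1) z = S.pos τ z
  · exact .inl h.symm
  · obtain ⟨q, hq⟩ := exists_swapsAt hτ h
    exact .inr hq.adj

lemma height_succ (hτ : τ < S.len) (z : RankTok m N) :
    S.height (τ + 1) z = S.height τ z ∨ S.height (τ + 1) z = S.height τ z + 1 ∨
      S.height (τ + 1) z = S.height τ z - 1 :=
  (eq_or_adj_succ hτ z).imp (fun h => congrArg _ h.symm) (fun h => h.height_eq)

lemma fixed_or_fixed_of_not_swapsAt (hτ : τ < S.len) (hne : t ≠ z) (h : ¬ S.SwapsAt τ t z) :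
    S.pos τ t = S.pos (τ + 1) t ∨ S.pos τ z = S.pos (τ + 1) z := by
  by_contra! hmove
  obtain ⟨q, hq⟩ := exists_swapsAt hτ hmove.1.symm
  obtain rfl | hz := eq_or_ne z q
  · exact h hq
  · exact hmove.2 (hq.pos_succ_of_ne hne.symm hz).symm

lemma height_eq_zero : S.height τ z = 0 ↔ S.pos τ z = .root := Vtx.height_eq_zero

lemma gadget_eq_none : S.gadget τ z = none ↔ S.pos τ z = .root := Vtx.gadget_eq_none

lemma gadget_eq_ord : S.gadget τ z = some none ↔ S.height τ z < 0 := Vtx.gadget_eq_ord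

lemma height_pos_of_gadget (h : S.gadget τ z = some (some i)) : 0 < S.height τ z :=
  Vtx.height_pos_of_gadget h

/- At heights at most zero a vertex is determined by its height, so there two tokens can only
change their order by swapping with each other. -/
lemma height_lt_iff_succ (hτ : τ < S.len) (hne : t ≠ z) (hns : ¬ S.SwapsAt τ t z)
    (h : S.height τ t ≤ 0) (h' : S.height (τ + 1) t ≤ 0) :
    S.height τ z < S.height τ t ↔ S.height (τ + 1) z < S.height (τ + 1) t := by
  have hfix := fixed_or_fixed_of_not_swapsAt hτ hne hns
  have hadj := eq_or_adj_succ hτ t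
  have hadj' := eq_or_adj_succ hτ z
  constructor
  · refine Vtx.height_lt_of_step (fun heq => hne ?_) hfix hadj hadj'
    exact eq_of_pos_eq hτ (Vtx.eq_of_height_eq_of_nonpos heq h')
  · refine Vtx.height_lt_of_step (fun heq => hne ?_) (hfix.imp Eq.symm Eq.symm)
      (hadj.imp Eq.symm Vtx.Adj.symm) (hadj'.imp Eq.symm Vtx.Adj.symm)
    exact eq_of_pos_eq hτ.le (Vtx.eq_of_height_eq_of_nonpos heq h)

lemma Beyond.succ (hτ : τ < S.len) (hne : t ≠ z) (hns : ¬ S.SwapsAt τ t z)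
    (h : Vtx.OnSlotPath i (S.pos τ t)) (h' : Vtx.OnSlotPath i (S.pos (τ + 1) t))
    (hb : S.Beyond i τ t z) :
    S.Beyond i (τ + 1) t z ∨ (S.pos τ t = .slot i (S.k - 1) ∧ S.pos (τ + 1) t = .slot i S.k ∧
      S.pos τ z = .nook i ∧ S.pos (τ + 1) z = .nook i) :=
  Vtx.Beyond.of_step S.k_pos (fun heq => hne (eq_of_pos_eq hτ heq))
    (fixed_or_fixed_of_not_swapsAt hτ hne hns) (eq_or_adj_succ hτ t) (eq_or_adj_succ hτ z) h h' hb

lemma Beyond.of_succ (hτ : τ < S.len) (hne : t ≠ z) (hns : ¬ S.SwapsAt τ t z)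
    (h : Vtx.OnSlotPath i (S.pos τ t)) (h' : Vtx.OnSlotPath i (S.pos (τ + 1) t))
    (hb : S.Beyond i (τ + 1) t z) :
    S.Beyond i τ t z ∨ (S.pos (τ + 1) t = .slot i (S.k - 1) ∧ S.pos τ t = .slot i S.k ∧
      S.pos (τ + 1) z = .nook i ∧ S.pos τ z = .nook i) :=
  Vtx.Beyond.of_step S.k_pos (fun heq => hne (eq_of_pos_eq hτ.le heq))
    ((fixed_or_fixed_of_not_swapsAt hτ hne hns).imp Eq.symm Eq.symm)
    ((eq_or_adj_succ hτ t).imp Eq.symm Vtx.Adj.symm)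
    ((eq_or_adj_succ hτ z).imp Eq.symm Vtx.Adj.symm) h' h hb

end SwapHistory

/-! ### Trajectories of clean tokens -/

namespace SwapHistory

variable {m N : ℕ} {S : SwapHistory m N} {τ τ₀ τ₁ τ₂ : ℕ} {b : Bool} {r r' : Fin N}
  {z z' : RankTok m N}

lemma exists_eq_zero_of_succ_le {f : ℕ → ℤ} {a c : ℕ} (hac : a ≤ c)
    (hstep : ∀ τ, a ≤ τ → τ < c → f (τ + 1) ≤ f τ + 1) (ha : f a ≤ 0) (hc : 0 ≤ f c) :
    ∃ τ, a ≤ τ ∧ τ ≤ c ∧ f τ = 0 := by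
  induction c, hac using Nat.le_induction with
  | base => exact ⟨a, le_rfl, le_rfl, by omega⟩
  | succ n hn ih =>
    by_cases h0 : 0 ≤ f n
    · obtain ⟨τ, haτ, hτ, hzero⟩ := ih (fun τ h h' => hstep τ h (by omega)) h0
      exact ⟨τ, haτ, by omega, hzero⟩
    · have := hstep n hn (by omega)
      exact ⟨n + 1, by omega, le_rfl, by omega⟩

lemma height_zero_ord (r : Fin N) : S.height 0 (.inr (false, r)) = -((r : ℕ) + 1 : ℤ) := by
  simp [height, S.ord_init, Vtx.height]

lemma height_len_slot (r : Fin N) : S.height S.len (.inr (true, r)) = (r : ℕ) - (N : ℤ) := by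
  simp only [height, S.slot_final, Vtx.height, Fin.val_rev]
  omega

lemma height_zero_slot_pos (r : Fin N) : 0 < S.height 0 (.inr (true, r)) := by
  obtain ⟨d, hd⟩ := S.slot_init r
  simp only [height, hd, Vtx.height]
  omega

lemma height_len_ord_pos (r : Fin N) : 0 < S.height S.len (.inr (false, r)) := by
  obtain ⟨d, hd⟩ := S.ord_final r
  simp only [height, hd, Vtx.height]
  omega

lemma height_len_item_nonneg (o : Option (Fin m)) : 0 ≤ S.height S.len (.inl o) := by
  rcases S.item_final o with h | ⟨i, h⟩ <;> simp only [height, h, Vtx.height] <;> omega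

lemma gadget_len_ord (r : Fin N) : S.gadget S.len (.inr (false, r)) = some (some (S.slot r)) := by
  obtain ⟨d, hd⟩ := S.ord_final r
  simp [gadget, hd, Vtx.gadget]

lemma exists_pos_eq_root (b : Bool) (r : Fin N) : ∃ τ ≤ S.len, S.pos τ (.inr (b, r)) = .root := by
  cases b
  · obtain ⟨τ, -, hτ, hzero⟩ := exists_eq_zero_of_succ_le (Nat.zero_le S.len)
      (f := fun τ => S.height τ (.inr (false, r)))
      (fun τ _ h => by have := height_succ h (.inr (false, r)); omega)
      (by rw [height_zero_ord]; omega) (height_len_ord_pos r).le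
    exact ⟨τ, hτ, height_eq_zero.1 hzero⟩
  · obtain ⟨τ, -, hτ, hzero⟩ := exists_eq_zero_of_succ_le (Nat.zero_le S.len)
      (f := fun τ => -S.height τ (.inr (true, r)))
      (fun τ _ h => by have := height_succ h (.inr (true, r)); omega)
      (by simpa using (height_zero_slot_pos r).le) (by rw [height_len_slot]; omega)
    exact ⟨τ, hτ, height_eq_zero.1 (by simpa using hzero)⟩

lemma Clean.height_anti (h : S.Clean true r) (h₁₂ : τ₁ ≤ τ₂) (h₂ : τ₂ ≤ S.len) :
    S.height τ₂ (.inr (true, r)) ≤ S.height τ₁ (.inr (true, r)) := by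
  induction τ₂, h₁₂ using Nat.le_induction with
  | base => exact le_rfl
  | succ n _ ih => exact (not_lt.1 (h n h₂)).trans (ih (by omega))

lemma Clean.height_mono (h : S.Clean false r) (h₁₂ : τ₁ ≤ τ₂) (h₂ : τ₂ ≤ S.len) :
    S.height τ₁ (.inr (false, r)) ≤ S.height τ₂ (.inr (false, r)) := by
  induction τ₂, h₁₂ using Nat.le_induction with
  | base => exact le_rfl
  | succ n _ ih => exact (ih (by omega)).trans (not_lt.1 (h n h₂))

lemma Clean.rev (h : S.Clean b r) : S.rev.Clean (!b) r.rev := by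
  rw [clean_rev]
  simpa using h

lemma Clean.onLine (h : S.Clean b r) (hτ : τ ≤ S.len) :
    Vtx.OnLine (S.slot r) (S.pos τ (.inr (b, r))) := by
  suffices hslot : ∀ (S : SwapHistory m N) (r : Fin N), S.Clean true r → ∀ τ ≤ S.len,
      Vtx.OnLine (S.slot r) (S.pos τ (.inr (true, r))) by
    cases b
    · simpa [Nat.sub_sub_self hτ] using hslot S.rev r.rev h.rev (S.len - τ) (by simp)
    · exact hslot S r h τ hτ
  intro S r h τ hτ
  induction τ with
  | zero =>
    obtain ⟨d, hd⟩ := S.slot_init r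
    exact .inr (.inr ⟨d, hd⟩)
  | succ n ih =>
    exact (ih (by omega)).of_height_le (eq_or_adj_succ (by omega) _) (h.height_anti n.le_succ hτ)

lemma Clean.pos_eq_root_of_mem_Icc (h : S.Clean b r) (h₁ : τ₁ ≤ τ) (h₂ : τ ≤ τ₂)
    (hlen : τ₂ ≤ S.len) (hroot₁ : S.pos τ₁ (.inr (b, r)) = .root)
    (hroot₂ : S.pos τ₂ (.inr (b, r)) = .root) : S.pos τ (.inr (b, r)) = .root := by
  rw [← height_eq_zero] at *
  cases b
  · have := h.height_mono h₁ (by omega)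
    have := h.height_mono h₂ hlen
    omega
  · have := h.height_anti h₁ (by omega)
    have := h.height_anti h₂ hlen
    omega

/- Read backwards in time from the final placement, where the ordering gadget holds the slot tokens
sorted by rank, the order below a clean slot token can only be broken while it is above the root. -/
lemma Clean.slot_height_lt (h : S.Clean true r) (hr : r' < r) (hτ : τ ≤ S.len)
    (hle : S.height τ (.inr (true, r)) ≤ 0) :
    S.height τ (.inr (true, r')) < S.height τ (.inr (true, r)) := by
  induction hτ using Nat.decreasingInduction with
  | self =>
    rw [height_len_slot, height_len_slot]
    have : (r' : ℕ) < r := hr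
    omega
  | of_succ n hn ih =>
    have hdesc := h.height_anti (τ₂ := n + 1) n.le_succ hn
    have hsucc := ih (by omega)
    by_cases hs : S.SwapsAt n (.inr (true, r)) (.inr (true, r'))
    · have := hs.height_eq
      omega
    · have hne : (.inr (true, r) : RankTok m N) ≠ .inr (true, r') := by simpa using hr.ne'
      exact (height_lt_iff_succ hn hne hs hle (by omega)).2 hsucc

lemma Clean.ord_height_lt (h : S.Clean false r) (hr : r < r') (hτ : τ ≤ S.len)
    (hle : S.height τ (.inr (false, r)) ≤ 0) :
    S.height τ (.inr (false, r')) < S.height τ (.inr (false, r)) := by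
  have := h.rev.slot_height_lt (Fin.rev_lt_rev.2 hr) (τ := S.len - τ) (by simp)
    (by simpa [Nat.sub_sub_self hτ] using hle)
  simpa [Nat.sub_sub_self hτ] using this

lemma Blank.ne (h : S.Blank r z) : (.inr (b, r) : RankTok m N) ≠ z := by
  rintro rfl
  cases b <;> simp [Blank] at h

lemma Clean.everSwap_of_gadget_eq_ord (h : S.Clean b r) (hτ : τ ≤ S.len)
    (hroot : S.pos τ (.inr (b, r)) = .root) (hb : S.Blank r z) (hz : S.gadget τ z = some none) :
    S.EverSwap (.inr (b, r)) z := by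
  suffices hslot : ∀ (S : SwapHistory m N) (r : Fin N) (τ : ℕ) (z : RankTok m N), S.Clean true r →
      τ ≤ S.len → S.pos τ (.inr (true, r)) = .root → S.Blank r z → S.gadget τ z = some none →
      S.EverSwap (.inr (true, r)) z by
    cases b
    · have := hslot S.rev r.rev (S.len - τ) (mirror z) h.rev (by simp)
        (by simpa [Nat.sub_sub_self hτ] using hroot) (by simpa [blank_rev] using hb)
        (by simpa [Nat.sub_sub_self hτ] using hz)
      simpa [everSwap_rev] using this
    · exact hslot S r τ z h hτ hroot hb hz
  intro S r τ₀ z h hτ hroot hb hz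
  by_contra hns
  have hbelow : ∀ τ, τ₀ ≤ τ → τ ≤ S.len → S.height τ z < S.height τ (.inr (true, r)) := by
    intro τ hτ₀
    induction τ, hτ₀ using Nat.le_induction with
    | base =>
      rw [height_eq_zero.2 hroot]
      exact fun _ => gadget_eq_ord.1 hz
    | succ n hn ih =>
      intro hlen
      have hle := h.height_anti hn (by omega)
      have hle' := h.height_anti (hn.trans n.le_succ) hlen
      rw [height_eq_zero.2 hroot] at hle hle'
      exact (height_lt_iff_succ hlen hb.ne (fun hs => hns ⟨n, hs⟩) hle hle').1 (ih (by omega))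
  have hfinal := hbelow S.len hτ le_rfl
  rw [height_len_slot] at hfinal
  rcases z with o | ⟨_ | _, r'⟩
  · have := height_len_item_nonneg (S := S) o
    omega
  · have := height_len_ord_pos (S := S) r'
    omega
  · have : (r : ℕ) < r' := hb.1
    rw [height_len_slot] at hfinal
    omega

/-! ### Clean ordering tokens inside their slot gadget -/

lemma Clean.onSlotPath (h : S.Clean false r) (h₀ : 0 ≤ S.height τ₀ (.inr (false, r)))
    (h₁ : τ₀ ≤ τ) (h₂ : τ ≤ S.len) : Vtx.OnSlotPath (S.slot r) (S.pos τ (.inr (false, r))) :=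
  (h.onLine h₂).onSlotPath (h₀.trans (h.height_mono h₁ h₂))

/-- At step `θ` the ordering token of rank `r` climbs past the nook of its slot gadget while `z`
waits in that nook. -/
def CrossesNook (S : SwapHistory m N) (r : Fin N) (z : RankTok m N) (θ : ℕ) : Prop :=
  S.pos θ (.inr (false, r)) = .slot (S.slot r) (S.k - 1) ∧
  S.pos (θ + 1) (.inr (false, r)) = .slot (S.slot r) S.k ∧
  S.pos θ z = .nook (S.slot r) ∧ S.pos (θ + 1) z = .nook (S.slot r)

lemma CrossesNook.height_eq (h : S.CrossesNook r z τ) :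
    S.height τ (.inr (false, r)) = S.k ∧ S.height (τ + 1) (.inr (false, r)) = S.k + 1 := by
  have := S.k_pos
  rw [height, height, h.1, h.2.1]
  simp only [Vtx.height, and_true]
  omega

lemma Clean.crossesNook_time_unique (h : S.Clean false r) (hτ₁ : τ₁ < S.len) (hτ₂ : τ₂ < S.len)
    (h₁ : S.CrossesNook r z τ₁) (h₂ : S.CrossesNook r z' τ₂) : τ₁ = τ₂ := by
  have := h₁.height_eq
  have := h₂.height_eq
  rcases lt_trichotomy τ₁ τ₂ with hlt | heq | hlt
  · have := h.height_mono (τ₁ := τ₁ + 1) hlt hτ₂.le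
    omega
  · exact heq
  · have := h.height_mono (τ₁ := τ₂ + 1) hlt hτ₁.le
    omega

lemma Clean.crossesNook_or_beyond (h : S.Clean false r)
    (h₀ : 0 ≤ S.height τ₀ (.inr (false, r))) (hne : (.inr (false, r)) ≠ z)
    (hb : S.Beyond (S.slot r) τ₀ (.inr (false, r)) z) (h₁ : τ₀ ≤ τ₁) (h₂ : τ₁ ≤ S.len)
    (hns : ∀ τ, τ₀ ≤ τ → τ < τ₁ → ¬ S.SwapsAt τ (.inr (false, r)) z) :
    (∃ θ, τ₀ ≤ θ ∧ θ < τ₁ ∧ S.CrossesNook r z θ ∧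
      ∀ τ, τ₀ ≤ τ → τ ≤ θ → S.Beyond (S.slot r) τ (.inr (false, r)) z) ∨
    ∀ τ, τ₀ ≤ τ → τ ≤ τ₁ → S.Beyond (S.slot r) τ (.inr (false, r)) z := by
  induction τ₁, h₁ using Nat.le_induction with
  | base => exact .inr fun τ h h' => le_antisymm h' h ▸ hb
  | succ n hn ih =>
    rcases ih (by omega) (fun τ h h' => hns τ h (by omega)) with ⟨θ, hle, hlt, hθ⟩ | hall
    · exact .inl ⟨θ, hle, by omega, hθ⟩
    · rcases Beyond.succ h₂ hne (hns n hn n.lt_succ_self) (h.onSlotPath h₀ hn (by omega))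
        (h.onSlotPath h₀ (by omega) h₂) (hall n hn le_rfl) with hsucc | hcross
      · refine .inr fun τ h h' => ?_
        rcases Nat.le_succ_iff.1 h' with h' | rfl
        · exact hall τ h h'
        · exact hsucc
      · exact .inl ⟨n, hn, n.lt_succ_self, hcross, hall⟩

lemma Clean.beyond_of_le (h : S.Clean false r) (h₀ : 0 ≤ S.height τ₀ (.inr (false, r)))
    (hne : (.inr (false, r)) ≠ z) (hb : S.Beyond (S.slot r) τ₁ (.inr (false, r)) z)
    (h₁ : τ₀ ≤ τ₁) (h₂ : τ₁ ≤ S.len)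
    (hns : ∀ τ, τ₀ ≤ τ → τ < τ₁ → ¬ S.SwapsAt τ (.inr (false, r)) z) :
    S.Beyond (S.slot r) τ₀ (.inr (false, r)) z := by
  induction τ₁, h₁ using Nat.le_induction with
  | base => exact hb
  | succ n hn ih =>
    refine ih ?_ (by omega) (fun τ h h' => hns τ h (by omega))
    rcases Beyond.of_succ h₂ hne (hns n hn n.lt_succ_self) (h.onSlotPath h₀ hn (by omega))
      (h.onSlotPath h₀ (by omega) h₂) hb with hprev | ⟨hpos', hpos, -⟩
    · exact hprev
    · have hasc := h.height_mono n.le_succ h₂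
      have := S.k_pos
      simp only [height, hpos, hpos', Vtx.height] at hasc
      omega

lemma Clean.ord_height_lt_of_slot_eq (h : S.Clean false r) (h' : S.Clean false r')
    (hs : S.slot r = S.slot r') (hr : r < r') (hτ : τ ≤ S.len) :
    S.height τ (.inr (false, r')) < S.height τ (.inr (false, r)) := by
  induction τ with
  | zero =>
    have : (r : ℕ) < r' := hr
    rw [height_zero_ord, height_zero_ord]
    omega
  | succ n ih =>
    have hlt := ih (by omega)
    have hne : (.inr (false, r) : RankTok m N) ≠ .inr (false, r') := by simpa using hr.ne
    by_cases hsw : S.SwapsAt n (.inr (false, r)) (.inr (false, r'))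
    · have := hsw.height_eq
      have := h.height_mono (τ₂ := n + 1) n.le_succ hτ
      have := h'.height_mono (τ₂ := n + 1) n.le_succ hτ
      omega
    · refine Vtx.height_lt_of_step (fun heq => hne (eq_of_pos_eq hτ ?_))
        (fixed_or_fixed_of_not_swapsAt hτ hne hsw) (eq_or_adj_succ hτ _) (eq_or_adj_succ hτ _) hlt
      exact (h.onLine hτ).eq_of_height_eq (hs ▸ h'.onLine hτ) heq

lemma beyond_of_pos_eq_root (hroot : S.pos τ (.inr (false, r)) = .root)
    (hz : S.gadget τ z = some (some (S.slot r))) :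
    S.Beyond (S.slot r) τ (.inr (false, r)) z :=
  ⟨hz, by rw [hroot]; exact height_pos_of_gadget hz⟩

lemma Clean.crossesNook_or_beyond_of_not_everSwap (h : S.Clean false r) (hτ : τ₀ ≤ S.len)
    (hroot : S.pos τ₀ (.inr (false, r)) = .root) (hz : S.BlankAt τ₀ r z)
    (hns : ¬ S.EverSwap (.inr (false, r)) z) :
    (∃ θ, τ₀ ≤ θ ∧ θ < S.len ∧ S.CrossesNook r z θ ∧
      ∀ τ, τ₀ ≤ τ → τ ≤ θ → S.Beyond (S.slot r) τ (.inr (false, r)) z) ∨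
    ∀ τ, τ₀ ≤ τ → τ ≤ S.len → S.Beyond (S.slot r) τ (.inr (false, r)) z := by
  have hslot : S.gadget τ₀ z = some (some (S.slot r)) :=
    hz.2.resolve_left fun hord => hns (h.everSwap_of_gadget_eq_ord hτ hroot hz.1 hord)
  exact h.crossesNook_or_beyond (height_eq_zero.2 hroot).ge hz.1.ne
    (beyond_of_pos_eq_root hroot hslot) hτ le_rfl fun τ _ _ hs => hns ⟨τ, hs⟩

lemma Beyond.final (hz : S.Blank r z) (hb : S.Beyond (S.slot r) S.len (.inr (false, r)) z) :
    S.pos S.len z = .nook (S.slot r) ∧ S.height S.len (.inr (false, r)) < S.k + 1 ∧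
      ∃ o, z = .inl o := by
  obtain ⟨hgadget, hlt⟩ := hb
  rcases z with o | ⟨_ | _, r'⟩
  · rcases S.item_final o with hpos | ⟨i, hpos⟩
    · simp [hpos, Vtx.gadget] at hgadget
    · rw [hpos] at hgadget hlt ⊢
      obtain rfl : i = S.slot r := by simpa [Vtx.gadget] using hgadget
      exact ⟨rfl, hlt, o, rfl⟩
  · refine absurd ?_ hz.2
    simpa using (gadget_len_ord r').symm.trans hgadget
  · simp [S.slot_final, Vtx.gadget] at hgadget

lemma Clean.blank_unique (h : S.Clean b r) (hτ : τ ≤ S.len)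
    (hroot : S.pos τ (.inr (b, r)) = .root) (hz : S.BlankAt τ r z)
    (hns : ¬ S.EverSwap (.inr (b, r)) z) (hz' : S.BlankAt τ r z')
    (hns' : ¬ S.EverSwap (.inr (b, r)) z') : z = z' := by
  suffices hord : ∀ (S : SwapHistory m N) (r : Fin N) (τ : ℕ) (z z' : RankTok m N),
      S.Clean false r → τ ≤ S.len → S.pos τ (.inr (false, r)) = .root → S.BlankAt τ r z →
      ¬ S.EverSwap (.inr (false, r)) z → S.BlankAt τ r z' → ¬ S.EverSwap (.inr (false, r)) z' →
      z = z' by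
    cases b
    · exact hord S r τ z z' h hτ hroot hz hns hz' hns'
    · refine mirror_injective (hord S.rev r.rev (S.len - τ) _ _ h.rev (by simp) ?_ ?_ ?_ ?_ ?_)
      · simpa [Nat.sub_sub_self hτ] using hroot
      · simpa [blankAt_rev, Nat.sub_sub_self hτ] using hz
      · simpa [everSwap_rev] using hns
      · simpa [blankAt_rev, Nat.sub_sub_self hτ] using hz'
      · simpa [everSwap_rev] using hns'
  intro S r τ z z' h hτ hroot hz hns hz' hns'
  have key := fun {z} => h.crossesNook_or_beyond_of_not_everSwap (z := z) hτ hroot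
  rcases key hz hns with ⟨θ, -, hlt, hcross, -⟩ | hbeyond <;>
    rcases key hz' hns' with ⟨θ', -, hlt', hcross', -⟩ | hbeyond'
  · obtain rfl := h.crossesNook_time_unique hlt hlt' hcross hcross'
    exact eq_of_pos_eq hlt.le (hcross.2.2.1.trans hcross'.2.2.1.symm)
  · have := hcross.height_eq
    have := (hbeyond' S.len hτ le_rfl).final hz'.1
    have := h.height_mono (τ₁ := θ + 1) hlt le_rfl
    omega
  · have := hcross'.height_eq
    have := (hbeyond S.len hτ le_rfl).final hz.1
    have := h.height_mono (τ₁ := θ' + 1) hlt' le_rfl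
    omega
  · exact eq_of_pos_eq le_rfl (((hbeyond S.len hτ le_rfl).final hz.1).1.trans
      ((hbeyond' S.len hτ le_rfl).final hz'.1).1.symm)

/-! ### Blank tokens around a ranked token at the root -/

open Classical in
lemma card_not_blank_le (r : Fin N) :
    (Finset.univ.filter fun z => ¬ S.Blank r z).card ≤
      N + (Finset.univ.filter fun r' => S.slot r' = S.slot r).card := by
  have hN : N = ∑ _r : Fin N, 1 := by simp
  calc (Finset.univ.filter fun z => ¬ S.Blank r z).card
      = ∑ r' : Fin N, ((if ¬ (r < r' ∧ S.slot r' ≠ S.slot r) then 1 else 0) +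
          if ¬ (r' < r ∧ S.slot r' ≠ S.slot r) then 1 else 0) := by
        rw [Finset.card_filter, Fintype.sum_sum_type, Fintype.sum_prod_type]
        simp [Blank, Finset.sum_add_distrib]
    _ ≤ ∑ r' : Fin N, (1 + if S.slot r' = S.slot r then 1 else 0) := by
        refine Finset.sum_le_sum fun r' _ => ?_
        by_cases hs : S.slot r' = S.slot r
        · simp [hs]
        · rcases lt_or_gt_of_ne (show r' ≠ r from fun heq => hs (by rw [heq])) with hlt | hlt <;>
            simp [hs, hlt, hlt.not_gt]
    _ = N + (Finset.univ.filter fun r' => S.slot r' = S.slot r).card := by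
        rw [Finset.sum_add_distrib, ← hN, Finset.card_filter]

open Classical in
/- The ordering gadget and slot gadget `slot r` are full, hence hold at least two more tokens than
there are non-blank ones other than the token at the root. -/
lemma two_le_card_blankAt (hτ : τ ≤ S.len) (hroot : S.pos τ (.inr (b, r)) = .root) :
    2 ≤ (Finset.univ.filter fun z => S.BlankAt τ r z).card ∧
    ((Finset.univ.filter fun z => S.BlankAt τ r z).card ≤ 2 → ∀ z, ¬ S.Blank r z →
      z ≠ .inr (b, r) → (S.gadget τ z = some none ∨ S.gadget τ z = some (some (S.slot r)))) := by
  set A := Finset.univ.filter fun z =>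
    S.gadget τ z = some none ∨ S.gadget τ z = some (some (S.slot r)) with hA
  set Q := (Finset.univ.filter fun z => ¬ S.Blank r z).erase (.inr (b, r)) with hQ
  set P := Finset.univ.filter fun z => S.BlankAt τ r z
  have hcardA : N + (Finset.univ.filter fun r' => S.slot r' = S.slot r).card + 1 ≤ A.card := by
    refine (S.card_le τ hτ (S.slot r)).trans_eq (congrArg _ ?_)
    exact Finset.filter_congr fun z _ => Iff.rfl
  have hmem : (.inr (b, r) : RankTok m N) ∈ Finset.univ.filter fun z => ¬ S.Blank r z := by
    simpa using fun hb => hb.ne (b := b) rfl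
  have hcardQ := card_not_blank_le (S := S) r
  rw [← Finset.card_erase_add_one hmem, ← hQ] at hcardQ
  have hnotMem : (.inr (b, r) : RankTok m N) ∉ A := by simp [hA, gadget_eq_none.2 hroot]
  have hsub : A ⊆ P ∪ Q := fun z hz => by
    have hne : z ≠ .inr (b, r) := fun heq => hnotMem (heq ▸ hz)
    by_cases hb : S.Blank r z
    · exact Finset.mem_union_left _
        (Finset.mem_filter.2 ⟨Finset.mem_univ _, hb, (Finset.mem_filter.1 hz).2⟩)
    · exact Finset.mem_union_right _ (by simp [hQ, hne, hb])
  refine ⟨?_, fun hcardP z hz hne => ?_⟩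
  · have := Finset.card_le_card hsub
    have := Finset.card_union_le P Q
    omega
  · by_contra hnot
    have hzA : z ∉ A := by simpa [hA] using hnot
    have hzQ : z ∈ Q := by simp [hQ, hne, hz]
    have hsub' : A ⊆ P ∪ Q.erase z := fun w hw => by
      rcases Finset.mem_union.1 (hsub hw) with hwP | hwQ
      · exact Finset.mem_union_left _ hwP
      · exact Finset.mem_union_right _ (Finset.mem_erase.2 ⟨fun heq => hzA (heq ▸ hw), hwQ⟩)
    have := Finset.card_le_card hsub'
    have := Finset.card_union_le P (Q.erase z)
    have := Finset.card_erase_add_one hzQ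
    omega

end SwapHistory

/-! ### Moves and extra moves -/

lemma sub_le_card_filter_Ico {f : ℕ → ℤ} {P : ℕ → Prop} [DecidablePred P] {a b : ℕ} (hab : a ≤ b)
    (h : ∀ τ, a ≤ τ → τ < b → f (τ + 1) - f τ ≤ if P τ then 1 else 0) :
    f b - f a ≤ ((Finset.Ico a b).filter P).card := by
  rw [← Finset.sum_Ico_sub f hab, Finset.card_filter]
  push_cast
  exact Finset.sum_le_sum fun τ hτ => h τ (Finset.mem_Ico.1 hτ).1 (Finset.mem_Ico.1 hτ).2

lemma variation_le_card_filter_range {f : ℕ → ℤ} {P : ℕ → Prop} [DecidablePred P] {b c d : ℕ}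
    (hbc : b ≤ c) (hcd : c ≤ d) (h : ∀ τ < d, |f (τ + 1) - f τ| ≤ if P τ then 1 else 0) :
    f b - f 0 + (f b - f c) + (f d - f c) ≤ ((Finset.range d).filter P).card := by
  have hup : ∀ τ < d, f (τ + 1) - f τ ≤ if P τ then 1 else 0 := fun τ hτ =>
    (le_abs_self _).trans (h τ hτ)
  have hdown : ∀ τ < d, -f (τ + 1) - -f τ ≤ if P τ then 1 else 0 := fun τ hτ => by
    rw [neg_sub_neg]
    exact (le_abs_self _).trans (abs_sub_comm (f τ) _ ▸ h τ hτ)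
  have h₁ := sub_le_card_filter_Ico (Nat.zero_le b) fun τ _ hτ => hup τ (by omega)
  have h₂ := sub_le_card_filter_Ico (f := fun τ => -f τ) hbc fun τ _ hτ => hdown τ (by omega)
  have h₃ := sub_le_card_filter_Ico hcd fun τ _ hτ => hup τ hτ
  have hsplit : ((Finset.range d).filter P).card = ((Finset.Ico 0 b).filter P).card +
      ((Finset.Ico b c).filter P).card + ((Finset.Ico c d).filter P).card := by
    simp only [Finset.card_filter, Finset.range_eq_Ico,
      Finset.sum_Ico_consecutive _ (Nat.zero_le b) hbc,
      Finset.sum_Ico_consecutive _ (Nat.zero_le c) hcd]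
  rw [hsplit]
  push_cast
  linarith

lemma card_filter_range_reflect {M : ℕ} {P Q : ℕ → Prop} [DecidablePred P] [DecidablePred Q]
    (h : ∀ τ < M, P τ ↔ Q (M - (τ + 1))) :
    ((Finset.range M).filter P).card = ((Finset.range M).filter Q).card := by
  rw [Finset.card_filter, Finset.card_filter, ← Finset.sum_range_reflect]
  refine Finset.sum_congr rfl fun τ hτ => if_congr ?_ rfl rfl
  have hτ := Finset.mem_range.1 hτ
  rw [h _ (by omega), show M - (M - 1 - τ + 1) = τ by omega]

namespace SwapHistory

variable {m N : ℕ} (S : SwapHistory m N)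

/-- The token `z` is displaced at step `τ`: a clean token for which `z` is blank swaps with it. -/
def DisplacedAt (τ : ℕ) (z : RankTok m N) : Prop :=
  ∃ b r, S.Clean b r ∧ S.Blank r z ∧ S.SwapsAt τ (.inr (b, r)) z

/-- The token `z` moves at step `τ`. -/
def MovesAt (z : RankTok m N) (τ : ℕ) : Prop := S.pos (τ + 1) z ≠ S.pos τ z

/-- The gadget containing the edge that `z` traverses at step `τ`. -/
def edgeGadget (z : RankTok m N) (τ : ℕ) : Option (Option (Fin m)) :=
  Vtx.edgeGadget (S.pos τ z) (S.pos (τ + 1) z)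

/-- A move is extra if it does not contribute to the net displacement of its token: any move of an
item, and any move of a ranked token in a foreign slot gadget, or in the ordering gadget if it is
contrary or a displacement. -/
def ExtraMoveAt : RankTok m N → ℕ → Prop
  | .inl o, τ => S.MovesAt (.inl o) τ
  | .inr (b, r), τ => S.MovesAt (.inr (b, r)) τ ∧
      ((∃ i, S.edgeGadget (.inr (b, r)) τ = some (some i) ∧ i ≠ S.slot r) ∨
        (S.edgeGadget (.inr (b, r)) τ = some none ∧
          (S.Contrary b r τ ∨ S.DisplacedAt τ (.inr (b, r)))))

open Classical in
/-- The steps at which `z` moves. -/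
noncomputable def moves (z : RankTok m N) : Finset ℕ := (Finset.range S.len).filter (S.MovesAt z)

open Classical in
/-- The steps at which `z` makes an extra move. -/
noncomputable def extraMoves (z : RankTok m N) : Finset ℕ :=
  (Finset.range S.len).filter (S.ExtraMoveAt z)

/-- Net change of height of `z`. -/
def displacement (z : RankTok m N) : ℤ := |S.height S.len z - S.height 0 z|

open Classical in
/-- The steps at which the ordering token of rank `r` moves inside its own slot gadget. -/
noncomputable def ownMoves (r : Fin N) : Finset ℕ := (Finset.range S.len).filter fun τ =>
  S.MovesAt (.inr (false, r)) τ ∧ S.edgeGadget (.inr (false, r)) τ = some (some (S.slot r))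

open Classical in
/-- The steps at which the ordering token of rank `r` moves inside the ordering gadget, neither
contrary nor displaced. -/
noncomputable def advances (r : Fin N) : Finset ℕ := (Finset.range S.len).filter fun τ =>
  S.MovesAt (.inr (false, r)) τ ∧ S.edgeGadget (.inr (false, r)) τ = some none ∧
    ¬ (S.Contrary false r τ ∨ S.DisplacedAt τ (.inr (false, r)))

variable {S} {τ τ₁ τ₂ φ : ℕ} {b : Bool} {r ρ : Fin N} {i : Fin m} {z w : RankTok m N}

lemma movesAt_rev (hτ : τ < S.len) :
    S.rev.MovesAt z τ ↔ S.MovesAt (mirror z) (S.len - (τ + 1)) := by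
  simp only [MovesAt, rev_pos, show S.len - (τ + 1) + 1 = S.len - τ by omega]
  exact ne_comm

lemma edgeGadget_rev (hτ : τ < S.len) :
    S.rev.edgeGadget z τ = S.edgeGadget (mirror z) (S.len - (τ + 1)) := by
  have hstep : S.len - (τ + 1) + 1 = S.len - τ := by omega
  have hadj := eq_or_adj_succ (S := S) (τ := S.len - (τ + 1)) (by omega) (mirror z)
  rw [hstep] at hadj
  simp only [edgeGadget, rev_pos, hstep]
  exact (Vtx.edgeGadget_comm hadj).symm

lemma displacedAt_rev (hτ : τ < S.len) :
    S.rev.DisplacedAt τ z ↔ S.DisplacedAt (S.len - (τ + 1)) (mirror z) := by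
  simp only [DisplacedAt, clean_rev, blank_rev, swapsAt_rev hτ, mirror_inr]
  constructor
  · rintro ⟨b, r, h⟩
    exact ⟨!b, r.rev, h⟩
  · rintro ⟨b, r, h⟩
    exact ⟨!b, r.rev, by simpa using h⟩

lemma extraMoveAt_rev (hτ : τ < S.len) :
    S.rev.ExtraMoveAt z τ ↔ S.ExtraMoveAt (mirror z) (S.len - (τ + 1)) := by
  rcases z with o | ⟨b, r⟩
  · exact movesAt_rev hτ
  · simp only [ExtraMoveAt, mirror_inr, movesAt_rev hτ, edgeGadget_rev hτ, displacedAt_rev hτ,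
      contrary_rev hτ, rev_slot]

lemma card_moves_rev : (S.rev.moves z).card = (S.moves (mirror z)).card := by
  classical exact card_filter_range_reflect fun τ hτ => movesAt_rev hτ

lemma card_extraMoves_rev : (S.rev.extraMoves z).card = (S.extraMoves (mirror z)).card := by
  classical exact card_filter_range_reflect fun τ hτ => extraMoveAt_rev hτ

lemma displacement_rev : S.rev.displacement z = S.displacement (mirror z) := by
  simp [displacement, abs_sub_comm]

lemma movesAt_iff_height_ne (hτ : τ < S.len) :
    S.MovesAt z τ ↔ S.height (τ + 1) z ≠ S.height τ z := by
  refine ⟨fun h => ?_, fun h heq => h (congrArg _ heq)⟩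
  obtain ⟨q, hq⟩ := exists_swapsAt hτ h
  have := hq.height_eq
  omega

lemma displacement_ord (r : Fin N) : S.displacement (.inr (false, r)) =
    S.height S.len (.inr (false, r)) - S.height 0 (.inr (false, r)) := by
  have h₀ := height_zero_ord (S := S) r
  have h₁ := height_len_ord_pos (S := S) r
  exact abs_of_nonneg (by omega)

lemma displacement_add_two_le_card_moves (h : ¬ S.Clean b r) :
    S.displacement (.inr (b, r)) + 2 ≤ (S.moves (.inr (b, r))).card := by
  classical
  suffices hord : ∀ (S : SwapHistory m N) (r : Fin N), ¬ S.Clean false r →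
      S.displacement (.inr (false, r)) + 2 ≤ (S.moves (.inr (false, r))).card by
    cases b
    · exact hord S r h
    · have := hord S.rev r.rev (by simpa [clean_rev] using h)
      simpa [displacement_rev, card_moves_rev] using this
  intro S r h
  simp only [Clean, not_forall, not_not] at h
  obtain ⟨τ, hτ, hc⟩ := h
  have hvar := variation_le_card_filter_range (f := fun τ => S.height τ (.inr (false, r)))
    (P := S.MovesAt (.inr (false, r))) τ.le_succ hτ fun τ hτ => by
      have hstep := height_succ hτ (.inr (false, r))
      rw [movesAt_iff_height_ne hτ, abs_le]
      split_ifs <;> omega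
  have hc : S.height (τ + 1) (.inr (false, r)) < S.height τ (.inr (false, r)) := hc
  rw [displacement_ord, moves]
  simp only [Nat.succ_eq_add_one] at hvar
  omega

end SwapHistory

/-! ### Moves of an ordering token in its own slot gadget -/

namespace Vtx

/-- Distance from the root inside slot gadget `i`, and zero outside of it. -/
def slotDepth {m : ℕ} (k : ℕ) (i : Fin m) (u : Vtx m) : ℤ :=
  if gadget u = some (some i) then height k u else 0

lemma Adj.abs_slotDepth_sub_le {m k : ℕ} {i : Fin m} {u v : Vtx m} (h : Adj k u v) :
    |slotDepth k i v - slotDepth k i u| ≤ if edgeGadget u v = some (some i) then 1 else 0 := by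
  cases u <;> cases v <;> simp only [Adj, AdjRight, or_false, false_or, or_self] at h <;>
    simp only [edgeGadget, gadget, slotDepth, height, abs_le] <;> grind

end Vtx

namespace SwapHistory

variable {m N : ℕ} {S : SwapHistory m N} {τ τ₁ τ₂ φ : ℕ} {b : Bool} {r ρ : Fin N} {i : Fin m}
  {z w : RankTok m N}

open Classical in
lemma abs_slotDepth_succ_sub_le (hτ : τ < S.len) :
    |(S.pos (τ + 1) z).slotDepth S.k i - (S.pos τ z).slotDepth S.k i| ≤
      if S.MovesAt z τ ∧ S.edgeGadget z τ = some (some i) then 1 else 0 := by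
  by_cases h : S.MovesAt z τ
  · obtain ⟨q, hq⟩ := exists_swapsAt hτ h
    simpa [h, edgeGadget] using hq.adj.abs_slotDepth_sub_le (i := i)
  · simp [h, show S.pos (τ + 1) z = S.pos τ z from not_not.1 h]

lemma slotDepth_zero_ord : (S.pos 0 (.inr (false, r))).slotDepth S.k i = 0 := by
  simp [Vtx.slotDepth, S.ord_init, Vtx.gadget]

lemma slotDepth_len_ord : (S.pos S.len (.inr (false, r))).slotDepth S.k (S.slot r) =
    S.height S.len (.inr (false, r)) :=
  if_pos (gadget_len_ord r)

open Classical in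
lemma height_len_le_card_ownMoves (r : Fin N) :
    S.height S.len (.inr (false, r)) ≤ (S.ownMoves r).card := by
  have hvar := variation_le_card_filter_range
    (f := fun τ => (S.pos τ (.inr (false, r))).slotDepth S.k (S.slot r))
    (le_refl S.len) le_rfl fun τ hτ =>
      abs_slotDepth_succ_sub_le (z := .inr (false, r)) (i := S.slot r) hτ
  simpa [slotDepth_zero_ord, slotDepth_len_ord, ownMoves] using hvar

open Classical in
lemma height_len_add_two_le_card_ownMoves (h₁₂ : τ₁ ≤ τ₂) (h₂ : τ₂ ≤ S.len)
    (hin : S.gadget τ₁ (.inr (false, r)) = some (some (S.slot r)))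
    (hout : S.gadget τ₂ (.inr (false, r)) ≠ some (some (S.slot r))) :
    S.height S.len (.inr (false, r)) + 2 ≤ (S.ownMoves r).card := by
  have hvar := variation_le_card_filter_range
    (f := fun τ => (S.pos τ (.inr (false, r))).slotDepth S.k (S.slot r)) h₁₂ h₂
    fun τ hτ => abs_slotDepth_succ_sub_le (z := .inr (false, r)) (i := S.slot r) hτ
  have hpos : 0 < (S.pos τ₁ (.inr (false, r))).slotDepth S.k (S.slot r) := by
    rw [show (S.pos τ₁ (.inr (false, r))).slotDepth S.k (S.slot r) = _ from if_pos hin]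
    exact height_pos_of_gadget hin
  have hzero : (S.pos τ₂ (.inr (false, r))).slotDepth S.k (S.slot r) = 0 := if_neg hout
  rw [slotDepth_zero_ord, slotDepth_len_ord, hzero] at hvar
  rw [ownMoves]
  omega

/-! ### Advances of an ordering token in the ordering gadget -/

lemma edgeGadget_eq_ord (h : S.height τ z < 0) : S.edgeGadget z τ = some none := by
  have hord : (S.pos τ z).gadget = some none := gadget_eq_ord.2 h
  simp [edgeGadget, Vtx.edgeGadget, hord]

lemma exists_first_root (r : Fin N) :
    ∃ φ ≤ S.len, S.pos φ (.inr (false, r)) = .root ∧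
      ∀ τ < φ, S.height τ (.inr (false, r)) < 0 := by
  classical
  have hex := exists_pos_eq_root (S := S) false r
  refine ⟨Nat.find hex, (Nat.find_spec hex).1, (Nat.find_spec hex).2, fun τ hτ => ?_⟩
  have hlen := (Nat.find_spec hex).1
  by_contra! hnonneg
  obtain ⟨τ', -, hle, hzero⟩ := exists_eq_zero_of_succ_le (Nat.zero_le τ)
    (f := fun τ => S.height τ (.inr (false, r)))
    (fun τ' _ h => by have := height_succ (S := S) (τ := τ') (by omega) (.inr (false, r)); omega)
    (by rw [height_zero_ord]; omega) hnonneg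
  have := Nat.find_min' hex ⟨by omega, height_eq_zero.1 hzero⟩
  omega

lemma exists_swapsAt_of_height_lt (hne : z ≠ w) (hτ : τ ≤ S.len)
    (hneg : ∀ t ≤ τ, S.height t z ≤ 0) (h₀ : S.height 0 z ≤ S.height 0 w)
    (h : S.height τ w < S.height τ z) :
    ∃ t < τ, S.SwapsAt t z w ∧ S.height (t + 1) z = S.height t z + 1 := by
  induction τ with
  | zero => omega
  | succ n ih =>
    by_cases hn : S.height n w < S.height n z
    · obtain ⟨t, ht, hswap⟩ := ih (by omega) (fun t ht => hneg t (by omega)) hn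
      exact ⟨t, by omega, hswap⟩
    · by_cases hs : S.SwapsAt n z w
      · have := hs.height_eq
        exact ⟨n, n.lt_succ_self, hs, by omega⟩
      · exact absurd ((height_lt_iff_succ hτ hne hs (hneg n n.le_succ) (hneg _ le_rfl)).2 h) hn

lemma mem_advances (hτ : τ < S.len) (hneg : S.height τ (.inr (false, r)) < 0)
    (hasc : S.height (τ + 1) (.inr (false, r)) = S.height τ (.inr (false, r)) + 1)
    (hdisp : ¬ S.DisplacedAt τ (.inr (false, r))) : τ ∈ S.advances r := by
  simp only [advances, Finset.mem_filter, Finset.mem_range]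
  refine ⟨hτ, (movesAt_iff_height_ne hτ).2 (by omega), edgeGadget_eq_ord hneg, ?_⟩
  rintro (hc | hc)
  · simp only [Contrary] at hc
    omega
  · exact hdisp hc

/-- Before step `φ`, the clean slot token of rank `ρ` displaces the ordering token of rank `r`
towards the root. -/
def DisplacesBefore (S : SwapHistory m N) (φ : ℕ) (r ρ : Fin N) : Prop :=
  ∃ τ < φ, S.height (τ + 1) (.inr (false, r)) = S.height τ (.inr (false, r)) + 1 ∧
    S.Clean true ρ ∧ S.Blank ρ (.inr (false, r)) ∧ S.SwapsAt τ (.inr (true, ρ)) (.inr (false, r))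

lemma DisplacedAt.displacesBefore (h : S.DisplacedAt τ (.inr (false, r))) (hτ : τ < φ)
    (hasc : S.height (τ + 1) (.inr (false, r)) = S.height τ (.inr (false, r)) + 1) :
    ∃ ρ, S.DisplacesBefore φ r ρ := by
  obtain ⟨_ | _, ρ, hclean, hblank, hs⟩ := h
  · have := hclean.height_mono (τ₂ := τ + 1) τ.le_succ hs.1
    have := hs.height_eq
    omega
  · exact ⟨ρ, τ, hτ, hasc, hclean, hblank, hs⟩

/- Clean slot tokens enter the ordering gadget in the order of their ranks, so when the one of rank
`ρ` meets the ordering token, all slot tokens of smaller rank have passed it. -/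
lemma DisplacesBefore.exists_mem_advances (h : S.DisplacesBefore φ r ρ)
    (hmin : ∀ ρ' < ρ, ¬ S.DisplacesBefore φ r ρ')
    (hneg : ∀ τ < φ, S.height τ (.inr (false, r)) < 0) {ρ' : Fin N} (hρ' : ρ' < ρ) :
    ∃ τ ∈ S.advances r, S.SwapsAt τ (.inr (false, r)) (.inr (true, ρ')) := by
  obtain ⟨τ, hτ, -, hclean, -, hs⟩ := h
  have hlt : S.height τ (.inr (true, ρ')) < S.height τ (.inr (false, r)) := by
    have hstep := hs.height_eq
    have hroot := hneg τ hτ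
    have hbelow := hclean.slot_height_lt hρ' hs.1.le (by omega)
    have hne : S.height τ (.inr (true, ρ')) ≠ S.height τ (.inr (false, r)) := fun heq => by
      have := eq_of_pos_eq hs.1.le
        (Vtx.eq_of_height_eq_of_nonpos heq (heq.trans_lt (hneg τ hτ)).le)
      simp at this
    omega
  obtain ⟨t, ht, hs', hasc'⟩ := exists_swapsAt_of_height_lt (by simp) hs.1.le
    (fun t ht => (hneg t (by omega)).le)
    (by have := height_zero_slot_pos (S := S) ρ'; rw [height_zero_ord]; omega) hlt
  refine ⟨t, mem_advances hs'.1 (hneg t (by omega)) hasc' ?_, hs'⟩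
  rintro ⟨b, r', hclean', hblank', hs''⟩
  obtain ⟨rfl, rfl⟩ : b = true ∧ r' = ρ' := by simpa using hs''.symm.eq_of_swapsAt hs'
  exact hmin _ hρ' ⟨t, by omega, hasc', hclean', hblank', hs''⟩

lemma DisplacesBefore.rank_le_card_advances (h : S.DisplacesBefore φ r ρ)
    (hmin : ∀ ρ' < ρ, ¬ S.DisplacesBefore φ r ρ')
    (hneg : ∀ τ < φ, S.height τ (.inr (false, r)) < 0) : (ρ : ℕ) ≤ (S.advances r).card := by
  choose! g hmem hswap using fun ρ' => h.exists_mem_advances hmin hneg (ρ' := ρ')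
  rw [← Fin.card_Iio]
  refine Finset.card_le_card_of_injOn g (fun ρ' hρ' => hmem ρ' (by simpa using hρ'))
    fun ρ₁ hρ₁ ρ₂ hρ₂ heq => ?_
  have h₁ := hswap ρ₁ (by simpa using hρ₁)
  rw [heq] at h₁
  simpa using h₁.eq_of_swapsAt (hswap ρ₂ (by simpa using hρ₂))

/- If the token is displaced towards the root, say by a slot token of least possible rank `ρ > r`,
it advances by swapping with the slot tokens of rank less than `ρ`. -/
lemma rank_lt_card_advances (r : Fin N) : (r : ℕ) + 1 ≤ (S.advances r).card := by
  classical
  obtain ⟨φ, hφ, hroot, hneg⟩ := exists_first_root (S := S) r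
  by_cases hex : ∃ ρ, S.DisplacesBefore φ r ρ
  · obtain ⟨ρ, hρ, hmin⟩ := wellFounded_lt.has_min {ρ | S.DisplacesBefore φ r ρ} hex
    have hle := hρ.rank_le_card_advances (fun ρ' hlt hρ' => hmin ρ' hρ' hlt) hneg
    obtain ⟨-, -, -, -, hblank, -⟩ := hρ
    have : (r : ℕ) < ρ := hblank.1
    omega
  · have hvar := sub_le_card_filter_Ico (f := fun τ => S.height τ (.inr (false, r)))
      (P := (· ∈ S.advances r)) (Nat.zero_le φ) fun τ _ hτ => by
        have hstep := height_succ (S := S) (τ := τ) (by omega) (.inr (false, r))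
        by_cases hasc : S.height (τ + 1) (.inr (false, r)) = S.height τ (.inr (false, r)) + 1
        · rw [if_pos (mem_advances (by omega) (hneg τ hτ) hasc
            fun h => hex (h.displacesBefore hτ hasc))]
          omega
        · split_ifs <;> omega
    have hsub : ((Finset.Ico 0 φ).filter (· ∈ S.advances r)).card ≤ (S.advances r).card :=
      Finset.card_le_card fun τ hτ => (Finset.mem_filter.1 hτ).2
    rw [height_eq_zero.2 hroot, height_zero_ord] at hvar
    omega

/-! ### Extra moves come on top of the displacement -/

lemma displacement_add_card_extraMoves_add_le {e : ℤ}
    (h : S.height S.len (.inr (false, r)) + e ≤ (S.ownMoves r).card) :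
    S.displacement (.inr (false, r)) + (S.extraMoves (.inr (false, r))).card + e ≤
      (S.moves (.inr (false, r))).card := by
  classical
  have hdisj : Disjoint (S.ownMoves r) (S.advances r) := by
    rw [Finset.disjoint_left]
    intro τ hown hadv
    simp only [ownMoves, advances, Finset.mem_filter] at hown hadv
    simpa using hown.2.2.symm.trans hadv.2.2.1
  have hdisj' : Disjoint (S.ownMoves r ∪ S.advances r) (S.extraMoves (.inr (false, r))) := by
    rw [Finset.disjoint_left]
    intro τ hτ hextra
    simp only [ownMoves, advances, extraMoves, Finset.mem_union, Finset.mem_filter,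
      ExtraMoveAt] at hτ hextra
    grind
  have hsub : ownMoves S r ∪ S.advances r ∪ S.extraMoves (.inr (false, r)) ⊆
      S.moves (.inr (false, r)) := by
    intro τ hτ
    simp only [ownMoves, advances, extraMoves, moves, Finset.mem_union, Finset.mem_filter,
      ExtraMoveAt] at hτ ⊢
    tauto
  have hcard := Finset.card_le_card hsub
  rw [Finset.card_union_of_disjoint hdisj', Finset.card_union_of_disjoint hdisj] at hcard
  have := rank_lt_card_advances (S := S) r
  rw [displacement_ord, height_zero_ord]
  omega

lemma displacement_add_card_extraMoves_le (b : Bool) (r : Fin N) :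
    S.displacement (.inr (b, r)) + (S.extraMoves (.inr (b, r))).card ≤
      (S.moves (.inr (b, r))).card := by
  have hord := fun (S : SwapHistory m N) (r : Fin N) =>
    displacement_add_card_extraMoves_add_le (S := S) (r := r) (e := 0)
      (by simpa using height_len_le_card_ownMoves r)
  cases b
  · simpa using hord S r
  · simpa [displacement_rev, card_moves_rev, card_extraMoves_rev] using hord S.rev r.rev

lemma DisplacedAt.extraMoveAt (h : S.DisplacedAt τ z) : S.ExtraMoveAt z τ := by
  have hdisp := h
  obtain ⟨b, r, hclean, hblank, hs⟩ := h
  have hmove : S.MovesAt z τ := hs.symm.pos_succ_ne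
  rcases z with o | ⟨b', r'⟩
  · exact hmove
  have hslot : S.slot r' ≠ S.slot r := by cases b' <;> exact hblank.2
  have hline := hclean.onLine hs.1.le
  have hline' := hclean.onLine (τ := τ + 1) hs.1
  have hadj := hs.2.2.1
  rw [hs.pos_succ_left] at hline'
  have hedge : S.edgeGadget (.inr (b', r')) τ = some none ∨
      S.edgeGadget (.inr (b', r')) τ = some (some (S.slot r)) := by
    rw [edgeGadget, hs.pos_succ_right]
    rcases hline with h | ⟨d, h⟩ | ⟨d, h⟩ <;> rcases hline' with h' | ⟨d', h'⟩ | ⟨d', h'⟩ <;>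
      rw [h, h'] at hadj ⊢ <;> simp [Vtx.edgeGadget, Vtx.gadget, Vtx.Adj, Vtx.AdjRight] at hadj ⊢
  rcases hedge with hord | hforeign
  · exact ⟨hmove, .inr ⟨hord, .inr hdisp⟩⟩
  · exact ⟨hmove, .inl ⟨_, hforeign, hslot.symm⟩⟩

end SwapHistory

/-! ### Crediting blank tokens -/

/-- Every clean token `v` gets a partner: a blank token for `v`, lying at some time `time v` at
which `v` is at the root in one of the two gadgets that `v` connects, and swapping with `v`. The
swap of `v` with its partner is an extra move of the partner, which is said to be credited. -/
structure Crediting {m N : ℕ} (S : SwapHistory m N) where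
  time : Bool × Fin N → ℕ
  partner : Bool × Fin N → RankTok m N
  time_le {v} : S.Clean v.1 v.2 → time v ≤ S.len
  pos_time {v} : S.Clean v.1 v.2 → S.pos (time v) (.inr v) = .root
  blankAt {v} : S.Clean v.1 v.2 → S.BlankAt (time v) v.2 (partner v)
  everSwap {v} : S.Clean v.1 v.2 → S.EverSwap (.inr v) (partner v)

namespace Crediting

open SwapHistory

variable {m N : ℕ} {S : SwapHistory m N} {C : Crediting S} {v w : Bool × Fin N} {r : Fin N}
  {z : RankTok m N} {τ τ₁ τ₂ a : ℕ} {g : Fin m}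

/- At least two blank tokens are available while `v` is at the root, and `v` swaps with all but at
most one of them. -/
lemma nonempty (S : SwapHistory m N) : Nonempty (Crediting S) := by
  classical
  have hexists : ∀ v : Bool × Fin N, ∃ (t : ℕ) (z : RankTok m N), S.Clean v.1 v.2 →
      t ≤ S.len ∧ S.pos t (.inr v) = .root ∧ S.BlankAt t v.2 z ∧ S.EverSwap (.inr v) z := by
    rintro ⟨b, r⟩
    obtain ⟨t, ht, hroot⟩ := exists_pos_eq_root (S := S) b r
    obtain ⟨z, hz, z', hz', hne⟩ :=
      Finset.one_lt_card.1 (two_le_card_blankAt ht hroot).1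
    simp only [Finset.mem_filter, Finset.mem_univ, true_and] at hz hz'
    by_cases hs : S.EverSwap (.inr (b, r)) z
    · exact ⟨t, z, fun _ => ⟨ht, hroot, hz, hs⟩⟩
    · refine ⟨t, z', fun h => ⟨ht, hroot, hz', ?_⟩⟩
      by_contra hs'
      exact hne (h.blank_unique ht hroot hz hs hz' hs')
  choose time partner h using hexists
  exact ⟨⟨time, partner, fun hv => (h _ hv).1, fun hv => (h _ hv).2.1,
    fun hv => (h _ hv).2.2.1, fun hv => (h _ hv).2.2.2⟩⟩

/-- The crediting seen in the time-reversed history. -/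
def rev (C : Crediting S) : Crediting S.rev where
  time v := S.len - C.time (!v.1, v.2.rev)
  partner v := mirror (C.partner (!v.1, v.2.rev))
  time_le _ := by simp
  pos_time {v} h := by
    obtain ⟨b, r⟩ := v
    have hclean : S.Clean (!b) r.rev := clean_rev.1 h
    simpa [Nat.sub_sub_self (C.time_le (v := (!b, r.rev)) hclean)] using
      C.pos_time (v := (!b, r.rev)) hclean
  blankAt {v} h := by
    obtain ⟨b, r⟩ := v
    have hclean : S.Clean (!b) r.rev := clean_rev.1 h
    simpa [blankAt_rev, Nat.sub_sub_self (C.time_le (v := (!b, r.rev)) hclean)] using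
      C.blankAt (v := (!b, r.rev)) hclean
  everSwap {v} h := by
    obtain ⟨b, r⟩ := v
    have hclean : S.Clean (!b) r.rev := clean_rev.1 h
    simpa [everSwap_rev] using C.everSwap (v := (!b, r.rev)) hclean

/-- At step `τ`, a clean token swaps with its partner `z`. -/
def CreditedAt (C : Crediting S) (z : RankTok m N) (τ : ℕ) : Prop :=
  ∃ v, S.Clean v.1 v.2 ∧ C.partner v = z ∧ S.SwapsAt τ (.inr v) z

/-- At step `τ`, the token `z` makes an extra move that is not credited. -/
def UncreditedAt (C : Crediting S) (z : RankTok m N) (τ : ℕ) : Prop :=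
  S.ExtraMoveAt z τ ∧ ¬ C.CreditedAt z τ

lemma creditedAt_rev (hτ : τ < S.len) :
    C.rev.CreditedAt z τ ↔ C.CreditedAt (mirror z) (S.len - (τ + 1)) := by
  constructor
  · rintro ⟨⟨b, r⟩, hclean, rfl, hs⟩
    exact ⟨(!b, r.rev), clean_rev.1 hclean, by simp [rev],
      by simpa using (swapsAt_rev hτ).1 hs⟩
  · rintro ⟨⟨b, r⟩, hclean, hp, hs⟩
    exact ⟨(!b, r.rev), clean_rev.2 (by simpa using hclean), by simp [rev, hp],
      (swapsAt_rev hτ).2 (by simpa using hs)⟩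

lemma CreditedAt.extraMoveAt (h : C.CreditedAt z τ) : S.ExtraMoveAt z τ := by
  obtain ⟨v, hclean, rfl, hs⟩ := h
  exact DisplacedAt.extraMoveAt ⟨v.1, v.2, hclean, (C.blankAt hclean).1, hs⟩

open Classical in
/-- The steps at which the token `z` makes a credited move. -/
noncomputable def creditedMoves (C : Crediting S) (z : RankTok m N) : Finset ℕ :=
  (Finset.range S.len).filter (C.CreditedAt z)

lemma creditedMoves_subset_extraMoves (C : Crediting S) (z : RankTok m N) :
    C.creditedMoves z ⊆ S.extraMoves z := by
  classical exact Finset.monotone_filter_right _ fun τ _ h => CreditedAt.extraMoveAt h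

lemma card_creditedMoves_rev :
    (C.rev.creditedMoves z).card = (C.creditedMoves (mirror z)).card := by
  classical exact card_filter_range_reflect fun τ hτ => creditedAt_rev hτ

lemma uncreditedAt_of_swapsAt (hclean : S.Clean v.1 v.2) (hb : S.Blank v.2 z)
    (hne : C.partner v ≠ z) (h : S.SwapsAt τ (.inr v) z) : C.UncreditedAt z τ := by
  refine ⟨DisplacedAt.extraMoveAt ⟨v.1, v.2, hclean, hb, h⟩, ?_⟩
  rintro ⟨w, -, hw, hs⟩
  obtain rfl : v = w := by simpa using h.symm.eq_of_swapsAt hs.symm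
  exact hne hw

/-! ### Deficient tokens -/

/-- An unclean token is deficient if its moves, apart from those accounted for by its displacement
and its credited moves, number at most one. -/
def Deficient (C : Crediting S) (v : Bool × Fin N) : Prop :=
  ¬ S.Clean v.1 v.2 ∧ ((S.moves (.inr v)).card : ℤ) ≤
    S.displacement (.inr v) + (C.creditedMoves (.inr v)).card + 1

lemma deficient_rev : C.rev.Deficient v ↔ C.Deficient (!v.1, v.2.rev) := by
  obtain ⟨b, r⟩ := v
  simp [Deficient, clean_rev, card_moves_rev, displacement_rev, card_creditedMoves_rev]

lemma Deficient.uncreditedAt_unique (h : C.Deficient v) (h₁ : τ₁ < S.len)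
    (h₂ : τ₂ < S.len) (hu₁ : C.UncreditedAt (.inr v) τ₁)
    (hu₂ : C.UncreditedAt (.inr v) τ₂) : τ₁ = τ₂ := by
  classical
  by_contra hne
  have hsub : C.creditedMoves (.inr v) ∪ {τ₁, τ₂} ⊆ S.extraMoves (.inr v) := by
    refine Finset.union_subset (C.creditedMoves_subset_extraMoves _) ?_
    simp [Finset.insert_subset_iff, extraMoves, h₁, h₂, hu₁.1, hu₂.1]
  have hdisj : Disjoint (C.creditedMoves (.inr v)) {τ₁, τ₂} := by
    simp [creditedMoves, hu₁.2, hu₂.2]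
  have hcard := Finset.card_le_card hsub
  rw [Finset.card_union_of_disjoint hdisj, Finset.card_pair hne] at hcard
  have := displacement_add_card_extraMoves_le (S := S) v.1 v.2
  have := h.2
  simp only [Prod.mk.eta] at *
  omega

lemma Deficient.gadget_eq_slot (h : C.Deficient (false, r)) (h₁₂ : τ₁ ≤ τ₂) (h₂ : τ₂ ≤ S.len)
    (hin : S.gadget τ₁ (.inr (false, r)) = some (some (S.slot r))) :
    S.gadget τ₂ (.inr (false, r)) = some (some (S.slot r)) := by
  by_contra hout
  have := displacement_add_card_extraMoves_add_le
    (height_len_add_two_le_card_ownMoves h₁₂ h₂ hin hout)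
  have := Finset.card_le_card (C.creditedMoves_subset_extraMoves (.inr (false, r)))
  have := h.2
  omega

lemma Deficient.exists_partner_eq (h : C.Deficient v) :
    ∃ w, S.Clean w.1 w.2 ∧ C.partner w = .inr v := by
  have := displacement_add_two_le_card_moves (b := v.1) (r := v.2) h.1
  have := h.2
  classical
  obtain ⟨τ, hτ⟩ := Finset.card_pos.1 (by simp only [Prod.mk.eta] at *; omega :
    0 < (C.creditedMoves (.inr v)).card)
  obtain ⟨w, hclean, hw, -⟩ := (Finset.mem_filter.1 hτ).2
  exact ⟨w, hclean, hw⟩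

end Crediting

namespace SwapHistory

variable {m N : ℕ} {S : SwapHistory m N} {τ τ₁ τ₂ : ℕ} {z w : RankTok m N} {i : Fin m}
  {x : Option (Fin m)}

lemma eq_of_pos_eq_root (hτ : τ ≤ S.len) (hz : S.pos τ z = .root) (hw : S.pos τ w = .root) :
    z = w :=
  eq_of_pos_eq hτ (hz.trans hw.symm)

lemma gadget_succ_or_pos_eq_root (hτ : τ < S.len) (h : S.gadget τ z = some x) :
    S.gadget (τ + 1) z = some x ∨ S.pos (τ + 1) z = .root := by
  have hstep := eq_or_adj_succ hτ z
  simp only [gadget] at *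
  rcases hstep with heq | hadj
  · exact .inl (heq ▸ h)
  · generalize S.pos τ z = u at h hadj
    generalize S.pos (τ + 1) z = v at hadj ⊢
    cases u <;> cases v <;>
      simp only [Vtx.gadget, Vtx.Adj, Vtx.AdjRight, Option.some.injEq, reduceCtorEq] at h hadj ⊢ <;>
      grind

lemma exists_last_entry (h₁₂ : τ₁ ≤ τ₂) (h₂ : τ₂ ≤ S.len)
    (hout : S.gadget τ₁ z ≠ some (some i)) (hin : S.gadget τ₂ z = some (some i)) :
    ∃ a, τ₁ ≤ a ∧ a < τ₂ ∧ S.pos a z = .root ∧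
      ∀ t, a < t → t ≤ τ₂ → S.gadget t z = some (some i) := by
  induction τ₂, h₁₂ using Nat.le_induction with
  | base => exact absurd hin hout
  | succ n hn ih =>
    by_cases h : S.gadget n z = some (some i)
    · obtain ⟨a, hτ₁, han, hroot, hstay⟩ := ih (by omega) h
      refine ⟨a, hτ₁, by omega, hroot, fun t hat ht => ?_⟩
      rcases Nat.le_succ_iff.1 ht with ht | rfl
      · exact hstay t hat ht
      · exact hin
    · refine ⟨n, hn, n.lt_succ_self, ?_, fun t hat ht => ?_⟩
      · rcases hx : S.gadget n z with _ | x
        · exact gadget_eq_none.1 hx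
        · rcases gadget_succ_or_pos_eq_root (by omega) hx with hstay | hroot
          · exact absurd (hx.trans (hstay.symm.trans hin)) h
          · simp [gadget_eq_none.2 hroot] at hin
      · obtain rfl : t = n + 1 := by omega
        exact hin

end SwapHistory

namespace Crediting

open SwapHistory

variable {m N : ℕ} {S : SwapHistory m N} {C : Crediting S} {v w : Bool × Fin N}
  {r r' r₁ r₂ : Fin N} {z : RankTok m N} {t τ τ₁ τ₂ a : ℕ} {g : Fin m}

/-- Among the clean tokens whose partner is the ordering token of rank `r`, the token `v` has the
least crediting time. -/
def IsFirstCreditor (C : Crediting S) (v : Bool × Fin N) (r : Fin N) : Prop :=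
  S.Clean v.1 v.2 ∧ C.partner v = .inr (false, r) ∧
    ∀ w, S.Clean w.1 w.2 → C.partner w = .inr (false, r) → C.time v ≤ C.time w

lemma Deficient.exists_isFirstCreditor (h : C.Deficient (false, r)) :
    ∃ v, C.IsFirstCreditor v r := by
  classical
  obtain ⟨w, hw⟩ := h.exists_partner_eq
  obtain ⟨v, hv, hmin⟩ := Finset.exists_min_image
    (Finset.univ.filter fun v => S.Clean v.1 v.2 ∧ C.partner v = .inr (false, r)) C.time
    ⟨w, by simpa using hw⟩
  simp only [Finset.mem_filter, Finset.mem_univ, true_and, and_imp] at hv hmin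
  exact ⟨v, hv.1, hv.2, hmin⟩

/- A clean token visits the root during an interval, which contains its crediting time; so it cannot
credit a token that leaves a gadget before. -/
lemma IsFirstCreditor.uncreditedAt_of_exit (h : C.IsFirstCreditor v r) (hg : g ≠ S.slot r)
    (hτ : τ < C.time v) (hin : S.gadget τ (.inr (false, r)) = some (some g))
    (hroot : S.pos (τ + 1) (.inr (false, r)) = .root) :
    C.UncreditedAt (.inr (false, r)) τ := by
  have hlen := C.time_le h.1
  refine ⟨⟨fun heq => ?_, .inl ⟨g, ?_, hg⟩⟩, ?_⟩
  · rw [gadget_eq_none.2 (heq ▸ hroot)] at hin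
    simp at hin
  · simp only [gadget] at hin
    simp [edgeGadget, Vtx.edgeGadget, hin]
  · rintro ⟨w, hclean, hw, hs⟩
    have hroot' := hclean.pos_eq_root_of_mem_Icc τ.le_succ (hτ.trans_le (h.2.2 w hclean hw))
      (C.time_le hclean) (hs.pos_succ_right.symm.trans hroot) (C.pos_time hclean)
    exact hs.ne (eq_of_pos_eq_root (by omega) hroot' hroot)

lemma IsFirstCreditor.uncreditedAt_of_enter (h : C.IsFirstCreditor v r) (hg : g ≠ S.slot r)
    (haτ : a < τ) (hτ : τ ≤ C.time v) (hroot : S.pos a (.inr (false, r)) = .root)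
    (hin : S.gadget (a + 1) (.inr (false, r)) = some (some g))
    (hw : S.pos τ (.inr w) = .root) (hne : C.partner w ≠ .inr (false, r)) :
    C.UncreditedAt (.inr (false, r)) a := by
  have hlen := C.time_le h.1
  refine ⟨⟨fun heq => ?_, .inl ⟨g, ?_, hg⟩⟩, ?_⟩
  · rw [gadget_eq_none.2 (heq.trans hroot)] at hin
    simp at hin
  · simp only [gadget] at hin
    simp [edgeGadget, Vtx.edgeGadget, hroot, show Vtx.gadget .root = none from rfl, hin]
  · rintro ⟨w', hclean, hw', hs⟩
    have hroot' := hclean.pos_eq_root_of_mem_Icc haτ (hτ.trans (h.2.2 w' hclean hw'))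
      (C.time_le hclean) (hs.pos_succ_left.trans hroot) (C.pos_time hclean)
    obtain rfl : w' = w := by simpa using eq_of_pos_eq_root (by omega) hroot' hw
    exact hne hw'

lemma IsFirstCreditor.gadget_ne_slot (h : C.IsFirstCreditor v r) (hd : C.Deficient (false, r))
    (hτ : τ ≤ C.time v) : S.gadget τ (.inr (false, r)) ≠ some (some (S.slot r)) := by
  intro hin
  have hblank := C.blankAt h.1
  rw [h.2.1, BlankAt, hd.gadget_eq_slot hτ (C.time_le h.1) hin] at hblank
  simpa [hblank.1.2] using hblank.2

/-- Deficient ordering tokens together with their first creditors, which are such that any of the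
tokens is blank for the creditor of any other. -/
structure Cohort (C : Crediting S) where
  ranks : Finset (Fin N)
  creditor : Fin N → Bool × Fin N
  deficient {r : Fin N} : r ∈ ranks → C.Deficient (false, r)
  isFirstCreditor {r : Fin N} : r ∈ ranks → C.IsFirstCreditor (creditor r) r
  blank {r r' : Fin N} : r ∈ ranks → r' ∈ ranks → S.Blank (creditor r).2 (.inr (false, r'))

namespace Cohort

variable {A : C.Cohort}

/-- The time at which the token of rank `r` is credited first. -/
def time (A : C.Cohort) (r : Fin N) : ℕ := C.time (A.creditor r)

lemma clean (hr : r ∈ A.ranks) : S.Clean (A.creditor r).1 (A.creditor r).2 :=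
  (A.isFirstCreditor hr).1

lemma time_le (hr : r ∈ A.ranks) : A.time r ≤ S.len := C.time_le (A.clean hr)

lemma pos_time (hr : r ∈ A.ranks) : S.pos (A.time r) (.inr (A.creditor r)) = .root :=
  C.pos_time (A.clean hr)

lemma partner_ne (hr : r ∈ A.ranks) (hne : r ≠ r') :
    C.partner (A.creditor r) ≠ .inr (false, r') := by
  simpa [(A.isFirstCreditor hr).2.1] using hne

lemma creditor_injOn : Set.InjOn A.creditor A.ranks := fun r hr r' hr' heq => by
  by_contra hne
  exact A.partner_ne hr hne (heq ▸ (A.isFirstCreditor hr').2.1)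

lemma pos_time_ne (hr : r ∈ A.ranks) (hr' : r' ∈ A.ranks) :
    S.pos (A.time r) (.inr (false, r')) ≠ .root := fun hroot => by
  have heq : A.creditor r = (false, r') := by
    simpa using eq_of_pos_eq_root (A.time_le hr) (A.pos_time hr) hroot
  have hclean := A.clean hr
  rw [heq] at hclean
  exact (A.deficient hr').1 hclean

lemma uncreditedAt_of_swapsAt (hr : r ∈ A.ranks) (hr' : r' ∈ A.ranks) (hne : r ≠ r')
    (h : S.SwapsAt τ (.inr (A.creditor r)) (.inr (false, r'))) :
    C.UncreditedAt (.inr (false, r')) τ :=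
  Crediting.uncreditedAt_of_swapsAt (A.clean hr) (A.blank hr hr') (A.partner_ne hr hne) h

lemma exists_uncreditedAt_of_gadget_eq_ord (hr : r ∈ A.ranks) (hr' : r' ∈ A.ranks) (hne : r ≠ r')
    (hord : S.gadget (A.time r) (.inr (false, r')) = some none) :
    ∃ τ, S.SwapsAt τ (.inr (A.creditor r)) (.inr (false, r')) ∧
      C.UncreditedAt (.inr (false, r')) τ := by
  obtain ⟨τ, hs⟩ := (A.clean hr).everSwap_of_gadget_eq_ord (A.time_le hr) (A.pos_time hr)
    (A.blank hr hr') hord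
  exact ⟨τ, hs, A.uncreditedAt_of_swapsAt hr hr' hne hs⟩

/-- The ordering token of rank `r` enters the foreign slot gadget `g` by an uncredited move before
time `τ` and stays there until it is first credited. -/
def ParkedFrom (A : C.Cohort) (r : Fin N) (g : Fin m) (τ : ℕ) : Prop :=
  (∃ a < τ, S.pos a (.inr (false, r)) = .root ∧ C.UncreditedAt (.inr (false, r)) a) ∧
    ∀ t, τ ≤ t → t ≤ A.time r → S.gadget t (.inr (false, r)) = some (some g)

lemma parkedFrom (hr : r ∈ A.ranks) (hr₁ : r₁ ∈ A.ranks) (hne : r₁ ≠ r)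
    (hle : A.time r₁ ≤ A.time r)
    (hin : S.gadget (A.time r₁) (.inr (false, r)) = some (some g)) :
    A.ParkedFrom r g (A.time r₁) := by
  have hlen := A.time_le hr
  have hg : g ≠ S.slot r := by
    rintro rfl
    exact (A.isFirstCreditor hr).gadget_ne_slot (A.deficient hr) hle hin
  have hinit : S.gadget 0 (.inr (false, r)) ≠ some (some g) := fun h => by
    have := height_pos_of_gadget h
    rw [height_zero_ord] at this
    omega
  obtain ⟨a, -, ha, hroot, hstay⟩ := exists_last_entry (Nat.zero_le _) (A.time_le hr₁) hinit hin
  have henter := (A.isFirstCreditor hr).uncreditedAt_of_enter hg ha hle hroot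
    (hstay _ a.lt_succ_self ha) (A.pos_time hr₁) (A.partner_ne hr₁ hne)
  refine ⟨⟨a, ha, hroot, henter⟩, fun t ht => ?_⟩
  induction t, ht using Nat.le_induction with
  | base => exact fun _ => hin
  | succ t ht ih =>
    intro ht'
    refine (gadget_succ_or_pos_eq_root (by omega) (ih (by omega))).resolve_right fun hexit => ?_
    have hexit' := (A.isFirstCreditor hr).uncreditedAt_of_exit hg ht' (ih (by omega)) hexit
    have := (A.deficient hr).uncreditedAt_unique (by omega) (by omega) henter hexit'
    omega

/- Otherwise the token swaps with the creditor of `r₁` without being credited, and then it either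
does the same with the creditor of `r₂` or enters a foreign slot gadget uncredited. -/
lemma gadget_time_ne_ord (hr : r ∈ A.ranks) (hr₁ : r₁ ∈ A.ranks) (hr₂ : r₂ ∈ A.ranks)
    (hne₁ : r₁ ≠ r) (hne₂ : r₂ ≠ r) (hne : r₁ ≠ r₂) (h₁₂ : A.time r₁ ≤ A.time r₂)
    (h₂ : A.time r₂ ≤ A.time r) : S.gadget (A.time r₁) (.inr (false, r)) ≠ some none := by
  intro hord
  have hlen := A.time_le hr₂
  have hcreditor := A.isFirstCreditor hr
  obtain ⟨t₁, hs₁, hu₁⟩ := A.exists_uncreditedAt_of_gadget_eq_ord hr₁ hr hne₁ hord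
  rcases hx : S.gadget (A.time r₂) (.inr (false, r)) with _ | _ | g
  · exact A.pos_time_ne hr₂ hr (gadget_eq_none.1 hx)
  · obtain ⟨t₂, hs₂, hu₂⟩ := A.exists_uncreditedAt_of_gadget_eq_ord hr₂ hr hne₂ hx
    obtain rfl := (A.deficient hr).uncreditedAt_unique hs₁.1 hs₂.1 hu₁ hu₂
    exact hne (A.creditor_injOn hr₁ hr₂ (by simpa using hs₁.symm.eq_of_swapsAt hs₂.symm))
  · have hg : g ≠ S.slot r := by
      rintro rfl
      exact hcreditor.gadget_ne_slot (A.deficient hr) h₂ hx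
    obtain ⟨a, ha₁, ha₂, hroot, hstay⟩ := exists_last_entry h₁₂ hlen (by simp [hord]) hx
    have hu₂ := hcreditor.uncreditedAt_of_enter hg ha₂ h₂ hroot (hstay _ a.lt_succ_self ha₂)
      (A.pos_time hr₂) (A.partner_ne hr₂ hne₂)
    obtain rfl := (A.deficient hr).uncreditedAt_unique hs₁.1 (by omega) hu₁ hu₂
    have hroot' := (A.clean hr₁).pos_eq_root_of_mem_Icc ha₁ t₁.le_succ hs₁.1 (A.pos_time hr₁)
      (hs₁.pos_succ_left.trans hroot)
    exact hs₁.ne (eq_of_pos_eq_root hs₁.1.le hroot' hroot)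

lemma exists_parkedFrom (hr : r ∈ A.ranks) (hr₁ : r₁ ∈ A.ranks) (hr₂ : r₂ ∈ A.ranks)
    (hne₁ : r₁ ≠ r) (hne₂ : r₂ ≠ r) (hne : r₁ ≠ r₂) (h₁₂ : A.time r₁ ≤ A.time r₂)
    (h₂ : A.time r₂ ≤ A.time r) : ∃ g, A.ParkedFrom r g (A.time r₁) := by
  rcases hx : S.gadget (A.time r₁) (.inr (false, r)) with _ | _ | g
  · exact absurd (gadget_eq_none.1 hx) (A.pos_time_ne hr₁ hr)
  · exact absurd hx (A.gadget_time_ne_ord hr hr₁ hr₂ hne₁ hne₂ hne h₁₂ h₂)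
  · exact ⟨g, A.parkedFrom hr hr₁ hne₁ (h₁₂.trans h₂) hx⟩

lemma ParkedFrom.slot_creditor (h : A.ParkedFrom r g τ) (hr : r ∈ A.ranks) (hτ : τ ≤ A.time r) :
    S.slot (A.creditor r).2 = g := by
  have hblank := (C.blankAt (A.clean hr)).2
  rw [(A.isFirstCreditor hr).2.1, show S.gadget (C.time (A.creditor r)) _ = _ from h.2 _ hτ le_rfl]
    at hblank
  exact (by simpa using hblank : g = _).symm

lemma ParkedFrom.not_everSwap (h : A.ParkedFrom r g (A.time r₁)) (hr : r ∈ A.ranks)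
    (hr₁ : r₁ ∈ A.ranks) (hr₂ : r₂ ∈ A.ranks) (hne₁ : r₂ ≠ r₁) (hne : r₂ ≠ r)
    (h₁₂ : A.time r₁ ≤ A.time r₂) :
    ¬ S.EverSwap (.inr (A.creditor r₂)) (.inr (false, r)) := by
  rintro ⟨t, hs⟩
  have hlen := A.time_le hr₁
  obtain ⟨a, ha, hroot, hu⟩ := h.1
  obtain rfl := (A.deficient hr).uncreditedAt_unique hs.1 (by omega)
    (A.uncreditedAt_of_swapsAt hr₂ hr hne hs) hu
  have hroot₂ := (A.clean hr₂).pos_eq_root_of_mem_Icc ha h₁₂ (A.time_le hr₂)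
    (hs.pos_succ_left.trans hroot) (A.pos_time hr₂)
  exact hne₁ (A.creditor_injOn hr₂ hr₁
    (by simpa using eq_of_pos_eq_root hlen hroot₂ (A.pos_time hr₁)))

/- When the first of the tokens parked in `g` is credited, the others are blank tokens that its
creditor never swaps with, so there is at most one of them. -/
lemma card_le_two_of_parkedFrom {B : Finset (Fin N)} (hB : B ⊆ A.ranks) (hr₁ : r₁ ∈ A.ranks)
    (hr₁B : r₁ ∉ B) (hmin : ∀ r ∈ B, A.time r₁ ≤ A.time r)
    (h : ∀ r ∈ B, A.ParkedFrom r g (A.time r₁)) : B.card ≤ 2 := by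
  by_contra! hcard
  obtain ⟨r₂, hr₂, hr₂min⟩ := Finset.exists_min_image B A.time (Finset.card_pos.1 (by omega))
  obtain ⟨r, hr, r', hr', hne⟩ := Finset.one_lt_card.1
    (show 1 < (B.erase r₂).card by rw [Finset.card_erase_of_mem hr₂]; omega)
  have hne₂ : r₂ ≠ r₁ := ne_of_mem_of_not_mem hr₂ hr₁B
  have hslot := (h r₂ hr₂).slot_creditor (hB hr₂) (hmin r₂ hr₂)
  have hunswapped : ∀ r ∈ B.erase r₂, S.BlankAt (A.time r₂) (A.creditor r₂).2 (.inr (false, r)) ∧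
      ¬ S.EverSwap (.inr (A.creditor r₂)) (.inr (false, r)) := fun r hr => by
    obtain ⟨hner, hr⟩ := Finset.mem_erase.1 hr
    exact ⟨⟨A.blank (hB hr₂) (hB hr), .inr (hslot ▸ (h r hr).2 _ (hmin r₂ hr₂) (hr₂min r hr))⟩,
      (h r hr).not_everSwap (hB hr) hr₁ (hB hr₂) hne₂ hner.symm (hmin r₂ hr₂)⟩
  have heq := (A.clean (hB hr₂)).blank_unique (A.time_le (hB hr₂)) (A.pos_time (hB hr₂))
    (hunswapped r hr).1 (hunswapped r hr).2 (hunswapped r' hr').1 (hunswapped r' hr').2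
  exact hne (by simpa using heq)

lemma card_ranks_le (A : C.Cohort) : A.ranks.card ≤ 2 * m + 2 := by
  classical
  by_contra! hcard
  obtain ⟨r₁, hr₁, hmin₁⟩ :=
    Finset.exists_min_image A.ranks A.time (Finset.card_pos.1 (by omega))
  have hcard₁ := Finset.card_erase_of_mem hr₁
  obtain ⟨r₂, hr₂', hmin₂⟩ :=
    Finset.exists_min_image (A.ranks.erase r₁) A.time (Finset.card_pos.1 (by omega))
  obtain ⟨hne, hr₂⟩ := Finset.mem_erase.1 hr₂'
  set B := (A.ranks.erase r₁).erase r₂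
  have hcardB : B.card = A.ranks.card - 2 := by rw [Finset.card_erase_of_mem hr₂', hcard₁]; omega
  have hmemB : ∀ r ∈ B, r₂ ≠ r ∧ r₁ ≠ r ∧ r ∈ A.ranks := fun r hr => by
    simp only [B, Finset.mem_erase] at hr
    exact ⟨Ne.symm hr.1, Ne.symm hr.2.1, hr.2.2⟩
  have hparked : ∀ r, ∃ g : Fin m, r ∈ B → A.ParkedFrom r g (A.time r₁) := fun r => by
    by_cases hr : r ∈ B
    · obtain ⟨hne₂, hne₁, hrA⟩ := hmemB r hr
      obtain ⟨g, hg⟩ := A.exists_parkedFrom hrA hr₁ hr₂ hne₁ hne₂ hne.symm (hmin₁ r₂ hr₂)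
        (hmin₂ r (Finset.mem_of_mem_erase hr))
      exact ⟨g, fun _ => hg⟩
    · exact ⟨S.slot r, fun h => absurd h hr⟩
  choose g hg using hparked
  obtain ⟨i, -, hi⟩ := Finset.exists_lt_card_fiber_of_mul_lt_card_of_maps_to
    (s := B) (t := (Finset.univ : Finset (Fin m))) (f := g) (n := 2)
    (fun a _ => Finset.mem_univ _) (by rw [hcardB, Finset.card_univ, Fintype.card_fin]; omega)
  refine hi.not_ge (A.card_le_two_of_parkedFrom (g := i) (fun r hr => ?_) hr₁ ?_
    (fun r hr => hmin₁ r ?_) fun r hr => ?_)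
  · exact (hmemB r (Finset.mem_filter.1 hr).1).2.2
  · exact fun hr => (hmemB r₁ (Finset.mem_filter.1 hr).1).2.1 rfl
  · exact (hmemB r (Finset.mem_filter.1 hr).1).2.2
  · obtain ⟨hrB, rfl⟩ := Finset.mem_filter.1 hr
    exact hg r hrB

end Cohort

variable {seg : Fin N → ℕ}

lemma blank_of_seg_eq (hmono : Monotone seg) (hslot : ∀ r r', seg r = seg r' → S.slot r = S.slot r')
    {ρ : Fin N} (hseg : seg r = seg r') (h : S.Blank ρ (.inr (false, r))) :
    S.Blank ρ (.inr (false, r')) := by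
  simp only [Blank] at h ⊢
  rw [← hslot _ _ hseg]
  refine ⟨lt_of_not_ge fun hle => h.2 (hslot _ _ ?_), h.2⟩
  have := hmono h.1.le
  have := hmono hle
  omega

lemma card_le_of_seg_eq (hmono : Monotone seg)
    (hslot : ∀ r r', seg r = seg r' → S.slot r = S.slot r') {A : Finset (Fin N)}
    (hseg : ∀ r ∈ A, ∀ r' ∈ A, seg r = seg r') (hd : ∀ r ∈ A, C.Deficient (false, r)) :
    A.card ≤ 2 * m + 2 := by
  have hcreditor : ∀ r, ∃ v, r ∈ A → C.IsFirstCreditor v r := fun r => by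
    by_cases hr : r ∈ A
    · obtain ⟨v, hv⟩ := (hd r hr).exists_isFirstCreditor
      exact ⟨v, fun _ => hv⟩
    · exact ⟨(true, r), fun h => absurd h hr⟩
  choose v hv using hcreditor
  refine Cohort.card_ranks_le (C := C) ⟨A, v, hd _, hv _, fun {r r'} hr hr' => ?_⟩
  have hblank := (C.blankAt (hv r hr).1).1
  rw [(hv r hr).2.1] at hblank
  exact blank_of_seg_eq hmono hslot (hseg r hr r' hr') hblank

open Classical in
lemma card_deficient_ord_le (C : Crediting S) (hmono : Monotone seg)
    (hslot : ∀ r r', seg r = seg r' → S.slot r = S.slot r') {L : ℕ} (hL : ∀ r, seg r < L) :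
    (Finset.univ.filter fun r => C.Deficient (false, r)).card ≤ L * (2 * m + 2) := by
  rw [mul_comm, ← Finset.card_range L]
  refine Finset.card_le_mul_card_image_of_maps_to (f := seg)
    (fun r _ => Finset.mem_range.2 (hL r)) _ fun l _ => card_le_of_seg_eq (C := C) hmono hslot ?_ ?_
  · intro r hr r' hr'
    rw [(Finset.mem_filter.1 hr).2, (Finset.mem_filter.1 hr').2]
  · intro r hr
    simpa using (Finset.mem_filter.1 hr).1

open Classical in
/-- The set of deficient tokens. -/
noncomputable def deficient (C : Crediting S) : Finset (Bool × Fin N) :=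
  Finset.univ.filter C.Deficient

lemma card_deficient_le (C : Crediting S) (hmono : Monotone seg)
    (hslot : ∀ r r', seg r = seg r' → S.slot r = S.slot r') {L : ℕ} (hL : ∀ r, seg r < L) :
    C.deficient.card ≤ 2 * (L * (2 * m + 2)) := by
  classical
  have hord := C.card_deficient_ord_le hmono hslot hL
  have hslotTok := C.rev.card_deficient_ord_le (seg := fun r => L - 1 - seg r.rev) (L := L)
    (fun r r' h => Nat.sub_le_sub_left (hmono (Fin.rev_le_rev.2 h)) _)
    (fun r r' h => hslot _ _ (by have := hL r.rev; have := hL r'.rev; omega))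
    (fun r => by have := hL r.rev; omega)
  have hsub : C.deficient ⊆
      ((Finset.univ.filter fun r => C.Deficient (false, r)).image fun r => (false, r)) ∪
      ((Finset.univ.filter fun r => C.rev.Deficient (false, r)).image fun r => (true, r.rev)) := by
    rintro ⟨b, r⟩ h
    have h : C.Deficient (b, r) := by simpa [deficient] using h
    simp only [Finset.mem_union, Finset.mem_image, Finset.mem_filter, Finset.mem_univ, true_and]
    cases b
    · exact .inl ⟨r, h, rfl⟩
    · exact .inr ⟨r.rev, deficient_rev.2 (by simpa using h), by simp⟩
  calc C.deficient.card ≤ _ := Finset.card_le_card hsub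
    _ ≤ _ := Finset.card_union_le _ _
    _ ≤ _ := add_le_add Finset.card_image_le Finset.card_image_le
    _ ≤ 2 * (L * (2 * m + 2)) := by omega

end Crediting

/-! ### Counting uncredited moves -/

namespace SwapHistory

variable {m N : ℕ} {S : SwapHistory m N} {τ : ℕ}

open Classical in
lemma card_filter_movesAt (hτ : τ < S.len) :
    (Finset.univ.filter fun z => S.MovesAt z τ).card = 2 := by
  obtain ⟨p, q, hpq⟩ := S.exists_swap τ hτ
  have hs : S.SwapsAt τ p q := ⟨hτ, hpq⟩
  rw [show (Finset.univ.filter fun z => S.MovesAt z τ) = {p, q} from ?_, Finset.card_pair hs.ne]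
  ext z
  simp only [Finset.mem_filter, Finset.mem_univ, true_and, Finset.mem_insert, Finset.mem_singleton]
  refine ⟨fun h => ?_, ?_⟩
  · by_contra! hne
    exact h (hs.pos_succ_of_ne hne.1 hne.2)
  · rintro (rfl | rfl)
    · exact hs.pos_succ_ne
    · exact hs.symm.pos_succ_ne

lemma sum_card_moves (S : SwapHistory m N) : ∑ z, (S.moves z).card = 2 * S.len := by
  classical
  calc ∑ z, (S.moves z).card
      = ∑ z, ∑ τ ∈ Finset.range S.len, if S.MovesAt z τ then 1 else 0 := by
        simp only [moves, Finset.card_filter]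
    _ = ∑ τ ∈ Finset.range S.len, (Finset.univ.filter fun z => S.MovesAt z τ).card := by
        rw [Finset.sum_comm]; simp only [Finset.card_filter]
    _ = 2 * S.len := by
        rw [Finset.sum_const_nat fun τ hτ => card_filter_movesAt (Finset.mem_range.1 hτ),
          Finset.card_range, mul_comm]

open Classical in
/-- The set of unclean tokens. -/
noncomputable def unclean (S : SwapHistory m N) : Finset (Bool × Fin N) :=
  Finset.univ.filter fun v => ¬ S.Clean v.1 v.2

end SwapHistory

namespace Crediting

open SwapHistory

variable {m N : ℕ} {S : SwapHistory m N} {C : Crediting S} {v : Bool × Fin N} {b : Bool}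
  {r : Fin N} {z : RankTok m N} {i : Fin m} {η τ n : ℕ}

/- Every clean token swaps with its partner exactly once. -/
lemma sum_card_creditedMoves (C : Crediting S) :
    ∑ z, (C.creditedMoves z).card + S.unclean.card = 2 * N := by
  classical
  have hbij : ∑ z, (C.creditedMoves z).card =
      (Finset.univ.filter fun v : Bool × Fin N => S.Clean v.1 v.2).card := by
    rw [← Finset.card_sigma]
    symm
    choose swapTime hswap using
      fun v (hv : v ∈ Finset.univ.filter fun v : Bool × Fin N => S.Clean v.1 v.2) =>
        C.everSwap (Finset.mem_filter.1 hv).2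
    refine Finset.card_bij (fun v hv => ⟨C.partner v, swapTime v hv⟩) ?_ ?_ ?_
    · intro v hv
      simp only [Finset.mem_sigma, Finset.mem_univ, true_and, creditedMoves, Finset.mem_filter,
        Finset.mem_range]
      exact ⟨(hswap v hv).1, v, (Finset.mem_filter.1 hv).2, rfl, hswap v hv⟩
    · intro v hv w hw heq
      have hs := hswap v hv
      simp only [Sigma.mk.injEq, heq_eq_eq] at heq
      rw [heq.1, heq.2] at hs
      simpa using hs.symm.eq_of_swapsAt (hswap w hw).symm
    · rintro ⟨z, τ⟩ h
      simp only [Finset.mem_sigma, Finset.mem_univ, true_and, creditedMoves,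
        Finset.mem_filter] at h
      obtain ⟨v, hclean, rfl, hs⟩ := h.2
      have hv : v ∈ Finset.univ.filter fun v : Bool × Fin N => S.Clean v.1 v.2 := by
        simpa using hclean
      exact ⟨v, hv, by rw [(hswap v hv).time_eq hs]⟩
  rw [hbij, unclean, Finset.card_filter_add_card_filter_not]
  simp

/-- A clean token is typical if its partner is the only token blank for it that it swaps with. -/
def Typical (C : Crediting S) (v : Bool × Fin N) : Prop :=
  S.Clean v.1 v.2 ∧ ∀ z, S.Blank v.2 z → S.EverSwap (.inr v) z → z = C.partner v

/-- The steps at which the token `z` makes an uncredited move. -/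
noncomputable def uncreditedMoves (C : Crediting S) (z : RankTok m N) : Finset ℕ :=
  S.extraMoves z \ C.creditedMoves z

lemma mem_uncreditedMoves :
    τ ∈ C.uncreditedMoves z ↔ τ < S.len ∧ C.UncreditedAt z τ := by
  classical
  simp only [uncreditedMoves, extraMoves, creditedMoves, UncreditedAt, Finset.mem_sdiff,
    Finset.mem_filter, Finset.mem_range]
  tauto

lemma card_uncreditedMoves_add_card_creditedMoves (C : Crediting S) (z : RankTok m N) :
    (C.uncreditedMoves z).card + (C.creditedMoves z).card = (S.extraMoves z).card :=
  Finset.card_sdiff_add_card_eq_card (C.creditedMoves_subset_extraMoves z)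

lemma card_uncreditedMoves_item_add_card_creditedMoves (C : Crediting S) (o : Option (Fin m)) :
    (C.uncreditedMoves (.inl o)).card + (C.creditedMoves (.inl o)).card =
      (S.moves (.inl o)).card :=
  C.card_uncreditedMoves_add_card_creditedMoves (.inl o)

lemma displacement_add_card_creditedMoves_add_card_uncreditedMoves_le (C : Crediting S)
    (v : Bool × Fin N) : S.displacement (.inr v) + (C.creditedMoves (.inr v)).card +
      (C.uncreditedMoves (.inr v)).card ≤ (S.moves (.inr v)).card := by
  have := displacement_add_card_extraMoves_le (S := S) v.1 v.2
  have := C.card_uncreditedMoves_add_card_creditedMoves (.inr v)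
  simp only [Prod.mk.eta] at *
  omega

open Classical in
lemma displacement_add_card_creditedMoves_add_le (C : Crediting S) (v : Bool × Fin N) :
    S.displacement (.inr v) + (C.creditedMoves (.inr v)).card +
        2 * (if v ∈ S.unclean then 1 else 0) ≤
      (S.moves (.inr v)).card + 2 * (if v ∈ C.deficient then 1 else 0) := by
  have := C.displacement_add_card_creditedMoves_add_card_uncreditedMoves_le v
  have hdef : v ∈ S.unclean → v ∉ C.deficient → ¬ ((S.moves (.inr v)).card : ℤ) ≤
      S.displacement (.inr v) + (C.creditedMoves (.inr v)).card + 1 := by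
    simp +contextual [unclean, deficient, Deficient]
  split_ifs <;> grind

lemma card_unclean_le (C : Crediting S)
    (hlen : (2 * S.len : ℤ) ≤ ∑ v, S.displacement (.inr v) + 2 * N + 2 * n) :
    S.unclean.card ≤ 2 * C.deficient.card + 2 * n := by
  classical
  have hmoves := S.sum_card_moves
  have hcredited := C.sum_card_creditedMoves
  have hitem := Finset.sum_le_sum fun o (_ : o ∈ Finset.univ) =>
    Nat.le.intro (Nat.add_comm _ _ ▸ C.card_uncreditedMoves_item_add_card_creditedMoves o)
  have htok := Finset.sum_le_sum fun v (_ : v ∈ Finset.univ) =>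
    C.displacement_add_card_creditedMoves_add_le v
  rw [Fintype.sum_sum_type] at hmoves hcredited
  simp only [Finset.sum_add_distrib, ← Finset.mul_sum, Finset.sum_ite_mem, Finset.univ_inter,
    Finset.sum_const, nsmul_eq_mul, mul_one] at htok
  zify at hmoves hcredited hitem ⊢
  linarith

lemma sum_card_uncreditedMoves_le (C : Crediting S)
    (hlen : (2 * S.len : ℤ) ≤ ∑ v, S.displacement (.inr v) + 2 * N + 2 * n) :
    ∑ z, (C.uncreditedMoves z).card ≤ S.unclean.card + 2 * n := by
  have hmoves := S.sum_card_moves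
  have hcredited := C.sum_card_creditedMoves
  have hitem := Finset.sum_congr rfl fun o (_ : o ∈ Finset.univ) =>
    C.card_uncreditedMoves_item_add_card_creditedMoves o
  have htok := Finset.sum_le_sum fun v (_ : v ∈ Finset.univ) =>
    C.displacement_add_card_creditedMoves_add_card_uncreditedMoves_le v
  rw [Fintype.sum_sum_type] at hmoves hcredited ⊢
  simp only [Finset.sum_add_distrib] at hitem htok
  zify at hmoves hcredited hitem ⊢
  linarith

lemma exists_uncreditedMoves_of_not_typical (hclean : S.Clean v.1 v.2) (h : ¬ C.Typical v) :
    ∃ z τ, τ ∈ C.uncreditedMoves z ∧ S.SwapsAt τ (.inr v) z := by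
  simp only [Typical, hclean, true_and, not_forall] at h
  obtain ⟨z, hb, ⟨τ, hs⟩, hne⟩ := h
  exact ⟨z, τ, mem_uncreditedMoves.2 ⟨hs.1, uncreditedAt_of_swapsAt hclean hb (Ne.symm hne) hs⟩, hs⟩

lemma card_le_of_forall_not_typical (A : Finset (Bool × Fin N)) (hA : ∀ v ∈ A, ¬ C.Typical v) :
    A.card ≤ S.unclean.card + ∑ z, (C.uncreditedMoves z).card := by
  classical
  suffices hclean : (A \ S.unclean).card ≤ ∑ z, (C.uncreditedMoves z).card by
    have := Finset.card_le_card_sdiff_add_card (s := A) (t := S.unclean)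
    omega
  rw [← Finset.card_sigma]
  refine Finset.card_le_card_of_forall_subsingleton
    (fun v (x : Σ _ : RankTok m N, ℕ) => S.SwapsAt x.2 (.inr v) x.1) (fun v hv => ?_)
    fun x _ v hv w hw => by simpa using hv.2.symm.eq_of_swapsAt hw.2.symm
  obtain ⟨hvA, hv⟩ := Finset.mem_sdiff.1 hv
  obtain ⟨z, τ, hτ, hs⟩ := exists_uncreditedMoves_of_not_typical
    (by simpa [unclean] using hv) (hA v hvA)
  exact ⟨⟨z, τ⟩, by simpa using hτ, hs⟩

/- At its crediting time a typical token sees at least two blank tokens, and at most one that it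
never swaps with: the count leaves no room for anything else in the gadgets it connects. -/
lemma Typical.exists_blankAt (h : C.Typical (b, r)) :
    ∃ e, S.BlankAt (C.time (b, r)) r e ∧ e ≠ C.partner (b, r) ∧
      ¬ S.EverSwap (.inr (b, r)) e ∧ S.gadget (C.time (b, r)) e = some (some (S.slot r)) ∧
      (∀ z, S.BlankAt (C.time (b, r)) r z → z = C.partner (b, r) ∨ z = e) ∧
      ∀ z, ¬ S.Blank r z → z ≠ .inr (b, r) → (S.gadget (C.time (b, r)) z = some none ∨
        S.gadget (C.time (b, r)) z = some (some (S.slot r))) := by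
  classical
  have hlen := C.time_le h.1
  have hroot := C.pos_time h.1
  have hcount := two_le_card_blankAt hlen hroot
  obtain ⟨e, he, hne⟩ := Finset.exists_mem_ne hcount.1 (C.partner (b, r))
  have he : S.BlankAt (C.time (b, r)) r e := by simpa using he
  have hns : ∀ z, S.BlankAt (C.time (b, r)) r z → z ≠ C.partner (b, r) →
      ¬ S.EverSwap (.inr (b, r)) z := fun z hz hn hs => hn (h.2 z hz.1 hs)
  have hall : ∀ z, S.BlankAt (C.time (b, r)) r z → z = C.partner (b, r) ∨ z = e :=
    fun z hz => or_iff_not_imp_left.2 fun hzc =>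
      h.1.blank_unique hlen hroot hz (hns z hz hzc) he (hns e he hne)
  refine ⟨e, he, hne, hns e he hne, he.2.resolve_left fun hord => ?_, hall, hcount.2 ?_⟩
  · exact hns e he hne (h.1.everSwap_of_gadget_eq_ord hlen hroot he.1 hord)
  · refine (Finset.card_le_card (t := {C.partner (b, r), e}) fun z hz => ?_).trans
      Finset.card_le_two
    simpa using hall z (by simpa using hz)

lemma CreditedAt.exists_ord_of_height_lt (h : C.CreditedAt z τ)
    (hdesc : S.height (τ + 1) z < S.height τ z) (hz : S.gadget τ z = some (some i)) :
    ∃ r, S.Clean false r ∧ S.slot r = i ∧ C.partner (false, r) = z ∧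
      S.SwapsAt τ (.inr (false, r)) z := by
  obtain ⟨⟨b, r⟩, hclean, hp, hs⟩ := h
  have hheight := hs.height_eq
  cases b
  · refine ⟨r, hclean, ?_, hp, hs⟩
    have hline := Clean.onLine hclean (show τ + 1 ≤ S.len from hs.1)
    rw [hs.pos_succ_left] at hline
    rcases hline with hu | ⟨d, hu⟩ | ⟨d, hu⟩ <;>
      simp only [gadget, hu, Vtx.gadget, Option.some.injEq, reduceCtorEq] at hz
    exact hz
  · have := hclean τ hs.1
    simp only [Contrary] at this
    omega

lemma extraMoveAt_of_gadget_eq (hz : ∀ b r, z = .inr (b, r) → i ≠ S.slot r)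
    (hmove : S.MovesAt z τ) (hin : S.gadget τ z = some (some i)) : S.ExtraMoveAt z τ := by
  rcases z with o | ⟨b, r⟩
  · exact hmove
  · refine ⟨hmove, .inl ⟨i, ?_, hz b r rfl⟩⟩
    simp only [gadget] at hin
    simp [edgeGadget, Vtx.edgeGadget, hin]

/- On its way from the nook to the root, `z` descends `k + 1` times; each of these moves is either
uncredited or a swap with an ordering token that credits it. -/
lemma exists_creditors_of_descent (C : Crediting S) (hητ : η ≤ τ) (hτ : τ < S.len)
    (hnook : S.pos η z = .nook i)
    (hstay : ∀ t, η ≤ t → t ≤ τ → S.gadget t z = some (some i)) (hroot : S.pos (τ + 1) z = .root)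
    (hz : ∀ b r, z = .inr (b, r) → i ≠ S.slot r) :
    ∃ A : Finset (Fin N), S.k + 1 ≤ A.card + (C.uncreditedMoves z).card ∧
      ∀ r ∈ A, S.Clean false r ∧ S.slot r = i ∧ C.partner (false, r) = z ∧
        ∃ t, η ≤ t ∧ t ≤ τ ∧ S.SwapsAt t (.inr (false, r)) z := by
  classical
  let descents := (Finset.Ico η (τ + 1)).filter fun t => S.height (t + 1) z < S.height t z
  have hcard : S.k + 1 ≤ descents.card := by
    have := sub_le_card_filter_Ico (f := fun t => - S.height t z)
      (P := fun t => S.height (t + 1) z < S.height t z) (show η ≤ τ + 1 by omega) fun t _ ht => by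
        have := height_succ (S := S) (τ := t) (by omega) z
        split_ifs <;> omega
    have hη : S.height η z = S.k + 1 := by simp [height, hnook, Vtx.height]
    rw [hη, height_eq_zero.2 hroot] at this
    change S.k + 1 ≤ ((Finset.Ico η (τ + 1)).filter _).card
    omega
  have hsplit : descents ⊆ descents.filter (C.CreditedAt z) ∪ C.uncreditedMoves z := fun t ht => by
    by_cases hc : C.CreditedAt z t
    · exact Finset.mem_union_left _ (Finset.mem_filter.2 ⟨ht, hc⟩)
    · simp only [descents, Finset.mem_filter, Finset.mem_Ico] at ht
      exact Finset.mem_union_right _ (mem_uncreditedMoves.2 ⟨by omega, extraMoveAt_of_gadget_eq hz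
        ((movesAt_iff_height_ne (by omega)).2 ht.2.ne) (hstay t ht.1.1 (by omega)), hc⟩)
  refine ⟨Finset.univ.filter fun r => S.Clean false r ∧ S.slot r = i ∧ C.partner (false, r) = z ∧
    ∃ t, η ≤ t ∧ t ≤ τ ∧ S.SwapsAt t (.inr (false, r)) z, ?_, fun r hr => by simpa using hr⟩
  refine hcard.trans ((Finset.card_le_card hsplit).trans ((Finset.card_union_le _ _).trans
    (Nat.add_le_add_right ?_ _)))
  refine Finset.card_le_card_of_forall_subsingleton
    (fun t r => S.SwapsAt t (.inr (false, r)) z) (fun t ht => ?_)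
    fun r _ s hs t ht => hs.2.time_eq ht.2
  simp only [descents, Finset.mem_filter, Finset.mem_Ico] at ht
  obtain ⟨r, hclean, hslot, hp, hs⟩ :=
    ht.2.exists_ord_of_height_lt ht.1.2 (hstay t ht.1.1.1 (by omega))
  exact ⟨r, by simpa using ⟨hclean, hslot, hp, t, ht.1.1.1, by omega, hs⟩, hs⟩

end Crediting

namespace SwapHistory

variable {m N : ℕ} {S : SwapHistory m N} {τ τ₁ τ₂ t θ : ℕ} {i : Fin m} {u w : Fin N}
  {z : RankTok m N}

lemma gadget_of_pos_eq_nook (h : S.pos τ z = .nook i) : S.gadget τ z = some (some i) := by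
  simp [gadget, h, Vtx.gadget]

lemma height_of_pos_eq_nook (h : S.pos τ z = .nook i) : S.height τ z = S.k + 1 := by
  simp [height, h, Vtx.height]

lemma gadget_ne_of_pos_eq_root (h : S.pos τ z = .root) : S.gadget τ z ≠ some (some i) := by
  simp [gadget_eq_none.2 h]

lemma exists_exit (h₁₂ : τ₁ ≤ τ₂) (h₂ : τ₂ ≤ S.len) (hin : S.gadget τ₁ z = some (some i))
    (hout : S.gadget τ₂ z ≠ some (some i)) :
    ∃ τ, τ₁ ≤ τ ∧ τ < τ₂ ∧ (∀ t, τ₁ ≤ t → t ≤ τ → S.gadget t z = some (some i)) ∧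
      S.pos (τ + 1) z = .root := by
  classical
  have hex : ∃ d, S.gadget (τ₁ + d) z ≠ some (some i) := ⟨τ₂ - τ₁, by rwa [Nat.add_sub_of_le h₁₂]⟩
  have hle : Nat.find hex ≤ τ₂ - τ₁ := Nat.find_min' hex (by rwa [Nat.add_sub_of_le h₁₂])
  obtain ⟨d, hd⟩ := Nat.exists_eq_succ_of_ne_zero fun h0 : Nat.find hex = 0 =>
    Nat.find_spec hex (by simpa [h0] using hin)
  have hstay : ∀ e ≤ d, S.gadget (τ₁ + e) z = some (some i) := fun e he =>
    not_not.1 (Nat.find_min hex (by omega))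
  refine ⟨τ₁ + d, by omega, by omega, fun t h h' => ?_, ?_⟩
  · simpa [Nat.add_sub_of_le h] using hstay (t - τ₁) (by omega)
  · exact (gadget_succ_or_pos_eq_root (by omega) (hstay d le_rfl)).resolve_left
      (by simpa [hd, add_assoc] using Nat.find_spec hex)

lemma SwapsAt.beyond_and_height_nonneg (hu : S.Clean false u)
    (hs : S.SwapsAt t (.inr (false, u)) z) (hg : S.gadget t z = some (some (S.slot u))) :
    S.Beyond (S.slot u) t (.inr (false, u)) z ∧ 0 ≤ S.height t (.inr (false, u)) := by
  have hheight := hs.height_eq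
  have hmono := hu t hs.1
  simp only [Contrary] at hmono
  have hpos := height_pos_of_gadget hg
  have hlt : S.height t (.inr (false, u)) < S.height t z := by omega
  exact ⟨⟨hg, hlt⟩, by omega⟩

lemma SwapsAt.beyond_of_le (hu : S.Clean false u) (hs : S.SwapsAt t (.inr (false, u)) z)
    (hg : S.gadget t z = some (some (S.slot u))) (h₀ : 0 ≤ S.height τ (.inr (false, u)))
    (hτ : τ ≤ t) : S.Beyond (S.slot u) τ (.inr (false, u)) z :=
  hu.beyond_of_le h₀ hs.ne (hs.beyond_and_height_nonneg hu hg).1 hτ hs.1.le fun s _ hst hs' => by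
    have := hs'.time_eq hs
    omega

/- Once `z` has reached the nook by letting the ordering token `u` pass below it, it is out of reach
of the ordering tokens of smaller rank, which are ahead of `u`. -/
lemma CrossesNook.lt_of_swapsAt (hu : S.Clean false u) (hw : S.Clean false w)
    (hslot : S.slot w = S.slot u) (hns : ¬ S.EverSwap (.inr (false, u)) z)
    (hne : (.inr (false, u)) ≠ z) (hc : S.CrossesNook u z θ) (ht : θ + 1 ≤ t)
    (hs : S.SwapsAt t (.inr (false, w)) z) (hg : S.gadget t z = some (some (S.slot u))) :
    u < w := by
  by_contra hnot
  obtain hwu | rfl := lt_or_eq_of_le (not_lt.1 hnot)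
  · have horder := hw.ord_height_lt_of_slot_eq hu hslot hwu hs.1.le
    have hzw : S.height t (.inr (false, w)) < S.height t z :=
      (hs.beyond_and_height_nonneg hw (hslot ▸ hg)).1.2
    have hcross := hc.height_eq.2
    have hzu : S.height (θ + 1) (.inr (false, u)) < S.height (θ + 1) z :=
      (hu.beyond_of_le (τ₀ := θ + 1) (by omega) hne ⟨hg, horder.trans hzw⟩ ht hs.1.le
        fun s _ _ hs' => hns ⟨s, hs'⟩).2
    rw [height_of_pos_eq_nook hc.2.2.2] at hzu
    omega
  · exact hns ⟨t, hs⟩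

end SwapHistory

namespace Crediting

open SwapHistory

variable {m N : ℕ} {S : SwapHistory m N} {C : Crediting S} {τ t : ℕ} {u v w : Fin N}
  {e z : RankTok m N}

lemma height_time (C : Crediting S) (hu : S.Clean false u) :
    S.height (C.time (false, u)) (.inr (false, u)) = 0 :=
  height_eq_zero.2 (C.pos_time (v := (false, u)) hu)

lemma time_lt_time (C : Crediting S) (hu : S.Clean false u) (hw : S.Clean false w) (huw : u < w) :
    C.time (false, u) < C.time (false, w) := by
  by_contra! hle
  have horder := hu.ord_height_lt huw (C.time_le (v := (false, u)) hu) (C.height_time hu).le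
  have hmono := hw.height_mono hle (C.time_le (v := (false, u)) hu)
  rw [C.height_time hu] at horder
  rw [C.height_time hw] at hmono
  omega

lemma time_le_of_swapsAt (C : Crediting S) (hu : S.Clean false u)
    (hs : S.SwapsAt t (.inr (false, u)) z) (hg : S.gadget t z = some (some (S.slot u))) :
    C.time (false, u) ≤ t := by
  by_contra! hlt
  have hmono := hu.height_mono (show t + 1 ≤ _ from hlt) (C.time_le (v := (false, u)) hu)
  rw [C.height_time hu, hs.height_eq.1] at hmono
  have := height_pos_of_gadget hg
  omega

lemma gadget_of_swapsAt (C : Crediting S) (hu : S.Clean false u)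
    (hs : S.SwapsAt t (.inr (false, u)) z) (hg : S.gadget t z = some (some (S.slot u)))
    (h₁ : C.time (false, u) ≤ τ) (h₂ : τ ≤ t) : S.gadget τ z = some (some (S.slot u)) := by
  refine (hs.beyond_of_le hu hg ?_ h₂).1
  rw [← C.height_time hu]
  exact hu.height_mono h₁ (h₂.trans hs.1.le)

/-- The token `e` is exempt for the ordering token `u`: besides the partner of `u` it is the only
blank token that `u` could meet at its crediting time, and it never swaps with `u`. -/
structure IsExempt (C : Crediting S) (u : Fin N) (e : RankTok m N) : Prop where
  blankAt : S.BlankAt (C.time (false, u)) u e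
  ne_partner : e ≠ C.partner (false, u)
  not_everSwap : ¬ S.EverSwap (.inr (false, u)) e
  gadget_eq : S.gadget (C.time (false, u)) e = some (some (S.slot u))
  eq_or_eq : ∀ z, S.BlankAt (C.time (false, u)) u z → z = C.partner (false, u) ∨ z = e

lemma Typical.exists_isExempt (h : C.Typical (false, u)) : ∃ e, C.IsExempt u e := by
  obtain ⟨e, hblank, hne, hns, hg, hall, -⟩ := h.exists_blankAt
  exact ⟨e, hblank, hne, hns, hg, hall⟩

lemma Typical.gadget_ne {i : Fin m} (h : C.Typical (false, u)) (hz : ¬ S.Blank u z)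
    (hne : z ≠ .inr (false, u)) (hi : S.slot u ≠ i) :
    S.gadget (C.time (false, u)) z ≠ some (some i) := by
  obtain ⟨-, -, -, -, -, -, hcrowd⟩ := h.exists_blankAt
  rcases hcrowd z hz hne with h | h <;> simp [h, hi]

lemma IsExempt.crossesNook_or_beyond (h : C.IsExempt u e) (hu : S.Clean false u) :
    (∃ θ, C.time (false, u) ≤ θ ∧ θ < S.len ∧ S.CrossesNook u e θ ∧ ∀ τ, C.time (false, u) ≤ τ →
      τ ≤ θ → S.gadget τ e = some (some (S.slot u))) ∨
    ∀ τ, C.time (false, u) ≤ τ → τ ≤ S.len → S.Beyond (S.slot u) τ (.inr (false, u)) e := by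
  rcases hu.crossesNook_or_beyond_of_not_everSwap (C.time_le (v := (false, u)) hu)
    (C.pos_time (v := (false, u)) hu) h.blankAt h.not_everSwap with ⟨θ, h₁, h₂, hc, hb⟩ | hb
  · exact .inl ⟨θ, h₁, h₂, hc, fun τ h h' => (hb τ h h').1⟩
  · exact .inr hb

/- The exempt token cannot be met by `u`, so the only way out is to hide in the nook while `u`
passes. -/
lemma IsExempt.exists_crossesNook (h : C.IsExempt u e) (hu : S.Clean false u) (hτ : τ < S.len)
    (hle : C.time (false, u) ≤ τ) (hroot : S.pos (τ + 1) e = .root) :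
    ∃ θ, C.time (false, u) ≤ θ ∧ θ < τ ∧ S.CrossesNook u e θ := by
  have hout : S.gadget (τ + 1) e ≠ some (some (S.slot u)) := gadget_ne_of_pos_eq_root hroot
  obtain ⟨θ, h₁, -, hc, hstay⟩ | hstay := h.crossesNook_or_beyond hu
  · refine ⟨θ, h₁, ?_, hc⟩
    by_contra! hθ
    obtain rfl : θ = τ := by
      by_contra
      exact hout (hstay (τ + 1) (by omega) (by omega))
    simp [hc.2.2.2] at hroot
  · exact absurd (hstay (τ + 1) (by omega) hτ).1 hout

lemma IsExempt.exists_crossesNook_and_exit {b : Bool} {r : Fin N}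
    (h : C.IsExempt u (.inr (b, r))) (hu : S.Clean false u) :
    ∃ θ τ, C.time (false, u) ≤ θ ∧ θ + 1 ≤ τ ∧ τ < S.len ∧ S.CrossesNook u (.inr (b, r)) θ ∧
      (∀ t, C.time (false, u) ≤ t → t ≤ τ → S.gadget t (.inr (b, r)) = some (some (S.slot u))) ∧
      S.pos (τ + 1) (.inr (b, r)) = .root := by
  obtain ⟨θ, h₁, h₂, hc, hstay⟩ | hstay := h.crossesNook_or_beyond hu
  · have hout : S.gadget S.len (.inr (b, r)) ≠ some (some (S.slot u)) := by
      have hb := h.blankAt.1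
      cases b
      · simpa [gadget_len_ord] using hb.2
      · simp [gadget, S.slot_final, Vtx.gadget]
    obtain ⟨τ, hθτ, hτ, hstay', hroot⟩ :=
      exists_exit (show θ + 1 ≤ S.len from h₂) le_rfl (gadget_of_pos_eq_nook hc.2.2.2) hout
    refine ⟨θ, τ, h₁, hθτ, hτ, hc, fun t ht₁ ht₂ => ?_, hroot⟩
    by_cases ht : t ≤ θ
    · exact hstay t ht₁ ht
    · exact hstay' t (by omega) ht₂
  · obtain ⟨-, -, o, ho⟩ :=
      (hstay S.len (C.time_le (v := (false, u)) hu) le_rfl).final h.blankAt.1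
    simp at ho

end Crediting

/-! ### Blocks of ranks -/

/-- The ranks of `S` are grouped into one block for each entry of the swap sequence `seq`. A block
consists of a big segment of `S.k` ranks assigned to the slot in `seq`, and of padding segments of
`pad` ranks for every slot. The number `err` bounds both the unclean tokens and the uncredited
moves of a crediting. -/
structure BlockStructure {m N : ℕ} (S : SwapHistory m N) where
  crediting : Crediting S
  seq : List (Fin m)
  pad : ℕ
  err : ℕ
  card_ranks : N = seq.length * (S.k + m * pad)
  card_padding : ∀ j < seq.length, ∀ i, (Finset.univ.filter fun r : Fin N =>
    r.val / (S.k + m * pad) = j ∧ S.k ≤ r.val % (S.k + m * pad) ∧ S.slot r = i).card = pad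
  seq_eq_slot : ∀ r : Fin N, r.val % (S.k + m * pad) < S.k →
    seq[r.val / (S.k + m * pad)]? = some (S.slot r)
  sum_card_uncreditedMoves_le : ∑ z, (crediting.uncreditedMoves z).card ≤ err
  card_unclean_le : S.unclean.card ≤ err
  two_mul_err_lt_pad : 2 * err < pad
  slack_lt : seq.length * (m * pad + (3 * err + seq.length * pad + seq.length * (err + pad))) +
    (3 * err + seq.length * pad + seq.length * (err + pad)) < S.k + 1

namespace BlockStructure

open SwapHistory

variable {m N : ℕ} {S : SwapHistory m N} (B : BlockStructure S) {τ η t : ℕ} {i : Fin m}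
  {o f : Option (Fin m)} {u v w : Fin N} {e : RankTok m N}

/-- The number of ranks in a block. -/
def blockLen : ℕ := S.k + m * B.pad

/-- The index of the block of a rank. -/
def block (u : Fin N) : ℕ := u.val / B.blockLen

/-- The position of a rank in its block. -/
def offset (u : Fin N) : ℕ := u.val % B.blockLen

/-- A bound for the number of irregular ordering tokens of one slot plus the number of uncredited
moves of an item. -/
def slack : ℕ := 3 * B.err + B.seq.length * B.pad + B.seq.length * (B.err + B.pad)

lemma blockLen_pos : 0 < B.blockLen := Nat.add_pos_left S.k_pos _

lemma blockLen_mul_block_add_offset (u : Fin N) :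
    B.blockLen * B.block u + B.offset u = u :=
  Nat.div_add_mod _ _

lemma block_lt (u : Fin N) : B.block u < B.seq.length := by
  rw [block, Nat.div_lt_iff_lt_mul B.blockLen_pos]
  exact u.2.trans_eq B.card_ranks

lemma block_mono (h : u ≤ v) : B.block u ≤ B.block v := Nat.div_le_div_right h

lemma slack_lt_k_succ : B.slack < S.k + 1 := (Nat.le_add_left _ _).trans_lt B.slack_lt

lemma card_filter_val_mem_Ico_le (A : Finset (Fin N)) (a b : ℕ) :
    (A.filter fun u => a ≤ u.val ∧ u.val < b).card ≤ b - a := by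
  rw [← Nat.card_Ico]
  exact Finset.card_le_card_of_injOn Fin.val (fun u hu => by simpa using (Finset.mem_filter.1 hu).2)
    Fin.val_injective.injOn

lemma card_filter_padding (u : Fin N) (i : Fin m) : (Finset.univ.filter fun r : Fin N =>
    B.block r = B.block u ∧ S.k ≤ B.offset r ∧ S.slot r = i).card = B.pad :=
  B.card_padding _ (B.block_lt u) i

lemma card_filter_padding_le (i : Fin m) :
    (Finset.univ.filter fun r => S.k ≤ B.offset r ∧ S.slot r = i).card ≤
      B.seq.length * B.pad := by
  have hblock := Finset.card_le_mul_card_image_of_maps_to (t := Finset.range B.seq.length)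
    (s := Finset.univ.filter fun r => S.k ≤ B.offset r ∧ S.slot r = i)
    (fun r _ => Finset.mem_range.2 (B.block_lt r)) B.pad fun j hj => by
      rw [Finset.filter_filter, ← B.card_padding j (Finset.mem_range.1 hj) i]
      exact (congrArg _ (Finset.filter_congr fun r _ => and_comm)).le
  rwa [Finset.card_range, mul_comm] at hblock

lemma card_filter_offset_lt_le (c : ℕ) :
    (Finset.univ.filter fun r => B.offset r < c).card ≤ B.seq.length * c := by
  rw [← Finset.card_range B.seq.length, ← Finset.card_range c, ← Finset.card_product]
  refine Finset.card_le_card_of_injOn (fun r => (B.block r, B.offset r)) (fun r hr => ?_)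
    fun r _ r' _ h => Fin.ext ?_
  · simpa [B.block_lt] using hr
  · simp only [Prod.mk.injEq] at h
    rw [← B.blockLen_mul_block_add_offset r, h.1, h.2, B.blockLen_mul_block_add_offset]

open Classical in
lemma card_filter_not_typical_le (A : Finset (Fin N)) :
    (A.filter fun r => ¬ B.crediting.Typical (false, r)).card ≤ 2 * B.err := by
  have := Crediting.card_le_of_forall_not_typical (C := B.crediting)
    ((A.filter fun r => ¬ B.crediting.Typical (false, r)).map ⟨_, Prod.mk_right_injective false⟩)
    fun v hv => by
      obtain ⟨r, hr, rfl⟩ := Finset.mem_map.1 hv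
      exact (Finset.mem_filter.1 hr).2
  have := B.card_unclean_le
  have := B.sum_card_uncreditedMoves_le
  rw [Finset.card_map] at *
  omega

lemma card_uncreditedMoves_le (z : RankTok m N) :
    (B.crediting.uncreditedMoves z).card ≤ B.err :=
  (Finset.single_le_sum (fun _ _ => Nat.zero_le _) (Finset.mem_univ z)).trans
    B.sum_card_uncreditedMoves_le

lemma exists_typical_padding (u : Fin N) (i : Fin m) :
    ∃ v, B.crediting.Typical (false, v) ∧ B.block v = B.block u ∧ S.k ≤ B.offset v ∧
      S.slot v = i := by
  classical
  by_contra! hnone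
  have hcard := B.card_filter_not_typical_le (Finset.univ.filter fun r : Fin N =>
    B.block r = B.block u ∧ S.k ≤ B.offset r ∧ S.slot r = i)
  rw [Finset.filter_true_of_mem, card_filter_padding] at hcard
  · exact absurd hcard (not_le.2 B.two_mul_err_lt_pad)
  · intro r hr
    simp only [Finset.mem_filter, Finset.mem_univ, true_and] at hr
    exact fun htyp => hnone r htyp hr.1 hr.2.1 hr.2.2

lemma card_filter_between_le (hblock : B.block v = B.block u)
    (hu : B.offset u < S.k) (i : Fin m) :
    (Finset.univ.filter fun r : Fin N => u < r ∧ r < v ∧ S.slot r = i).card + B.offset u <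
      S.k + B.pad := by
  classical
  have hsplit : (Finset.univ.filter fun r : Fin N => u < r ∧ r < v ∧ S.slot r = i) ⊆
      (Finset.univ.filter fun r : Fin N => u.val + 1 ≤ r ∧ r < B.blockLen * B.block u + S.k) ∪
      Finset.univ.filter fun r => B.block r = B.block u ∧ S.k ≤ B.offset r ∧ S.slot r = i := by
    intro r
    simp only [Finset.mem_filter, Finset.mem_univ, true_and, Finset.mem_union]
    rintro ⟨hur, hrv, hi⟩
    have hr : B.block r = B.block u :=
      le_antisymm (hblock ▸ B.block_mono hrv.le) (B.block_mono hur.le)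
    have := B.blockLen_mul_block_add_offset r
    rw [hr] at this
    rcases lt_or_ge (B.offset r) S.k with h | h
    · exact .inl ⟨hur, by omega⟩
    · exact .inr ⟨hr, h, hi⟩
  have := (Finset.card_le_card hsplit).trans (Finset.card_union_le _ _)
  have := card_filter_val_mem_Ico_le (N := N) Finset.univ (u.val + 1)
    (B.blockLen * B.block u + S.k)
  have := B.blockLen_mul_block_add_offset u
  rw [card_filter_padding] at *
  omega

/-- An ordering token is regular if it is typical and sits in a big segment, at some distance from
the start of the segment. -/
structure Regular (u : Fin N) : Prop where
  typical : B.crediting.Typical (false, u)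
  le_offset : B.err + B.pad ≤ B.offset u
  offset_lt : B.offset u < S.k

variable {B}

lemma Regular.clean (h : B.Regular u) : S.Clean false u := h.typical.1

/- The exempt token `(b, r)` leaves the slot gadget of `u` again, being credited by ordering tokens
of larger rank than `u`. Take a typical `v` in the padding of slot `r` in the block of `u`. At the
crediting time of `v`, all tokens not blank for `v` are in the ordering gadget or in slot gadget
`slot r`. So `(b, r)` has left before that time, and its creditors have ranks between `u` and `v`;
there are few of these unless `u` is near the start of its segment. -/
lemma offset_lt_of_isExempt {b : Bool} {r : Fin N} (hu : B.crediting.Typical (false, u))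
    (hoff : B.offset u < S.k) (he : B.crediting.IsExempt u (.inr (b, r))) :
    B.offset u < B.err + B.pad := by
  have hclean : S.Clean false u := hu.1
  have hslot : S.slot r ≠ S.slot u := by
    have := he.blankAt.1
    cases b <;> exact this.2
  obtain ⟨θ, τ, hθ, hθτ, hτ, hc, hstay, hroot⟩ := he.exists_crossesNook_and_exit hclean
  obtain ⟨A, hA, hcred⟩ := Crediting.exists_creditors_of_descent B.crediting hθτ hτ hc.2.2.2
    (fun t h => hstay t (by omega)) hroot (by simpa using hslot.symm)
  obtain ⟨v, hv, hblock, hoffv, hslotv⟩ := B.exists_typical_padding u (S.slot r)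
  have hvclean : S.Clean false v := hv.1
  have huv : u < v := by
    have := B.blockLen_mul_block_add_offset u
    have := B.blockLen_mul_block_add_offset v
    rw [hblock] at this
    omega
  have hout : S.gadget (B.crediting.time (false, v)) (.inr (b, r)) ≠ some (some (S.slot u)) := by
    refine hv.gadget_ne (fun hb => ?_) (fun heq => ?_) (by rwa [hslotv])
    · cases b <;> exact hb.2 hslotv.symm
    · simp only [Sum.inr.injEq, Prod.mk.injEq] at heq
      obtain ⟨rfl, rfl⟩ := heq
      exact lt_asymm he.blankAt.1.1 huv
  have hbetween : A ⊆ Finset.univ.filter fun w => u < w ∧ w < v ∧ S.slot w = S.slot u := by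
    intro w hw
    obtain ⟨hwclean, hwslot, -, t, hηt, htτ, hs⟩ := hcred w hw
    have hg := hstay t (by omega) htτ
    refine Finset.mem_filter.2 ⟨Finset.mem_univ _, hc.lt_of_swapsAt hclean hwclean hwslot
      he.not_everSwap he.blankAt.1.ne hηt hs hg, ?_, hwslot⟩
    by_contra hnot
    obtain hvw | rfl := lt_or_eq_of_le (not_lt.1 hnot)
    · have := B.crediting.time_lt_time hclean hvclean huv
      have := B.crediting.time_lt_time hvclean hwclean hvw
      have := B.crediting.time_le_of_swapsAt hwclean hs (by rwa [hwslot])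
      exact hout (hstay _ (by omega) (by omega))
    · exact hslot (hslotv.symm.trans hwslot)
  have := Finset.card_le_card hbetween
  have := B.card_filter_between_le hblock hoff (S.slot u)
  have := B.card_uncreditedMoves_le (.inr (b, r))
  omega

lemma Regular.exists_exempt_item (h : B.Regular u) : ∃ o, B.crediting.IsExempt u (.inl o) := by
  obtain ⟨o | ⟨b, r⟩, he⟩ := h.typical.exists_isExempt
  · exact ⟨o, he⟩
  · exact absurd (offset_lt_of_isExempt h.typical h.offset_lt he) (not_lt.2 h.le_offset)

open Classical in
lemma card_filter_not_regular_add_err_le (A : Finset (Fin N)) (hA : ∀ r ∈ A, S.slot r = i) :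
    (A.filter fun r => ¬ B.Regular r).card + B.err ≤ B.slack := by
  have hsplit : (A.filter fun r => ¬ B.Regular r) ⊆
      (A.filter fun r => ¬ B.crediting.Typical (false, r)) ∪
      ((Finset.univ.filter fun r => S.k ≤ B.offset r ∧ S.slot r = i) ∪
        Finset.univ.filter fun r => B.offset r < B.err + B.pad) := by
    intro r hr
    simp only [Finset.mem_union, Finset.mem_filter, Finset.mem_univ, true_and] at hr ⊢
    have hreg := hr.2
    contrapose! hreg
    exact ⟨hreg.1 hr.1, hreg.2.2, not_le.1 fun hle => hreg.2.1 hle (hA r hr.1)⟩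
  have := (Finset.card_le_card hsplit).trans ((Finset.card_union_le _ _).trans
    (Nat.add_le_add_left (Finset.card_union_le _ _) _))
  have := B.card_filter_not_typical_le A
  have := B.card_filter_padding_le i
  have := B.card_filter_offset_lt_le (B.err + B.pad)
  unfold slack
  omega

end BlockStructure

/-! ### Items leaving slot gadgets -/

namespace SwapHistory

variable {m N : ℕ} {S : SwapHistory m N} {τ η : ℕ} {i : Fin m} {o : Option (Fin m)}

/-- At step `τ` the item `o` leaves slot gadget `i`, having last been at its nook at time `η`. -/
structure LeavesAt (S : SwapHistory m N) (i : Fin m) (o : Option (Fin m)) (η τ : ℕ) : Prop where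
  le : η ≤ τ
  lt_len : τ < S.len
  pos_nook : S.pos η (.inl o) = .nook i
  gadget_eq : ∀ t, η ≤ t → t ≤ τ → S.gadget t (.inl o) = some (some i)
  pos_root : S.pos (τ + 1) (.inl o) = .root
  pos_ne_nook : ∀ t, η < t → t ≤ τ → S.pos t (.inl o) ≠ .nook i

lemma exists_leavesAt (hητ : η ≤ τ) (hτ : τ < S.len) (hnook : S.pos η (.inl o) = .nook i)
    (hstay : ∀ t, η ≤ t → t ≤ τ → S.gadget t (.inl o) = some (some i))
    (hroot : S.pos (τ + 1) (.inl o) = .root) : ∃ η', η ≤ η' ∧ S.LeavesAt i o η' τ := by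
  classical
  obtain ⟨η', hη', hmax⟩ := Finset.exists_max_image
    ((Finset.Icc η τ).filter fun t => S.pos t (.inl o) = .nook i) id
    ⟨η, by simpa [hητ] using hnook⟩
  simp only [Finset.mem_filter, Finset.mem_Icc, id] at hη' hmax
  refine ⟨η', hη'.1.1, hη'.1.2, hτ, hη'.2, fun t ht => hstay t (hη'.1.1.trans ht), hroot,
    fun t ht htτ hpos => ?_⟩
  exact absurd (hmax t ⟨⟨by omega, htτ⟩, hpos⟩) (not_le.2 ht)

end SwapHistory

namespace BlockStructure

open SwapHistory

variable {m N : ℕ} {S : SwapHistory m N} {B : BlockStructure S} {τ η t : ℕ} {i : Fin m}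
  {o f : Option (Fin m)} {u w : Fin N}

lemma exists_regular_creditors (B : BlockStructure S) (h : S.LeavesAt i o η τ) :
    ∃ A : Finset (Fin N), S.k + 1 ≤ A.card + B.slack ∧ ∀ r ∈ A, B.Regular r ∧ S.slot r = i ∧
      B.crediting.partner (false, r) = .inl o ∧
      ∃ t, η ≤ t ∧ t ≤ τ ∧ S.SwapsAt t (.inr (false, r)) (.inl o) := by
  classical
  obtain ⟨A, hA, hcred⟩ := Crediting.exists_creditors_of_descent B.crediting h.le h.lt_len
    h.pos_nook h.gadget_eq h.pos_root (by simp)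
  refine ⟨A.filter B.Regular, ?_, fun r hr => ?_⟩
  · have := A.card_filter_add_card_filter_not B.Regular
    have := B.card_filter_not_regular_add_err_le A fun r hr => (hcred r hr).2.1
    have := B.card_uncreditedMoves_le (.inl o)
    omega
  · rw [Finset.mem_filter] at hr
    exact ⟨hr.2, (hcred r hr.1).2⟩

lemma gadget_of_time_le (h : S.LeavesAt (S.slot u) o η τ) (hu : S.Clean false u)
    (hs : S.SwapsAt t (.inr (false, u)) (.inl o)) (hηt : η ≤ t) (htτ : t ≤ τ) {s : ℕ}
    (hus : B.crediting.time (false, u) ≤ s) (hsτ : s ≤ τ) :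
    S.gadget s (.inl o) = some (some (S.slot u)) := by
  rcases le_total s t with hst | hts
  · exact B.crediting.gadget_of_swapsAt hu hs (h.gadget_eq t hηt htτ) hus hst
  · exact h.gadget_eq s (by omega) hsτ

/- An exempt `o` must have been in the nook while `w` passed, hence before time `η`. The ordering
token `u`, being ahead of `w`, was then already out of its reach. -/
lemma not_isExempt_of_swapsAt (h : S.LeavesAt (S.slot u) o η τ) (hu : S.Clean false u)
    (hs : S.SwapsAt t (.inr (false, u)) (.inl o)) (hηt : η ≤ t) (htτ : t ≤ τ)
    (hw : S.Clean false w) (huw : u < w) (hslot : S.slot w = S.slot u)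
    (hwτ : B.crediting.time (false, w) ≤ τ) : ¬ B.crediting.IsExempt w (.inl o) := by
  intro hexempt
  obtain ⟨θ, -, hθτ, hc⟩ := hexempt.exists_crossesNook hw h.lt_len hwτ h.pos_root
  have hnook : S.pos (θ + 1) (.inl o) = .nook (S.slot u) := hslot ▸ hc.2.2.2
  have hθη : θ + 1 ≤ η := by
    by_contra! hlt
    exact h.pos_ne_nook _ hlt hθτ hnook
  have horder := hu.ord_height_lt_of_slot_eq hw hslot.symm huw
    (show θ + 1 ≤ S.len from hθτ.trans h.lt_len)
  have hcross := hc.height_eq.2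
  have hbelow : S.height (θ + 1) (.inr (false, u)) < S.height (θ + 1) (.inl o) :=
    (hs.beyond_of_le hu (h.gadget_eq t hηt htτ) (by omega) (hθη.trans hηt)).2
  rw [height_of_pos_eq_nook hnook] at hbelow
  omega

/- Otherwise `f` is credited, while leaving, by some `w` behind `u`. At the crediting time of `w`,
the item `o` is still in the slot gadget, so that it is the exempt token of `w`. -/
lemma exempt_stays (h : S.LeavesAt (S.slot u) o η τ) (hu : B.Regular u)
    (hs : S.SwapsAt t (.inr (false, u)) (.inl o)) (hηt : η ≤ t) (htτ : t ≤ τ)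
    (hf : B.crediting.IsExempt u (.inl f)) (hfo : f ≠ o) {s : ℕ}
    (hus : B.crediting.time (false, u) ≤ s) (hsτ : s ≤ τ + 1) :
    S.gadget s (.inl f) = some (some (S.slot u)) := by
  by_contra hexit
  have hlen := h.lt_len
  obtain ⟨θ, -, -, hc, hstay⟩ | hstay := hf.crossesNook_or_beyond hu.clean
  swap
  · exact hexit (hstay s hus (by omega)).1
  have hθs : θ < s := by
    by_contra! hle
    exact hexit (hstay s hus hle)
  obtain ⟨l, hθl, hls, hstay', hroot⟩ :=
    exists_exit (show θ + 1 ≤ s from hθs) (by omega) (gadget_of_pos_eq_nook hc.2.2.2) hexit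
  have hlτ : l < τ := by
    refine lt_of_le_of_ne (by omega) fun heq => hfo ?_
    exact Sum.inl_injective (eq_of_pos_eq_root (by omega) hroot (heq ▸ h.pos_root))
  obtain ⟨η', hη', hleaves⟩ := exists_leavesAt hθl (by omega) hc.2.2.2 hstay' hroot
  obtain ⟨A, hA, hcred⟩ := B.exists_regular_creditors hleaves
  have := B.slack_lt_k_succ
  obtain ⟨w, hw⟩ : A.Nonempty := Finset.card_pos.1 (by omega)
  obtain ⟨hwreg, hwslot, hpartner, t', ht', ht'l, hs'⟩ := hcred w hw
  have hg := hleaves.gadget_eq t' ht' ht'l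
  have huw : u < w := hc.lt_of_swapsAt hu.clean hwreg.clean hwslot hf.not_everSwap (by simp)
    (by omega) hs' hg
  have hwt := B.crediting.time_le_of_swapsAt hwreg.clean hs' (by rwa [hwslot])
  have ho := gadget_of_time_le h hu.clean hs hηt htτ
    (B.crediting.time_lt_time hu.clean hwreg.clean huw).le (by omega)
  obtain ⟨e, he⟩ := hwreg.exists_exempt_item
  obtain rfl : o = e := by
    refine Sum.inl_injective ((he.eq_or_eq (.inl o) ⟨trivial, .inr (hwslot ▸ ho)⟩).resolve_left ?_)
    exact fun heq => hfo (Sum.inl_injective (hpartner.symm.trans heq.symm))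
  exact not_isExempt_of_swapsAt h hu.clean hs hηt htτ hwreg.clean huw hwslot (by omega) he

end BlockStructure

/-! ### Exchanges of the free item token -/

/-- The free item tokens of a swap history that starts with item `i` at nook `i`, and the exchange
sequences up to each time. -/
structure FreeItemTrace {m N : ℕ} (S : SwapHistory m N) where
  free : ℕ → Option (Fin m)
  exchanges : ℕ → List (Fin m)
  pos_zero : ∀ i, S.pos 0 (.inl (some i)) = .nook i
  free_zero : free 0 = none
  free_succ_of_pos_eq_root : ∀ τ < S.len, ∀ o, S.pos (τ + 1) (.inl o) = .root → free (τ + 1) = o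
  free_succ_eq_self : ∀ τ < S.len, (∀ o, S.pos (τ + 1) (.inl o) ≠ .root) → free (τ + 1) = free τ
  exchanges_zero : exchanges 0 = []
  exchanges_succ_eq_self : ∀ τ < S.len, free (τ + 1) = free τ → exchanges (τ + 1) = exchanges τ
  exchanges_succ : ∀ τ < S.len, ∀ i, free (τ + 1) ≠ free τ →
    S.gadget τ (.inl (free (τ + 1))) = some (some i) → exchanges (τ + 1) = exchanges τ ++ [i]

namespace BlockStructure

open SwapHistory

variable {m N : ℕ} {S : SwapHistory m N} {B : BlockStructure S} {τ : ℕ} {i : Fin m}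
  {o : Option (Fin m)} {u : Fin N}

/-- The item `o` is anchored in slot gadget `i` at time `τ`: it has stayed there since a time at
which it was at the nook or was the exempt token of a regular ordering token. An anchored item can
leave the gadget only after a visit to the nook. -/
def Anchored (B : BlockStructure S) (τ : ℕ) (i : Fin m) (o : Option (Fin m)) : Prop :=
  ∃ η ≤ τ, (∀ t, η ≤ t → t ≤ τ → S.gadget t (.inl o) = some (some i)) ∧
    (S.pos η (.inl o) = .nook i ∨ ∃ u, B.Regular u ∧ S.slot u = i ∧
      B.crediting.IsExempt u (.inl o) ∧ B.crediting.time (false, u) = η)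

lemma Anchored.gadget_eq (h : B.Anchored τ i o) : S.gadget τ (.inl o) = some (some i) :=
  let ⟨_, hη, hstay, _⟩ := h
  hstay τ hη le_rfl

lemma Anchored.succ (h : B.Anchored τ i o) (hτ : τ < S.len)
    (hroot : S.pos (τ + 1) (.inl o) ≠ .root) :
    B.Anchored (τ + 1) i o := by
  have hnext := (gadget_succ_or_pos_eq_root hτ h.gadget_eq).resolve_right hroot
  obtain ⟨η, hη, hstay, hanchor⟩ := h
  refine ⟨η, by omega, fun t ht htτ => ?_, hanchor⟩
  obtain htτ | rfl := Nat.le_succ_iff.1 htτ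
  · exact hstay t ht htτ
  · exact hnext

lemma Anchored.exists_leavesAt (h : B.Anchored τ i o) (hτ : τ < S.len)
    (hroot : S.pos (τ + 1) (.inl o) = .root) : ∃ η, S.LeavesAt i o η τ := by
  obtain ⟨η, hη, hstay, hnook | ⟨u, hu, rfl, hexempt, rfl⟩⟩ := h
  · obtain ⟨η', -, hleaves⟩ := SwapHistory.exists_leavesAt hη hτ hnook hstay hroot
    exact ⟨η', hleaves⟩
  · obtain ⟨θ, hθ, hθτ, hc⟩ := hexempt.exists_crossesNook hu.clean hτ hη hroot
    obtain ⟨η', -, hleaves⟩ := SwapHistory.exists_leavesAt (show θ + 1 ≤ τ from hθτ) hτ hc.2.2.2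
      (fun t ht => hstay t (by omega)) hroot
    exact ⟨η', hleaves⟩

/-- The regular ordering token `u` of slot `i` witnesses that the item `o` is in slot gadget `i`
together with another item from the crediting time of `u` up to time `τ`. -/
structure Witnesses (B : BlockStructure S) (u : Fin N) (τ : ℕ) (i : Fin m)
    (o : Option (Fin m)) : Prop where
  regular : B.Regular u
  slot_eq : S.slot u = i
  time_le : B.crediting.time (false, u) ≤ τ
  gadget_eq : ∀ t, B.crediting.time (false, u) ≤ t → t ≤ τ → S.gadget t (.inl o) = some (some i)
  exists_exempt : ∃ f, f ≠ o ∧ B.crediting.IsExempt u (.inl f) ∧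
    ∀ t, B.crediting.time (false, u) ≤ t → t ≤ τ + 1 → S.gadget t (.inl f) = some (some i)

lemma Anchored.exists_witnesses (h : B.Anchored τ i o) (hτ : τ < S.len)
    (hroot : S.pos (τ + 1) (.inl o) = .root) :
    ∃ U : Finset (Fin N), S.k + 1 ≤ U.card + B.slack ∧ ∀ u ∈ U, B.Witnesses u τ i o := by
  obtain ⟨η, hleaves⟩ := h.exists_leavesAt hτ hroot
  obtain ⟨U, hU, hcred⟩ := B.exists_regular_creditors hleaves
  refine ⟨U, hU, fun u hu => ?_⟩
  obtain ⟨hreg, rfl, hpartner, t, hηt, htτ, hs⟩ := hcred u hu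
  obtain ⟨f, hf⟩ := hreg.exists_exempt_item
  have hfo : f ≠ o := fun heq => hf.ne_partner (heq ▸ hpartner.symm)
  exact ⟨hreg, rfl, (B.crediting.time_le_of_swapsAt hreg.clean hs
    (hleaves.gadget_eq t hηt htτ)).trans htτ,
    fun _ => gadget_of_time_le hleaves hreg.clean hs hηt htτ, f, hfo, hf,
    fun _ => exempt_stays hleaves hreg hs hηt htτ hf hfo⟩

lemma exists_block_succ_mul_le {V : Finset (Fin N)} {c : ℕ} (hne : V.Nonempty)
    (hV : B.blockLen < V.card + c) :
    ∃ u ∈ V, ∃ w ∈ V, (B.block u + 1) * B.blockLen ≤ w.val + c := by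
  obtain ⟨w, hw, hmax⟩ := V.exists_max_image id hne
  have hdecomp := B.blockLen_mul_block_add_offset w
  rw [mul_comm] at hdecomp
  by_cases hc : (B.block w + 1) * B.blockLen ≤ w.val + c
  · exact ⟨w, hw, w, hw, hc⟩
  · rw [add_one_mul] at hc
    obtain ⟨u, hu, hlow⟩ : ∃ u ∈ V, ¬ B.block w * B.blockLen ≤ u.val := by
      by_contra! hhigh
      have := card_filter_val_mem_Ico_le V (B.block w * B.blockLen) (w.val + 1)
      rw [Finset.filter_true_of_mem fun u hu =>
        ⟨hhigh u hu, Nat.lt_succ_of_le (Fin.le_def.1 (hmax u hu))⟩] at this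
      omega
    have hblock : B.block u < B.block w :=
      (Nat.div_lt_iff_lt_mul B.blockLen_pos).2 (not_le.1 hlow)
    have := Nat.mul_le_mul_right B.blockLen (Nat.succ_le_of_lt hblock)
    exact ⟨u, hu, w, hw, by rw [Nat.succ_eq_add_one] at this; omega⟩

/- Apart from the first `r` slacks, the set `U` is contained in the blocks from `J` on and nearly as
large as a big segment: either its maximum is near the end of a block, or `U` meets two blocks. -/
lemma exists_block_ge_and_succ_mul_le {U : Finset (Fin N)} {J r : ℕ} (hr : r ≤ B.seq.length)
    (hU : S.k + 1 ≤ U.card + B.slack)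
    (hJ : ∀ u ∈ U, J * B.blockLen ≤ u.val + r * (m * B.pad + B.slack)) :
    ∃ u ∈ U, J ≤ B.block u ∧ ∃ w ∈ U,
      (B.block u + 1) * B.blockLen ≤ w.val + (r + 1) * (m * B.pad + B.slack) := by
  have hlow := card_filter_val_mem_Ico_le U (J * B.blockLen - r * (m * B.pad + B.slack))
    (J * B.blockLen)
  have hsplit := U.card_filter_add_card_filter_not fun u => J * B.blockLen ≤ u.val
  have hlow' : (U.filter fun u => ¬ J * B.blockLen ≤ u.val).card ≤ r * (m * B.pad + B.slack) := by
    refine (Finset.card_le_card fun u hu => ?_).trans (hlow.trans (by omega))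
    rw [Finset.mem_filter] at hu ⊢
    have := hJ u hu.1
    exact ⟨hu.1, by omega⟩
  have hslack : B.seq.length * (m * B.pad + B.slack) + B.slack < S.k + 1 := B.slack_lt
  have hlen : B.blockLen = S.k + m * B.pad := rfl
  have hrslack := Nat.mul_le_mul_right (m * B.pad + B.slack) hr
  obtain ⟨u, hu, w, hw, huw⟩ := exists_block_succ_mul_le (B := B)
    (V := U.filter fun u => J * B.blockLen ≤ u.val) (c := (r + 1) * (m * B.pad + B.slack))
    (Finset.card_pos.1 (by omega)) (by rw [add_one_mul]; omega)
  rw [Finset.mem_filter] at hu hw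
  exact ⟨u, hu.1, (Nat.le_div_iff_mul_le B.blockLen_pos).2 hu.2, w, hw.1, huw⟩

end BlockStructure

namespace FreeItemTrace

open SwapHistory BlockStructure

variable {m N : ℕ} {S : SwapHistory m N} {B : BlockStructure S} {F : FreeItemTrace S}
  {τ τ₁ τ₂ : ℕ} {i : Fin m} {o f : Option (Fin m)}

lemma pos_eq_root (F : FreeItemTrace S) (hτ : τ < S.len) (h : F.free (τ + 1) ≠ F.free τ) :
    S.pos (τ + 1) (.inl (F.free (τ + 1))) = .root := by
  by_contra hroot
  refine h (F.free_succ_eq_self τ hτ fun o ho => hroot ?_)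
  rwa [F.free_succ_of_pos_eq_root τ hτ o ho]

/-- The items that are not free at time `τ` are anchored, one in each slot gadget. -/
def Settled (F : FreeItemTrace S) (B : BlockStructure S) (τ : ℕ) : Prop :=
  ∃ g : Fin m → Option (Fin m), (∀ i, g i ≠ F.free τ ∧ B.Anchored τ i (g i)) ∧
    ∀ o ≠ F.free τ, ∃ i, g i = o

lemma Settled.eq_of_gadget_eq (h : F.Settled B τ) (ho : o ≠ F.free τ) (hf : f ≠ F.free τ)
    (hgo : S.gadget τ (.inl o) = some (some i)) (hgf : S.gadget τ (.inl f) = some (some i)) :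
    o = f := by
  obtain ⟨g, hanch, hsurj⟩ := h
  obtain ⟨a, rfl⟩ := hsurj o ho
  obtain ⟨b, rfl⟩ := hsurj f hf
  have ha := (hanch a).2.gadget_eq.symm.trans hgo
  have hb := (hanch b).2.gadget_eq.symm.trans hgf
  simp only [Option.some.injEq] at ha hb
  rw [ha, hb]

lemma Settled.existsUnique (h : F.Settled B τ) (i : Fin m) :
    ∃! o, o ≠ F.free τ ∧ S.gadget τ (.inl o) = some (some i) := by
  obtain ⟨g, hanch, -⟩ := id h
  exact ⟨g i, ⟨(hanch i).1, (hanch i).2.gadget_eq⟩,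
    fun _ ho => h.eq_of_gadget_eq ho.1 (hanch i).1 ho.2 (hanch i).2.gadget_eq⟩

lemma Settled.exists_anchored (h : F.Settled B τ) (ho : o ≠ F.free τ) : ∃ i, B.Anchored τ i o := by
  obtain ⟨g, hanch, hsurj⟩ := h
  obtain ⟨i, rfl⟩ := hsurj o ho
  exact ⟨i, (hanch i).2⟩

lemma settled_zero (F : FreeItemTrace S) (B : BlockStructure S) : F.Settled B 0 := by
  refine ⟨some, fun i => ⟨by simp [F.free_zero], 0, le_rfl, fun t _ ht => ?_, .inl (F.pos_zero i)⟩,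
    fun o ho => ?_⟩
  · obtain rfl := Nat.le_zero.1 ht
    exact gadget_of_pos_eq_nook (F.pos_zero i)
  · rw [F.free_zero] at ho
    exact Option.ne_none_iff_exists.1 ho

lemma Settled.succ_of_free_eq (h : F.Settled B τ) (hτ : τ < S.len)
    (hfree : F.free (τ + 1) = F.free τ) : F.Settled B (τ + 1) := by
  obtain ⟨g, hanch, hsurj⟩ := h
  simp only [Settled, hfree]
  refine ⟨g, fun i => ⟨(hanch i).1, (hanch i).2.succ hτ fun hroot => (hanch i).1 ?_⟩, hsurj⟩
  rw [← hfree, F.free_succ_of_pos_eq_root τ hτ _ hroot]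

/- The item that becomes free is witnessed to share its slot gadget with another item, which
can only be the one that was free before and is anchored from now on. -/
lemma Settled.succ_of_free_ne (h : F.Settled B τ) (hτ : τ < S.len)
    (hfree : F.free (τ + 1) ≠ F.free τ) : F.Settled B (τ + 1) := by
  classical
  have hroot := F.pos_eq_root hτ hfree
  obtain ⟨g, hanch, hsurj⟩ := id h
  obtain ⟨i, hi⟩ := hsurj _ hfree
  have hleaving : B.Anchored τ i (F.free (τ + 1)) := hi ▸ (hanch i).2
  obtain ⟨U, hU, hwit⟩ := hleaving.exists_witnesses hτ hroot
  have := B.slack_lt_k_succ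
  obtain ⟨u, hu⟩ : U.Nonempty := Finset.card_pos.1 (by omega)
  obtain ⟨hreg, hslot, htime, -, f, hfo, hexempt, hstay⟩ := hwit u hu
  have hf : f = F.free τ := by
    by_contra hne
    exact hfo (h.eq_of_gadget_eq hne hfree (hstay τ htime (Nat.le_succ τ)) hleaving.gadget_eq)
  refine ⟨Function.update g i f, fun j => ?_, fun o ho => ?_⟩
  · obtain rfl | hj := eq_or_ne j i
    · rw [Function.update_self]
      exact ⟨hfo, _, htime.trans (Nat.le_succ τ), hstay, .inr ⟨u, hreg, hslot, hexempt, rfl⟩⟩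
    · rw [Function.update_of_ne hj]
      have hne : g j ≠ F.free (τ + 1) := fun heq => by
        have := (hanch j).2.gadget_eq
        rw [heq, hleaving.gadget_eq] at this
        simp only [Option.some.injEq] at this
        exact hj this.symm
      exact ⟨hne, (hanch j).2.succ hτ fun hr => hne (F.free_succ_of_pos_eq_root τ hτ _ hr).symm⟩
  · obtain rfl | hof := eq_or_ne o f
    · exact ⟨i, Function.update_self ..⟩
    · obtain ⟨j, rfl⟩ := hsurj o (hf ▸ hof)
      exact ⟨j, Function.update_of_ne (by rintro rfl; exact ho hi) _ _⟩

theorem settled (F : FreeItemTrace S) (B : BlockStructure S) (hτ : τ ≤ S.len) : F.Settled B τ := by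
  induction τ with
  | zero => exact F.settled_zero B
  | succ τ ih =>
    by_cases hfree : F.free (τ + 1) = F.free τ
    · exact (ih (Nat.le_of_succ_le hτ)).succ_of_free_eq hτ hfree
    · exact (ih (Nat.le_of_succ_le hτ)).succ_of_free_ne hτ hfree

lemma exchanges_eq_of_gadget_eq (F : FreeItemTrace S) (B : BlockStructure S) (h₁₂ : τ₁ ≤ τ₂)
    (h₂ : τ₂ ≤ S.len) (hfo : f ≠ o)
    (ho : ∀ t, τ₁ ≤ t → t ≤ τ₂ → S.gadget t (.inl o) = some (some i))
    (hf : ∀ t, τ₁ ≤ t → t ≤ τ₂ → S.gadget t (.inl f) = some (some i)) :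
    F.exchanges τ₁ = F.exchanges τ₂ := by
  induction τ₂, h₁₂ using Nat.le_induction with
  | base => rfl
  | succ τ hle ih =>
    rw [ih (by omega) (fun t h h' => ho t h (by omega)) fun t h h' => hf t h (by omega)]
    refine (F.exchanges_succ_eq_self τ h₂ ?_).symm
    by_contra hfree
    have hne : ∀ o', S.gadget (τ + 1) (.inl o') = some (some i) → o' ≠ F.free (τ + 1) :=
      fun o' ho' heq => gadget_ne_of_pos_eq_root (heq ▸ F.pos_eq_root h₂ hfree) ho'
    have hgo := ho (τ + 1) (by omega) le_rfl
    have hgf := hf (τ + 1) (by omega) le_rfl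
    exact hfo ((F.settled B h₂).eq_of_gadget_eq (hne f hgf) (hne o hgo) hgf hgo)

lemma exchanges_succ_cases (F : FreeItemTrace S) (B : BlockStructure S) (hτ : τ < S.len) :
    F.exchanges (τ + 1) = F.exchanges τ ∨ ∃ i, F.exchanges (τ + 1) = F.exchanges τ ++ [i] ∧
      B.Anchored τ i (F.free (τ + 1)) ∧ S.pos (τ + 1) (.inl (F.free (τ + 1))) = .root := by
  by_cases hfree : F.free (τ + 1) = F.free τ
  · exact .inl (F.exchanges_succ_eq_self τ hτ hfree)
  · obtain ⟨i, hi⟩ := (F.settled B hτ.le).exists_anchored hfree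
    exact .inr ⟨i, F.exchanges_succ τ hτ i hfree hi.gadget_eq, hi, F.pos_eq_root hτ hfree⟩

lemma length_exchanges_mono (F : FreeItemTrace S) (B : BlockStructure S) (h₁₂ : τ₁ ≤ τ₂)
    (h₂ : τ₂ ≤ S.len) : (F.exchanges τ₁).length ≤ (F.exchanges τ₂).length := by
  induction τ₂, h₁₂ using Nat.le_induction with
  | base => rfl
  | succ τ _ ih =>
    refine (ih (Nat.le_of_succ_le h₂)).trans ?_
    obtain h | ⟨i, h, -⟩ := F.exchanges_succ_cases B h₂ <;> simp [h]

/-- The exchanges up to time `τ` match entries of the swap sequence among the first `J`, and the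
regular ordering tokens credited later lie, up to a slack per exchange, beyond the first `J`
blocks. -/
def Matches (F : FreeItemTrace S) (B : BlockStructure S) (J τ : ℕ) : Prop :=
  (F.exchanges τ).Sublist (B.seq.take J) ∧ ∀ u, B.Regular u →
    (F.exchanges τ).length ≤ (F.exchanges (B.crediting.time (false, u))).length →
    J * B.blockLen ≤ u.val + (F.exchanges τ).length * (m * B.pad + B.slack)

lemma Matches.succ {J : ℕ} (h : F.Matches B J τ) (hτ : τ < S.len)
    (hexch : F.exchanges (τ + 1) = F.exchanges τ ++ [i]) (hanch : B.Anchored τ i o)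
    (hroot : S.pos (τ + 1) (.inl o) = .root) : ∃ J', F.Matches B J' (τ + 1) := by
  obtain ⟨hsub, hlater⟩ := h
  obtain ⟨U, hU, hwit⟩ := hanch.exists_witnesses hτ hroot
  have hconst : ∀ u ∈ U, F.exchanges (B.crediting.time (false, u)) = F.exchanges τ := by
    intro u hu
    obtain ⟨-, -, htime, ho, f, hfo, -, hf⟩ := hwit u hu
    exact F.exchanges_eq_of_gadget_eq B htime hτ.le hfo ho fun t h h' => hf t h (by omega)
  obtain ⟨u, hu, hJu, w, hw, huw⟩ := exists_block_ge_and_succ_mul_le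
    (hsub.trans (List.take_sublist _ _)).length_le hU
    fun v hv => hlater v (hwit v hv).regular (by rw [hconst v hv])
  refine ⟨B.block u + 1, ?_, fun v hv hlen => ?_⟩
  · have hi : B.seq[B.block u]? = some i :=
      (hwit u hu).slot_eq ▸ B.seq_eq_slot u (hwit u hu).regular.offset_lt
    rw [hexch, List.take_add_one, hi]
    exact (hsub.trans (List.take_prefix_take_left hJu).sublist).append (List.Sublist.refl _)
  · simp only [hexch, List.length_append, List.length_singleton] at hlen ⊢
    have hwclean := (hwit w hw).regular.clean
    have hwv : w ≤ v := by
      by_contra! hvw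
      have := B.crediting.time_lt_time hv.clean hwclean hvw
      have := (hwit w hw).time_le
      have := F.length_exchanges_mono B (show B.crediting.time (false, v) ≤ τ by omega) hτ.le
      omega
    exact huw.trans (Nat.add_le_add_right hwv _)

lemma exists_matches (F : FreeItemTrace S) (B : BlockStructure S) (hτ : τ ≤ S.len) :
    ∃ J, F.Matches B J τ := by
  induction τ with
  | zero => exact ⟨0, by simp [F.exchanges_zero], fun u _ _ => by simp⟩
  | succ τ ih =>
    obtain ⟨J, hJ⟩ := ih (Nat.le_of_succ_le hτ)
    obtain hexch | ⟨i, hexch, hanch, hroot⟩ := F.exchanges_succ_cases B hτ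
    · exact ⟨J, by rwa [Matches, hexch]⟩
    · exact hJ.succ hτ hexch hanch hroot

theorem exchanges_sublist (F : FreeItemTrace S) (B : BlockStructure S) (hτ : τ ≤ S.len) :
    (F.exchanges τ).Sublist B.seq := by
  obtain ⟨J, hsub, -⟩ := F.exists_matches B hτ
  exact hsub.trans (List.take_sublist _ _)

end FreeItemTrace

/-! ### Ranks in the construction -/

section Ranks

variable {m n : ℕ}

/-- Places in the segments of one of the two families of non-item tokens: `.inl (j, a)` is place `a`
of the big segment `x_j` or `y_j`, and `.inr (i, j, a)` is place `a` of the padding segment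
`p_{i,j}` or `q_{i,j}`. -/
abbrev Place (m n : ℕ) := (Fin n × Fin (kk m n)) ⊕ (Fin m × Fin n × Fin (kk' m n))

section Rho

variable {α : Type*} [Fintype α] {f : α → ℕ} {a b : α}

lemma card_filter_lt_lt_card (f : α → ℕ) (a : α) :
    (Finset.univ.filter fun x => f x < f a).card < Fintype.card α :=
  Finset.card_lt_univ_of_notMem (x := a) (by simp)

lemma card_filter_lt_lt_card_filter_lt (h : f a < f b) :
    (Finset.univ.filter fun x => f x < f a).card < (Finset.univ.filter fun x => f x < f b).card :=
  Finset.card_lt_card <| (Finset.ssubset_iff_of_subset fun x hx => by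
    simpa using (Finset.mem_filter.1 hx).2.trans h).2 ⟨a, by simpa using h, by simp⟩

lemma card_filter_lt_injective (hf : Function.Injective f) :
    Function.Injective fun a => (Finset.univ.filter fun x => f x < f a).card := by
  intro a b h
  rcases lt_trichotomy (f a) (f b) with hlt | heq | hlt
  · exact absurd h (card_filter_lt_lt_card_filter_lt hlt).ne
  · exact hf heq
  · exact absurd h (card_filter_lt_lt_card_filter_lt hlt).ne'

/-- A sorting key for the padding segments `q_{i,j}` of block `j`, with `q_{s_{j+1},j}` first,
`q_{s_j,j}` last and the others in increasing order of `i`. -/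
def paddingKey (s : Fin n → Fin m) (j : Fin n) (i : Fin m) : ℕ :=
  if some i = nxt s j then 0 else if i = s j then m + 1 else i.val + 1

lemma paddingKey_injective (s : Fin n → Fin m) (j : Fin n) :
    Function.Injective (paddingKey s j) := by
  intro i i' h
  unfold paddingKey at h
  split_ifs at h with hi hi' hi' hi hi' hi hi'
  · exact Option.some.inj (hi.trans hi'.symm)
  all_goals omega

lemma rho_eq_card (s : Fin n → Fin m) (i : Fin m) (j : Fin n) :
    rho s i j = (Finset.univ.filter fun i' => paddingKey s j i' < paddingKey s j i).card := by
  have hi := i.isLt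
  by_cases hnxt : some i = nxt s j
  · simp [rho, paddingKey, hnxt]
  by_cases hcur : i = s j
  · have : (Finset.univ.filter fun i' => paddingKey s j i' < paddingKey s j i) =
        Finset.univ.erase (s j) := by
      ext i'
      have := i'.isLt
      grind [paddingKey]
    rw [this, Finset.card_erase_of_mem (Finset.mem_univ _), Finset.card_univ, Fintype.card_fin, rho,
      if_neg hnxt, if_pos hcur]
  · have hcard : (if (nxt s j).isSome then 1 else 0) =
        (Finset.univ.filter fun i' => some i' = nxt s j).card := by
      rcases nxt s j with _ | t <;> simp [Finset.filter_eq']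
    rw [rho, if_neg hnxt, if_neg hcur, hcard, ← Finset.card_union_of_disjoint
      (Finset.disjoint_filter.2 fun i' _ h h' => h'.2.2 h)]
    congr 1
    ext i'
    grind [paddingKey]

lemma rho_lt (s : Fin n → Fin m) (i : Fin m) (j : Fin n) : rho s i j < m := by
  simpa [rho_eq_card] using card_filter_lt_lt_card (paddingKey s j) i

lemma rho_injective (s : Fin n → Fin m) (j : Fin n) :
    Function.Injective fun i => rho s i j := by
  simpa only [rho_eq_card] using card_filter_lt_injective (paddingKey_injective s j)

end Rho

section Rank

/-- The number of ranks in a block. -/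
def blockSize (m n : ℕ) : ℕ := kk m n + m * kk' m n

/-- The index `j` of the segment containing a place. -/
def placeBlock : Place m n → Fin n
  | .inl (j, _) => j
  | .inr (_, j, _) => j

/-- The slot gadget in which the slot token at a place starts and the ordering token at that place
ends. -/
def placeSlot (s : Fin n → Fin m) : Place m n → Fin m
  | .inl (j, _) => s j
  | .inr (i, _, _) => i

/-- The position of a segment in its block of the ordering gadget: the big segment comes first. -/
def placePart (s : Fin n → Fin m) : Place m n → ℕ
  | .inl _ => 0
  | .inr (i, j, _) => 1 + rho s i j

/-- The position of a place in its block of the ordering gadget. -/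
def placeOffset (s : Fin n → Fin m) : Place m n → ℕ
  | .inl (_, a) => a
  | .inr (i, j, a) => kk m n + (rho s i j * kk' m n + a)

/-- The position of a place in the order of the ordering gadget. -/
def placeRank (s : Fin n → Fin m) (y : Place m n) : ℕ :=
  placeBlock y * blockSize m n + placeOffset s y

/-- The number of segments before that of the given place in the order of the ordering gadget. -/
def placeSegment (s : Fin n → Fin m) (y : Place m n) : ℕ :=
  placeBlock y * (m + 1) + placePart s y

lemma mul_add_lt_mul {a j b n : ℕ} (ha : a < b) (hj : j < n) : j * b + a < n * b := by
  have := Nat.mul_le_mul_right b hj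
  rw [Nat.succ_mul] at this
  omega

lemma mul_add_le_mul_add_iff {a a' j j' b : ℕ} (ha : a < b) (ha' : a' < b) :
    j * b + a ≤ j' * b + a' ↔ j < j' ∨ j = j' ∧ a ≤ a' := by
  rcases lt_trichotomy j j' with h | rfl | h
  · have := mul_add_lt_mul ha h
    omega
  · omega
  · have := mul_add_lt_mul ha' h
    omega

lemma mul_add_inj {a a' j j' b : ℕ} (ha : a < b) (ha' : a' < b) :
    j * b + a = j' * b + a' ↔ j = j' ∧ a = a' := by
  rw [le_antisymm_iff, mul_add_le_mul_add_iff ha ha', mul_add_le_mul_add_iff ha' ha]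
  omega

lemma lenOrd_eq (m n : ℕ) : lenOrd m n = n * blockSize m n := by
  unfold lenOrd blockSize
  ring

variable (s : Fin n → Fin m)

lemma placePart_lt (y : Place m n) : placePart s y < m + 1 := by
  rcases y with _ | ⟨i, j, _⟩
  · exact Nat.succ_pos m
  · have := rho_lt s i j
    simp only [placePart]
    omega

lemma placeOffset_lt (y : Place m n) : placeOffset s y < blockSize m n := by
  rcases y with ⟨_, a⟩ | ⟨i, j, a⟩
  · exact a.isLt.trans_le (Nat.le_add_right _ _)
  · exact Nat.add_lt_add_left (mul_add_lt_mul a.isLt (rho_lt s i j)) _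

lemma placeRank_lt (y : Place m n) : placeRank s y < lenOrd m n := by
  rw [lenOrd_eq]
  exact mul_add_lt_mul (placeOffset_lt s y) (placeBlock y).isLt

lemma placeSegment_lt (y : Place m n) : placeSegment s y < n * (m + 1) :=
  mul_add_lt_mul (placePart_lt s y) (placeBlock y).isLt

lemma placeRank_div (y : Place m n) : placeRank s y / blockSize m n = placeBlock y := by
  have h := placeOffset_lt s y
  rw [placeRank, mul_comm, Nat.mul_add_div (by omega), Nat.div_eq_of_lt h, add_zero]

lemma placeRank_mod (y : Place m n) : placeRank s y % blockSize m n = placeOffset s y := by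
  rw [placeRank, Nat.mul_add_mod_self_right, Nat.mod_eq_of_lt (placeOffset_lt s y)]

lemma placeRank_injective : Function.Injective (placeRank s) := by
  intro y y' h
  obtain ⟨hblock, hoffset⟩ := (mul_add_inj (placeOffset_lt s y) (placeOffset_lt s y')).1 h
  replace hblock := Fin.ext hblock
  rcases y with ⟨j, a⟩ | ⟨i, j, a⟩ <;> rcases y' with ⟨j', a'⟩ | ⟨i', j', a'⟩ <;>
    obtain rfl : j = j' := hblock <;> simp only [placeOffset] at hoffset
  · rw [Fin.ext hoffset]
  · omega
  · omega
  · obtain ⟨hrho, ha⟩ := (mul_add_inj a.isLt a'.isLt).1 (Nat.add_left_cancel hoffset)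
    rw [rho_injective s j hrho, Fin.ext ha]

lemma placePart_le_of_placeOffset_le {y y' : Place m n} (hblock : placeBlock y = placeBlock y')
    (h : placeOffset s y ≤ placeOffset s y') : placePart s y ≤ placePart s y' := by
  rcases y with ⟨j, a⟩ | ⟨i, j, a⟩ <;> rcases y' with ⟨j', a'⟩ | ⟨i', j', a'⟩ <;>
    obtain rfl : j = j' := hblock <;> simp only [placeOffset, placePart] at h ⊢
  · omega
  · omega
  · omega
  · have hle : rho s i j * kk' m n + a ≤ rho s i' j * kk' m n + a' := by omega
    have := (mul_add_le_mul_add_iff a.isLt a'.isLt).1 hle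
    omega

lemma placeSegment_le_of_placeRank_le {y y' : Place m n} (h : placeRank s y ≤ placeRank s y') :
    placeSegment s y ≤ placeSegment s y' := by
  refine (mul_add_le_mul_add_iff (placePart_lt s y) (placePart_lt s y')).2 ?_
  refine ((mul_add_le_mul_add_iff (placeOffset_lt s y) (placeOffset_lt s y')).1 h).imp_right ?_
  exact fun h => ⟨h.1, placePart_le_of_placeOffset_le s (Fin.ext h.1) h.2⟩

lemma placeSlot_eq_of_placeSegment_eq {y y' : Place m n}
    (h : placeSegment s y = placeSegment s y') : placeSlot s y = placeSlot s y' := by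
  obtain ⟨hblock, hpart⟩ := (mul_add_inj (placePart_lt s y) (placePart_lt s y')).1 h
  replace hblock := Fin.ext hblock
  rcases y with ⟨j, a⟩ | ⟨i, j, a⟩ <;> rcases y' with ⟨j', a'⟩ | ⟨i', j', a'⟩ <;>
    obtain rfl : j = j' := hblock <;> simp only [placePart] at hpart
  · rfl
  · omega
  · omega
  · exact rho_injective s j (Nat.add_left_cancel hpart)

lemma card_place (m n : ℕ) : Fintype.card (Place m n) = lenOrd m n := by
  simp only [Fintype.card_sum, Fintype.card_prod, Fintype.card_fin, lenOrd]
  ring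

/-- The enumeration of the places by their ranks. -/
noncomputable def rankEquiv : Place m n ≃ Fin (lenOrd m n) :=
  Equiv.ofBijective (fun y => ⟨placeRank s y, placeRank_lt s y⟩) <|
    (Fintype.bijective_iff_injective_and_card _).2
      ⟨fun _ _ h => placeRank_injective s (Fin.mk.inj h),
        (card_place m n).trans (Fintype.card_fin _).symm⟩

lemma rankEquiv_val (y : Place m n) : (rankEquiv s y).val = placeRank s y := rfl

lemma placeRank_rankEquiv_symm (r : Fin (lenOrd m n)) :
    placeRank s ((rankEquiv s).symm r) = r.val := by
  rw [← rankEquiv_val s, Equiv.apply_symm_apply]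

end Rank

end Ranks

/-! ### Tokens of the construction -/

section Tokens

variable {m n : ℕ}

/-- The non-item tokens, indexed by the places: `(false, y)` belongs to a segment `x_j` or
`p_{i,j}` and `(true, y)` to a segment `y_j` or `q_{i,j}`. -/
def nonItemEquiv : Bool × Place m n ≃ NonItem m n where
  toFun
    | (false, .inl x) => .inl x
    | (true, .inl x) => .inr (.inl x)
    | (false, .inr x) => .inr (.inr (.inl x))
    | (true, .inr x) => .inr (.inr (.inr x))
  invFun
    | .inl x => (false, .inl x)
    | .inr (.inl x) => (true, .inl x)
    | .inr (.inr (.inl x)) => (false, .inr x)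
    | .inr (.inr (.inr x)) => (true, .inr x)
  left_inv := by rintro ⟨_ | _, _ | _⟩ <;> rfl
  right_inv := by rintro (_ | _ | _ | _) <;> rfl

variable (s : Fin n → Fin m)

/-- The non-item tokens, indexed by their ranks. -/
noncomputable def rankNonItemEquiv : Bool × Fin (lenOrd m n) ≃ NonItem m n :=
  ((Equiv.refl Bool).prodCongr (rankEquiv s).symm).trans nonItemEquiv

/-- The tokens of the construction, indexed by their ranks. -/
noncomputable def tokenEquiv : RankTok m (lenOrd m n) ≃ Tok m n :=
  (Equiv.refl _).sumCongr (rankNonItemEquiv s)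

/-- The length of segment `q_{i,j}` together with that of `y_j` if `y_j` starts in slot gadget
`i`. -/
def width (i : Fin m) (j : Fin n) : ℕ := kk' m n + if s j = i then kk m n else 0

lemma offQ_eq_sum (i : Fin m) (j : Fin n) : offQ s i j = ∑ j' ∈ Finset.Iio j, width s i j' :=
  Finset.sum_congr (by ext; simp) fun _ _ => rfl

lemma tOffP_eq_sum (i : Fin m) (j : Fin n) : tOffP s i j = ∑ j' ∈ Finset.Ioi j, width s i j' :=
  Finset.sum_congr (by ext; simp) fun _ _ => rfl

lemma sum_width (i : Fin m) : ∑ j, width s i j = lenSlot s i := by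
  simp only [width, Finset.sum_add_distrib, ← Finset.sum_filter, Finset.sum_const, smul_eq_mul,
    Finset.card_univ, Fintype.card_fin, lenSlot, cnt]
  ring

lemma sum_add_le_sum_of_insert_subset {α : Type*} [DecidableEq α] {A B : Finset α} {a : α}
    (f : α → ℕ) (ha : a ∉ A) (h : insert a A ⊆ B) : ∑ x ∈ A, f x + f a ≤ ∑ x ∈ B, f x := by
  rw [add_comm, ← Finset.sum_insert ha]
  exact Finset.sum_le_sum_of_subset h

lemma offQ_add_width_le_lenSlot (i : Fin m) (j : Fin n) :
    offQ s i j + width s i j ≤ lenSlot s i := by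
  rw [offQ_eq_sum, ← sum_width]
  exact sum_add_le_sum_of_insert_subset _ (by simp) (Finset.subset_univ _)

lemma tOffP_add_width_le_lenSlot (i : Fin m) (j : Fin n) :
    tOffP s i j + width s i j ≤ lenSlot s i := by
  rw [tOffP_eq_sum, ← sum_width]
  exact sum_add_le_sum_of_insert_subset _ (by simp) (Finset.subset_univ _)

lemma offQ_add_width_le_offQ (i : Fin m) {j j' : Fin n} (h : j < j') :
    offQ s i j + width s i j ≤ offQ s i j' := by
  rw [offQ_eq_sum, offQ_eq_sum]
  refine sum_add_le_sum_of_insert_subset _ (by simp) fun x hx => ?_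
  rcases Finset.mem_insert.1 hx with rfl | hx
  · exact Finset.mem_Iio.2 h
  · exact Finset.mem_Iio.2 ((Finset.mem_Iio.1 hx).trans h)

/-- The initial position in its slot gadget of the slot token at a place. -/
def initDepth : Place m n → ℕ
  | .inl (j, a) => offQ s (s j) j + a
  | .inr (i, j, a) => offQ s i j + (if s j = i then kk m n else 0) + a

/-- The final position in its slot gadget of the ordering token at a place. -/
def finalDepth : Place m n → ℕ
  | .inl (j, a) => tOffP s (s j) j + kk' m n + (kk m n - 1 - a)
  | .inr (i, j, a) => tOffP s i j + (kk' m n - 1 - a)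

lemma offQ_le_initDepth (y : Place m n) :
    offQ s (placeSlot s y) (placeBlock y) ≤ initDepth s y := by
  rcases y with ⟨j, a⟩ | ⟨i, j, a⟩ <;> simp only [placeSlot, placeBlock, initDepth] <;> omega

lemma initDepth_lt_offQ_add_width (y : Place m n) :
    initDepth s y < offQ s (placeSlot s y) (placeBlock y) + width s (placeSlot s y) (placeBlock y)
    := by
  rcases y with ⟨j, a⟩ | ⟨i, j, a⟩
  · change offQ s (s j) j + a < offQ s (s j) j + width s (s j) j
    simp only [width, if_true]
    omega
  · change offQ s i j + (if s j = i then kk m n else 0) + a < offQ s i j + width s i j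
    simp only [width]
    omega

lemma initDepth_lt (y : Place m n) : initDepth s y < lenSlot s (placeSlot s y) :=
  (initDepth_lt_offQ_add_width s y).trans_le (offQ_add_width_le_lenSlot s _ _)

lemma finalDepth_lt (y : Place m n) : finalDepth s y < lenSlot s (placeSlot s y) := by
  refine lt_of_lt_of_le ?_ (tOffP_add_width_le_lenSlot s _ (placeBlock y))
  rcases y with ⟨j, a⟩ | ⟨i, j, a⟩ <;> simp only [placeSlot, placeBlock, finalDepth, width, if_true]
    <;> omega

lemma placeBlock_le_of_initDepth_le {y y' : Place m n} (hslot : placeSlot s y = placeSlot s y')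
    (h : initDepth s y ≤ initDepth s y') : placeBlock y ≤ placeBlock y' := by
  by_contra! hlt
  have hle := offQ_add_width_le_offQ s (placeSlot s y') hlt
  have hy := offQ_le_initDepth s y
  rw [hslot] at hy
  have hy' := initDepth_lt_offQ_add_width s y'
  omega

lemma eq_of_initDepth_eq {y y' : Place m n} (hslot : placeSlot s y = placeSlot s y')
    (h : initDepth s y = initDepth s y') : y = y' := by
  have hblock := le_antisymm (placeBlock_le_of_initDepth_le s hslot h.le)
    (placeBlock_le_of_initDepth_le s hslot.symm h.ge)
  rcases y with ⟨j, a⟩ | ⟨i, j, a⟩ <;> rcases y' with ⟨j', a'⟩ | ⟨i', j', a'⟩ <;>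
    obtain rfl : j = j' := hblock <;> simp only [placeSlot] at hslot <;>
    simp only [initDepth, hslot, if_true] at h
  · rw [Fin.ext (Nat.add_left_cancel h)]
  · omega
  · omega
  · rw [hslot, Fin.ext (Nat.add_left_cancel h)]

lemma sum_lenSlot : ∑ i, lenSlot s i = lenOrd m n := by
  have hcnt : ∑ i, cnt s i = n := by
    have := Finset.card_eq_sum_card_fiberwise (f := s) (s := .univ) (t := .univ) (by simp)
    rw [Finset.card_univ, Fintype.card_fin] at this
    exact this.symm
  simp only [lenSlot, Finset.sum_add_distrib, ← Finset.sum_mul, hcnt, Finset.sum_const,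
    Finset.card_univ, Fintype.card_fin, smul_eq_mul, lenOrd]
  ring

lemma exists_initDepth_eq {i : Fin m} {d : ℕ} (hd : d < lenSlot s i) :
    ∃ y, placeSlot s y = i ∧ initDepth s y = d := by
  let f (y : Place m n) : Σ i, Fin (lenSlot s i) := ⟨placeSlot s y, _, initDepth_lt s y⟩
  have hval {y y'} (h : f y = f y') : initDepth s y = initDepth s y' :=
    congrArg (fun x : Σ i, Fin (lenSlot s i) => x.2.val) h
  have hinj : Function.Injective f := fun y y' h =>
    eq_of_initDepth_eq s (congrArg Sigma.fst h) (hval h)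
  have hcard : Fintype.card (Place m n) = Fintype.card (Σ i, Fin (lenSlot s i)) := by
    simp only [card_place, Fintype.card_sigma, Fintype.card_fin, sum_lenSlot]
  obtain ⟨y, hy⟩ := ((Fintype.bijective_iff_injective_and_card f).2 ⟨hinj, hcard⟩).2 ⟨i, d, hd⟩
  exact ⟨y, congrArg Sigma.fst hy, congrArg (fun x : Σ i, Fin (lenSlot s i) => x.2.val) hy⟩

lemma initTok_ordering (y : Place m n) :
    initTok s (.inr (nonItemEquiv (false, y))) = .ord (placeRank s y) := by
  rcases y with ⟨j, a⟩ | ⟨i, j, a⟩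
  · rfl
  · simp only [nonItemEquiv, Equiv.coe_fn_mk, initTok, placeRank, placeBlock, placeOffset,
      blockSize, add_assoc]

lemma initTok_slot (y : Place m n) :
    initTok s (.inr (nonItemEquiv (true, y))) = .slot (placeSlot s y) (initDepth s y) := by
  rcases y with ⟨j, a⟩ | ⟨i, j, a⟩ <;> rfl

variable (π : Equiv.Perm (Option (Fin m)))

lemma tgtTok_ordering (y : Place m n) :
    tgtTok s π (.inr (nonItemEquiv (false, y))) = .slot (placeSlot s y) (finalDepth s y) := by
  rcases y with ⟨j, a⟩ | ⟨i, j, a⟩ <;> rfl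

lemma tgtTok_slot (y : Place m n) :
    tgtTok s π (.inr (nonItemEquiv (true, y))) = .ord (lenOrd m n - 1 - placeRank s y) := by
  rcases y with ⟨j, a⟩ | ⟨i, j, a⟩
  · rfl
  · simp only [nonItemEquiv, Equiv.coe_fn_mk, tgtTok, placeRank, placeBlock, placeOffset, blockSize,
      add_assoc]

end Tokens

/-! ### The run of the construction as a swap history -/

section Swaps

variable {T V : Type*} [DecidableEq V] {f : T → V}

lemma swapV_eq_swap (e : V × V) (v : V) : swapV e v = Equiv.swap e.1 e.2 v := by
  rw [Equiv.swap_apply_def]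
  rfl

lemma applySwaps_injective (σ : List (V × V)) (hf : Function.Injective f) :
    Function.Injective (applySwaps σ f) := by
  induction σ generalizing f with
  | nil => exact hf
  | cons e _ ih =>
    refine ih fun t t' h => hf ?_
    simpa only [swapV_eq_swap, Equiv.apply_eq_iff_eq] using h

lemma range_applySwaps {σ : List (V × V)}
    (h : ∀ e ∈ σ, e.1 ∈ Set.range f ∧ e.2 ∈ Set.range f) :
    Set.range (applySwaps σ f) = Set.range f := by
  induction σ generalizing f with
  | nil => rfl
  | cons e σ ih =>
    have he := h e List.mem_cons_self
    have hrange : Set.range (fun t => swapV e (f t)) = Set.range f := by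
      simp only [swapV_eq_swap]
      rw [Set.range_comp' (Equiv.swap e.1 e.2) f]
      exact (Equiv.bijOn_swap he.1 he.2).image_eq
    refine (ih fun e' he' => ?_).trans hrange
    rw [hrange]
    exact h e' (List.mem_cons_of_mem e he')

lemma card_filter_comp_eq_of_range_eq {α β : Type*} [Fintype α] {f g : α → β} (P : β → Prop)
    [DecidablePred P] (hf : Function.Injective f) (hg : Function.Injective g)
    (h : Set.range f = Set.range g) :
    (Finset.univ.filter fun a => P (f a)).card = (Finset.univ.filter fun a => P (g a)).card := by
  let e : α ≃ α :=
    (Equiv.ofInjective f hf).trans ((Equiv.setCongr h).trans (Equiv.ofInjective g hg).symm)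
  have he (a : α) : g (e a) = f a := Equiv.apply_ofInjective_symm hg _
  exact Finset.card_equiv e (by simp [he])

end Swaps

section History

variable {m n : ℕ} {s : Fin n → Fin m} {σ : List (Vtx m × Vtx m)} {u v : Vtx m}

section PlaceAt

variable (σ) (f : Tok m n → Vtx m)

lemma placeAt_length : placeAt σ f σ.length = applySwaps σ f := by
  rw [placeAt, List.take_length]

variable {σ}

lemma placeAt_succ {τ : ℕ} (hτ : τ < σ.length) (t : Tok m n) :
    placeAt σ f (τ + 1) t = Equiv.swap σ[τ].1 σ[τ].2 (placeAt σ f τ t) := by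
  unfold placeAt applySwaps
  rw [List.take_succ_eq_append_getElem hτ, List.foldl_append, ← swapV_eq_swap]
  rfl

end PlaceAt

variable (s) in
lemma initTok_injective : Function.Injective (initTok s) := by
  let e : Option (Fin m) ⊕ (Bool × Place m n) ≃ Tok m n :=
    (Equiv.refl _).sumCongr nonItemEquiv
  refine Function.Injective.of_comp_right (g := e) ?_ e.surjective
  have hnone : initTok s (.inl none) = .root := rfl
  have hsome (i : Fin m) : initTok s (.inl (some i)) = .nook i := rfl
  rintro ((_ | i) | ⟨_ | _, y⟩) ((_ | i') | ⟨_ | _, y'⟩) h <;>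
    simp only [e, Function.comp_apply, Equiv.sumCongr_apply, Sum.map_inl, Sum.map_inr,
      Equiv.refl_apply, hnone, hsome, initTok_ordering, initTok_slot, reduceCtorEq,
      Vtx.ord.injEq, Vtx.slot.injEq, Vtx.nook.injEq] at h ⊢
  · rw [h]
  · rw [placeRank_injective s h]
  · rw [eq_of_initDepth_eq s h.1 h.2]

lemma ord_mem_range_initTok {d : ℕ} (hd : d < lenOrd m n) : .ord d ∈ Set.range (initTok s) :=
  ⟨.inr (nonItemEquiv (false, (rankEquiv s).symm ⟨d, hd⟩)), by
    rw [initTok_ordering, placeRank_rankEquiv_symm]⟩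

lemma slot_mem_range_initTok {i : Fin m} {d : ℕ} (hd : d < lenSlot s i) :
    .slot i d ∈ Set.range (initTok s) := by
  obtain ⟨y, hslot, hdepth⟩ := exists_initDepth_eq s hd
  exact ⟨.inr (nonItemEquiv (true, y)), by rw [initTok_slot, hslot, hdepth]⟩

lemma mem_range_initTok_of_rel (h : rel (lenSlot s) (lenOrd m n) (kk m n) u v) :
    u ∈ Set.range (initTok s) ∧ v ∈ Set.range (initTok s) := by
  have hroot : .root ∈ Set.range (initTok s) := ⟨.inl none, rfl⟩
  have hnook (i : Fin m) : .nook i ∈ Set.range (initTok s) := ⟨.inl (some i), rfl⟩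
  cases u <;> cases v <;> simp only [rel] at h
  · exact ⟨hroot, ord_mem_range_initTok (by omega)⟩
  · exact ⟨hroot, slot_mem_range_initTok (by omega)⟩
  · exact ⟨ord_mem_range_initTok (by omega), ord_mem_range_initTok (by omega)⟩
  · obtain ⟨rfl, rfl, hd⟩ := h
    exact ⟨slot_mem_range_initTok (by omega), slot_mem_range_initTok hd⟩
  · exact ⟨slot_mem_range_initTok h.2.2, hnook _⟩

lemma adj_of_rel {len : Fin m → ℕ} {l k : ℕ} (h : rel len l k u v) : Vtx.Adj k u v := by
  cases u <;> cases v <;> simp only [rel, Vtx.Adj, Vtx.AdjRight] at h ⊢ <;> grind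

lemma adj_of_theGraph_adj (h : (TheGraph s).Adj u v) : Vtx.Adj (kk m n) u v :=
  ((SimpleGraph.fromRel_adj _ u v).1 h).2.elim adj_of_rel fun h => (adj_of_rel h).symm

lemma mem_range_initTok_of_adj (h : (TheGraph s).Adj u v) :
    u ∈ Set.range (initTok s) ∧ v ∈ Set.range (initTok s) :=
  ((SimpleGraph.fromRel_adj _ u v).1 h).2.elim mem_range_initTok_of_rel fun h =>
    (mem_range_initTok_of_rel h).symm

variable (s σ) in
/-- The position after `τ` swaps of the token with the given rank. -/
noncomputable def rankPos (τ : ℕ) (z : RankTok m (lenOrd m n)) : Vtx m :=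
  placeAt σ (initTok s) τ (tokenEquiv s z)

variable {τ : ℕ} {p q : RankTok m (lenOrd m n)}

variable (s σ τ) in
lemma rankPos_injective : Function.Injective (rankPos s σ τ) :=
  (applySwaps_injective _ (initTok_injective s)).comp (tokenEquiv s).injective

lemma range_rankPos (hedges : ∀ e ∈ σ, (TheGraph s).Adj e.1 e.2) :
    Set.range (rankPos s σ τ) = Set.range (initTok s) :=
  ((tokenEquiv s).surjective.range_comp _).trans <|
    range_applySwaps fun e he => mem_range_initTok_of_adj (hedges e (List.mem_of_mem_take he))

lemma rankPos_succ (hτ : τ < σ.length) (z : RankTok m (lenOrd m n)) :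
    rankPos s σ (τ + 1) z = Equiv.swap σ[τ].1 σ[τ].2 (rankPos s σ τ z) :=
  placeAt_succ _ hτ _

lemma exists_isSwap_rankPos (hedges : ∀ e ∈ σ, (TheGraph s).Adj e.1 e.2) (hτ : τ < σ.length) :
    ∃ p q, IsSwap (kk m n) (rankPos s σ τ) (rankPos s σ (τ + 1)) p q := by
  have hadj := hedges _ (List.getElem_mem hτ)
  have hmem := mem_range_initTok_of_adj hadj
  rw [← range_rankPos (τ := τ) hedges] at hmem
  obtain ⟨⟨p, hp⟩, q, hq⟩ := hmem
  refine ⟨p, q, fun h => hadj.ne ?_, ?_, ?_, ?_, fun z hzp hzq => ?_⟩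
  · rw [← hp, ← hq, h]
  · rw [hp, hq]
    exact adj_of_theGraph_adj hadj
  · rw [rankPos_succ hτ, hp, hq, Equiv.swap_apply_left]
  · rw [rankPos_succ hτ, hp, hq, Equiv.swap_apply_right]
  · rw [rankPos_succ hτ, ← hp, ← hq]
    exact Equiv.swap_apply_of_ne_of_ne ((rankPos_injective s σ τ).ne hzp)
      ((rankPos_injective s σ τ).ne hzq)

lemma swapsPairAt_of_isSwap (hτ : τ < σ.length)
    (h : IsSwap (kk m n) (rankPos s σ τ) (rankPos s σ (τ + 1)) p q) :
    swapsPairAt σ (initTok s) τ (tokenEquiv s p) (tokenEquiv s q) := by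
  obtain ⟨hne, -, hp, -⟩ := h
  rw [rankPos_succ hτ, Equiv.swap_apply_def] at hp
  refine ⟨hτ, ?_⟩
  split_ifs at hp with h₁ h₂
  · exact .inl ⟨h₁, hp.symm⟩
  · exact .inr ⟨h₂, hp.symm⟩
  · exact absurd (rankPos_injective s σ τ hp) hne

section Endpoints

variable (σ) (r : Fin (lenOrd m n))

lemma rankPos_zero_ordering : rankPos s σ 0 (.inr (false, r)) = .ord r :=
  (initTok_ordering s _).trans (by rw [placeRank_rankEquiv_symm])

lemma rankPos_zero_slot :
    rankPos s σ 0 (.inr (true, r)) =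
      .slot (placeSlot s ((rankEquiv s).symm r)) (initDepth s ((rankEquiv s).symm r)) :=
  initTok_slot s _

variable {σ} {π : Equiv.Perm (Option (Fin m))} (hsol : applySwaps σ (initTok s) = tgtTok s π)
include hsol

lemma rankPos_length (z : RankTok m (lenOrd m n)) :
    rankPos s σ σ.length z = tgtTok s π (tokenEquiv s z) := by
  rw [rankPos, placeAt_length, hsol]

lemma rankPos_length_ordering :
    rankPos s σ σ.length (.inr (false, r)) =
      .slot (placeSlot s ((rankEquiv s).symm r)) (finalDepth s ((rankEquiv s).symm r)) :=
  (rankPos_length hsol _).trans (tgtTok_ordering s π _)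

lemma rankPos_length_slot : rankPos s σ σ.length (.inr (true, r)) = .ord r.rev := by
  refine (rankPos_length hsol _).trans ((tgtTok_slot s π _).trans ?_)
  rw [placeRank_rankEquiv_symm, Fin.val_rev, Nat.sub_sub, add_comm]

end Endpoints

lemma card_gadget_rankPos (hedges : ∀ e ∈ σ, (TheGraph s).Adj e.1 e.2) (i : Fin m) :
    (Finset.univ.filter fun z => (rankPos s σ τ z).gadget = some none ∨
      (rankPos s σ τ z).gadget = some (some i)).card =
      lenOrd m n +
        (Finset.univ.filter fun r => placeSlot s ((rankEquiv s).symm r) = i).card + 1 := by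
  rw [card_filter_comp_eq_of_range_eq (fun v => v.gadget = some none ∨ v.gadget = some (some i))
    (rankPos_injective s σ τ) (rankPos_injective s σ 0)
    ((range_rankPos hedges).trans (range_rankPos hedges).symm)]
  have hnone : rankPos s σ 0 (.inl none) = .root := rfl
  have hsome (i' : Fin m) : rankPos s σ 0 (.inl (some i')) = .nook i' := rfl
  rw [Finset.card_filter, Finset.card_filter, Fintype.sum_sum_type, Fintype.sum_option,
    Fintype.sum_prod_type, Fintype.sum_bool]
  simp only [hnone, hsome, rankPos_zero_ordering, rankPos_zero_slot, Vtx.gadget]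
  simp only [reduceCtorEq, Option.some.injEq, or_self, false_or, true_or, if_true, if_false,
    Finset.sum_ite_eq', Finset.mem_univ, Finset.sum_const, Finset.card_univ, Fintype.card_fin,
    ← Finset.card_filter, smul_eq_mul]
  ring

/-- The history of a swap sequence that solves the constructed instance. -/
noncomputable def history {π : Equiv.Perm (Option (Fin m))} (hk : 0 < kk m n)
    (hedges : ∀ e ∈ σ, (TheGraph s).Adj e.1 e.2) (hsol : applySwaps σ (initTok s) = tgtTok s π)
    (hmin : MinimalSeq σ (initTok s)) : SwapHistory m (lenOrd m n) where
  len := σ.length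
  k := kk m n
  k_pos := hk
  slot r := placeSlot s ((rankEquiv s).symm r)
  pos := rankPos s σ
  pos_injective τ _ := rankPos_injective s σ τ
  exists_swap _ hτ := exists_isSwap_rankPos hedges hτ
  swap_unique τ τ' p q hτ hτ' h h' := by
    have hτpair := swapsPairAt_of_isSwap hτ h
    have hτ'pair := swapsPairAt_of_isSwap hτ' h'
    rcases lt_trichotomy τ τ' with hlt | heq | hgt
    · exact absurd hτ'pair (hmin _ _ _ _ hlt hτpair)
    · exact heq
    · exact absurd hτpair (hmin _ _ _ _ hgt hτ'pair)
  card_le _ _ i := (card_gadget_rankPos hedges i).ge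
  item_init o := o.rec (.inl rfl) fun i => .inr ⟨i, rfl⟩
  item_final o := by
    rw [rankPos_length hsol]
    change tgtTok s π (.inl o) = _ ∨ ∃ i, tgtTok s π (.inl o) = _
    rcases h : π o with - | i <;> simp [tgtTok, h]
  slot_init r := ⟨_, rankPos_zero_slot σ r⟩
  slot_final r := rankPos_length_slot r hsol
  ord_init := rankPos_zero_ordering σ
  ord_final r := ⟨_, rankPos_length_ordering r hsol⟩

end History

/-! ### Distances in the constructed tree -/

section Distances

variable {m n : ℕ} {s : Fin n → Fin m} {σ : List (Vtx m × Vtx m)}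

lemma theGraph_adj_of_rel {u v : Vtx m} (h : rel (lenSlot s) (lenOrd m n) (kk m n) u v)
    (hne : u ≠ v) : (TheGraph s).Adj u v :=
  (SimpleGraph.fromRel_adj _ u v).2 ⟨hne, .inl h⟩

lemma exists_walk_length_eq {V : Type*} {G : SimpleGraph V} {u : V} {f : ℕ → V} {L d : ℕ}
    (hzero : 0 < L → G.Adj u (f 0)) (hsucc : ∀ d, d + 1 < L → G.Adj (f d) (f (d + 1)))
    (hd : d < L) : ∃ w : G.Walk u (f d), w.length = d + 1 := by
  induction d with
  | zero => exact ⟨(hzero hd).toWalk, rfl⟩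
  | succ d ih =>
    obtain ⟨w, hw⟩ := ih (by omega)
    exact ⟨w.concat (hsucc d hd), by rw [SimpleGraph.Walk.length_concat, hw]⟩

lemma dist_ord_slot_le {d d' : ℕ} {i : Fin m} (hd : d < lenOrd m n) (hd' : d' < lenSlot s i) :
    (TheGraph s).dist (.ord d) (.slot i d') ≤ d + d' + 2 := by
  obtain ⟨w, hw⟩ : ∃ w : (TheGraph s).Walk .root (.ord d), w.length = d + 1 :=
    exists_walk_length_eq (fun hL => theGraph_adj_of_rel ⟨rfl, hL⟩ (by simp))
      (fun _ h => theGraph_adj_of_rel ⟨rfl, h⟩ (by simp)) hd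
  obtain ⟨w', hw'⟩ : ∃ w : (TheGraph s).Walk .root (.slot i d'), w.length = d' + 1 :=
    exists_walk_length_eq (fun hL => theGraph_adj_of_rel ⟨rfl, hL⟩ (by simp))
      (fun _ h => theGraph_adj_of_rel ⟨rfl, rfl, h⟩ (by simp)) hd'
  have := SimpleGraph.dist_le (w.reverse.append w')
  rw [SimpleGraph.Walk.length_append, SimpleGraph.Walk.length_reverse] at this
  omega

variable {π : Equiv.Perm (Option (Fin m))} (hk : 0 < kk m n)
  (hedges : ∀ e ∈ σ, (TheGraph s).Adj e.1 e.2) (hsol : applySwaps σ (initTok s) = tgtTok s π)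
  (hmin : MinimalSeq σ (initTok s))

lemma dd_le_displacement (z : Bool × Fin (lenOrd m n)) :
    (dd s π (.inr (rankNonItemEquiv s z)) : ℤ) ≤
      (history hk hedges hsol hmin).displacement (.inr z) := by
  have hdd : dd s π (.inr (rankNonItemEquiv s z)) =
      (TheGraph s).dist (rankPos s σ 0 (.inr z)) (rankPos s σ σ.length (.inr z)) := by
    rw [rankPos_length hsol]
    rfl
  change _ ≤ |(rankPos s σ σ.length (.inr z)).height (kk m n) -
    (rankPos s σ 0 (.inr z)).height (kk m n)|
  rw [hdd]
  obtain ⟨- | -, r⟩ := z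
  · rw [rankPos_zero_ordering, rankPos_length_ordering r hsol]
    have := dist_ord_slot_le r.2 (finalDepth_lt s ((rankEquiv s).symm r))
    refine le_trans ?_ (le_abs_self _)
    simp only [Vtx.height]
    omega
  · rw [rankPos_zero_slot, rankPos_length_slot r hsol, SimpleGraph.dist_comm]
    have := dist_ord_slot_le r.rev.2 (initDepth_lt s ((rankEquiv s).symm r))
    refine le_trans ?_ (neg_le_abs _)
    simp only [Vtx.height]
    omega

lemma two_mul_len_history_le
    (hlen : 2 * σ.length ≤ (∑ t : NonItem m n, (dd s π (.inr t) + 1)) + 2 * n) :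
    (2 * (history hk hedges hsol hmin).len : ℤ) ≤
      ∑ z, (history hk hedges hsol hmin).displacement (.inr z) + 2 * lenOrd m n + 2 * n := by
  have hsum : ∑ t : NonItem m n, (dd s π (.inr t) + 1) =
      ∑ z, dd s π (.inr (rankNonItemEquiv s z)) + 2 * lenOrd m n := by
    rw [← Equiv.sum_comp (rankNonItemEquiv s), Finset.sum_add_distrib]
    simp
  have hle : ∑ z, (dd s π (.inr (rankNonItemEquiv s z)) : ℤ) ≤
      ∑ z, (history hk hedges hsol hmin).displacement (.inr z) :=
    Finset.sum_le_sum fun z _ => dd_le_displacement hk hedges hsol hmin z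
  rw [hsum] at hlen
  zify at hlen
  exact hlen.trans (by gcongr)

end Distances

/-! ### Assembling the block structure -/

section Sizes

variable {m n : ℕ}

lemma kk'_eq (hn : 0 < n) (m : ℕ) : kk' m n = m ^ 25 * n ^ 17 := by
  have : kk m n = m ^ 25 * n ^ 17 * n ^ 8 := by
    unfold kk
    ring
  rw [kk', this, Nat.mul_div_cancel _ (Nat.pow_pos hn)]

lemma kk_eq_kk'_mul (hn : 0 < n) (m : ℕ) : kk m n = kk' m n * n ^ 8 := by
  rw [kk'_eq hn, kk]
  ring

/-- A bound on the number of unclean tokens and on the number of uncredited moves. -/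
def errBound (m n : ℕ) : ℕ := 2 * (2 * (n * (m + 1) * (2 * m + 2))) + 4 * n

lemma two_mul_errBound_lt_kk' (hm : 1 < m) (hn : 0 < n) : 2 * errBound m n < kk' m n := by
  have hle : (m + 1) * (2 * m + 2) + 1 ≤ 9 * m ^ 2 := by nlinarith
  have hpow : 2 ^ 23 * 1 ≤ m ^ 23 * n ^ 16 :=
    Nat.mul_le_mul (Nat.pow_le_pow_left hm 23) (Nat.one_le_pow _ _ hn)
  calc 2 * errBound m n = 8 * n * ((m + 1) * (2 * m + 2) + 1) := by unfold errBound; ring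
    _ ≤ 8 * n * (9 * m ^ 2) := by gcongr
    _ = 72 * (n * m ^ 2) := by ring
    _ < m ^ 23 * n ^ 16 * (n * m ^ 2) := by gcongr; omega
    _ = kk' m n := by rw [kk'_eq hn]; ring

lemma slack_lt_kk (hm : 1 < m) (hmn : m ≤ n) :
    n * (m * kk' m n + (3 * errBound m n + n * kk' m n + n * (errBound m n + kk' m n))) +
      (3 * errBound m n + n * kk' m n + n * (errBound m n + kk' m n)) < kk m n + 1 := by
  have hn : 2 ≤ n := hm.trans_le hmn
  have herr := two_mul_errBound_lt_kk' hm (hn.trans_lt' two_pos)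
  rw [kk_eq_kk'_mul (hn.trans_lt' two_pos)]
  generalize kk' m n = K at *
  generalize errBound m n = E at *
  have hslack : 3 * E + n * K + n * (E + K) ≤ 4 * n * K := by
    have : n * (E + K) ≤ n * (2 * K) := Nat.mul_le_mul_left _ (by omega)
    have : 2 * K ≤ n * K := Nat.mul_le_mul_right _ hn
    linarith
  have hpow : 2 ^ 6 ≤ n ^ 6 := Nat.pow_le_pow_left hn 6
  refine Nat.lt_succ_of_le ?_
  calc n * (m * K + (3 * E + n * K + n * (E + K))) + (3 * E + n * K + n * (E + K))
      ≤ n * (n * K + 4 * n * K) + 4 * n * K := by gcongr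
    _ = (5 * n + 4) * n * K := by ring
    _ ≤ (9 * n) * n * K := by gcongr; omega
    _ = 9 * n ^ 2 * K := by ring
    _ ≤ n ^ 6 * n ^ 2 * K := by gcongr; omega
    _ = K * n ^ 8 := by ring

end Sizes

section Instance

variable {m n : ℕ} (s : Fin n → Fin m)

lemma card_padding_eq_kk' (i : Fin m) (j : Fin n) :
    (Finset.univ.filter fun y => placeBlock y = j ∧ kk m n ≤ placeOffset s y ∧
      placeSlot s y = i).card = kk' m n := by
  refine .trans ?_ ((Finset.card_univ (α := Fin (kk' m n))).trans (Fintype.card_fin _))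
  symm
  refine Finset.card_bij (fun a _ => .inr (i, j, a)) ?_ (by simp) ?_
  · exact fun a _ => Finset.mem_filter.2 ⟨Finset.mem_univ _, rfl, Nat.le_add_right _ _, rfl⟩
  · rintro (⟨j', a⟩ | ⟨i', j', a⟩) h
    · exact absurd (Finset.mem_filter.1 h).2.2.1 a.isLt.not_ge
    · obtain ⟨-, rfl, -, rfl⟩ := Finset.mem_filter.1 h
      exact ⟨a, Finset.mem_univ _, rfl⟩

lemma placeBlock_rankEquiv_symm (r : Fin (lenOrd m n)) :
    (placeBlock ((rankEquiv s).symm r)).val = r / blockSize m n := by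
  rw [← placeRank_div s, placeRank_rankEquiv_symm]

lemma placeOffset_rankEquiv_symm (r : Fin (lenOrd m n)) :
    placeOffset s ((rankEquiv s).symm r) = r % blockSize m n := by
  rw [← placeRank_mod s, placeRank_rankEquiv_symm]

lemma apply_placeBlock_eq_placeSlot {y : Place m n} (h : placeOffset s y < kk m n) :
    s (placeBlock y) = placeSlot s y := by
  rcases y with _ | ⟨i, j, a⟩
  · rfl
  · exact absurd h (Nat.le_add_right _ _).not_gt

variable {s} {σ : List (Vtx m × Vtx m)} {π : Equiv.Perm (Option (Fin m))} (hm : 1 < m)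
  (hmn : m ≤ n) (hk : 0 < kk m n) (hedges : ∀ e ∈ σ, (TheGraph s).Adj e.1 e.2)
  (hsol : applySwaps σ (initTok s) = tgtTok s π) (hmin : MinimalSeq σ (initTok s))

include hm hmn in
lemma exists_blockStructure_history
    (hlen : 2 * σ.length ≤ (∑ t : NonItem m n, (dd s π (.inr t) + 1)) + 2 * n) :
    ∃ B : BlockStructure (history hk hedges hsol hmin), B.seq = List.ofFn s := by
  let seg (r : Fin (lenOrd m n)) : ℕ := placeSegment s ((rankEquiv s).symm r)
  obtain ⟨C⟩ := Crediting.nonempty (history hk hedges hsol hmin)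
  have hdeficient := C.card_deficient_le (seg := seg)
    (fun r r' h => placeSegment_le_of_placeRank_le s (by simpa [placeRank_rankEquiv_symm] using h))
    (fun r r' h => placeSlot_eq_of_placeSegment_eq s h) fun r => placeSegment_lt s _
  have hlen := two_mul_len_history_le hk hedges hsol hmin hlen
  have hunclean := C.card_unclean_le hlen
  have huncredited := C.sum_card_uncreditedMoves_le hlen
  refine ⟨{ crediting := C, seq := List.ofFn s, pad := kk' m n, err := errBound m n,
            card_ranks := ?_, card_padding := ?_, seq_eq_slot := ?_,
            sum_card_uncreditedMoves_le := ?_, card_unclean_le := ?_,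
            two_mul_err_lt_pad := two_mul_errBound_lt_kk' hm (by omega), slack_lt := ?_ }, rfl⟩
  · rw [List.length_ofFn]
    exact lenOrd_eq m n
  · intro j hj i
    rw [List.length_ofFn] at hj
    refine (Finset.card_equiv (rankEquiv s).symm fun r => ?_).trans
      (card_padding_eq_kk' s i ⟨j, hj⟩)
    simp only [Finset.mem_filter, Finset.mem_univ, true_and, Fin.ext_iff,
      placeBlock_rankEquiv_symm, placeOffset_rankEquiv_symm]
    rfl
  · intro r hr
    have hslot := apply_placeBlock_eq_placeSlot s ((placeOffset_rankEquiv_symm s r).trans_lt hr)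
    change (List.ofFn s)[r.val / blockSize m n]? = some (placeSlot s _)
    rw [← placeBlock_rankEquiv_symm s, List.getElem?_ofFn, dif_pos (Fin.isLt _), ← hslot]
  · unfold errBound
    omega
  · unfold errBound
    omega
  · rw [List.length_ofFn]
    exact slack_lt_kk hm hmn

lemma gadgetOfV_of_gadget_eq {v : Vtx m} {i : Fin m} (h : v.gadget = some (some i)) :
    gadgetOfV v = some i := by
  cases v <;> simp_all [Vtx.gadget, gadgetOfV]

lemma memGadget_some_iff {v : Vtx m} {i : Fin m} :
    memGadget v (some i) ↔ v.gadget = some (some i) := by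
  cases v <;> simp [memGadget, Vtx.gadget]

/-- The free item token and the exchange sequence of a solving swap sequence. -/
noncomputable def freeItemTrace : FreeItemTrace (history hk hedges hsol hmin) where
  free := freeAt σ (initTok s)
  exchanges := chiList σ (initTok s)
  pos_zero _ := rfl
  free_zero := rfl
  free_succ_of_pos_eq_root τ _ o ho := by
    have hex : ∃ o, placeAt σ (initTok s) (τ + 1) (.inl o) = .root := ⟨o, ho⟩
    rw [freeAt, dif_pos hex]
    exact Sum.inl_injective (rankPos_injective s σ (τ + 1) (hex.choose_spec.trans ho.symm))
  free_succ_eq_self τ _ ho := by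
    exact dif_neg (not_exists.2 ho)
  exchanges_zero := rfl
  exchanges_succ_eq_self τ _ h := by
    rw [chiList, if_neg (not_not.2 h), List.append_nil]
  exchanges_succ τ _ i hne h := by
    have : gadgetOfV (placeAt σ (initTok s) τ (.inl (freeAt σ (initTok s) (τ + 1)))) = some i :=
      gadgetOfV_of_gadget_eq h
    rw [chiList, if_pos hne, this]

end Instance

theorem free_item_token_lemma_general {m n : ℕ} (hm : 1 < m) (hmn : m ≤ n) (s : Fin n → Fin m)
    (π : Equiv.Perm (Option (Fin m))) (σ : List (Vtx m × Vtx m))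
    (hedges : ∀ e ∈ σ, (TheGraph s).Adj e.1 e.2) (hsol : applySwaps σ (initTok s) = tgtTok s π)
    (hlen : 2 * σ.length ≤ (∑ t : NonItem m n, (dd s π (.inr t) + 1)) + 2 * n)
    (hmin : MinimalSeq σ (initTok s)) :
    (∀ τ ≤ σ.length, ∀ i : Fin m, ∃! o : Option (Fin m), o ≠ freeAt σ (initTok s) τ ∧
      memGadget (placeAt σ (initTok s) τ (.inl o)) (some i)) ∧
    (chiList σ (initTok s) σ.length).Sublist (List.ofFn s) := by
  have hk : 0 < kk m n := Nat.pow_pos (Nat.mul_pos (by omega) (by omega))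
  obtain ⟨B, hseq⟩ := exists_blockStructure_history hm hmn hk hedges hsol hmin hlen
  let F := freeItemTrace hk hedges hsol hmin
  refine ⟨fun τ hτ i => ?_, hseq ▸ F.exchanges_sublist B le_rfl⟩
  simp only [memGadget_some_iff]
  exact (F.settled B hτ).existsUnique i

end UnweightedTS

namespace UnweightedTS

/-!
STATEMENT 5: Suppose `m, n > 5` and the constructed token swapping instance admits a
swap sequence of length at most `K` realizing the target placement, in which no pair
of tokens swaps with each other more than once.  Then (1) at every point in time,
apart from the free item token, each slot gadget contains exactly one item token, and
(2) the exchange sequence `χ` is a subsequence of the input swap sequence of the Star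
STS instance.  (The length bound `σ.length ≤ K = H + n` is stated in the equivalent
doubled form `2·σ.length ≤ Σ_{t∈A}(d_t+1) + 2n`.)
-/
theorem free_item_token_lemma {m n : ℕ} (hm : 5 < m) (hn : 5 < n)
    (s : Fin n → Fin m) (π : Equiv.Perm (Option (Fin m)))
    (hπ0 : π none = none)
    (hocc : ∀ i : Fin m, ∃ j, s j = i)
    (hcons : ∀ (j : Fin n) (h : j.val + 1 < n), s j ≠ s ⟨j.val + 1, h⟩)
    (σ : List (Vtx m × Vtx m))
    (hedges : ∀ e ∈ σ, (TheGraph s).Adj e.1 e.2)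
    (hsol : applySwaps σ (initTok s) = tgtTok s π)
    (hlen : 2 * σ.length ≤ (∑ t : NonItem m n, (dd s π (Sum.inr t) + 1)) + 2 * n)
    (hmin : MinimalSeq σ (initTok s)) :
    (∀ τ ≤ σ.length, ∀ i : Fin m,
        ∃! o : Option (Fin m), o ≠ freeAt σ (initTok s) τ ∧
          memGadget (placeAt σ (initTok s) τ (Sum.inl o)) (some i)) ∧
    (chiList σ (initTok s) σ.length).Sublist (List.ofFn s) := by
  have hmn : m ≤ n := by simpa using Fintype.card_le_of_surjective s hocc
  exact free_item_token_lemma_general (by omega) hmn s π σ hedges hsol hlen hmin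

end UnweightedTS
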